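/- Let k ≥ 3 be a natural number, let r be a natural number with 1 ≤ r ≤ k−1, and let s be a natural number with s > r(r−1)/2. Then for each ε > 0 there is a constant C = C(s,k,r,ε) such that for all sufficiently large X one has I_s(X) ≤ C·X^{2s−k+ε}·(X^{η*_r(s,k)−1/r} + X^{η*_r(s,k−1)}), where η*_r(s,w) = r^{−1}·η(s − r(r−1)/2, w). -/

import Mathlib

/-- Number of integral solutions of the Vinogradov system of degree k
in 2s variables from [1,X]. -/
noncomputable def Jcount (s k : ℕ) (X : ℝ) : ℕ :=
  Set.ncard {xy : (Fin s → ℤ) × (Fin s → ℤ) |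
    (∀ i, 1 ≤ xy.1 i ∧ (xy.1 i : ℝ) ≤ X) ∧
    (∀ i, 1 ≤ xy.2 i ∧ (xy.2 i : ℝ) ≤ X) ∧
    ∀ j ∈ Finset.Icc 1 k, ∑ i, ((xy.1 i) ^ j - (xy.2 i) ^ j) = 0}

/-- η(s,k): the least positive η such that, for each ε > 0,
J_{s,k}(X) ≤ C X^{2s - k(k+1)/2 + η + ε} for all sufficiently large X. -/
noncomputable def etaExp (s k : ℕ) : ℝ :=
  sInf {η : ℝ | 0 < η ∧ ∀ ε : ℝ, 0 < ε → ∃ C X₀ : ℝ, 0 < C ∧ ∀ X : ℝ, X₀ ≤ X →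
    (Jcount s k X : ℝ) ≤ C * X ^ (2*(s:ℝ) - (k:ℝ)*((k:ℝ)+1)/2 + η + ε)}

/-- e(z) = exp(2πiz). -/
noncomputable def ec (z : ℝ) : ℂ := Complex.exp (2 * Real.pi * Complex.I * z)

/-- The Weyl sum g_k(α;X) = ∑_{1 ≤ x ≤ X} e(α x^k). -/
noncomputable def gk (k : ℕ) (X : ℝ) (α : ℝ) : ℂ :=
  ∑ x ∈ Finset.Icc 1 ⌊X⌋₊, ec (α * (x:ℝ)^k)

/-- I_s(X) = ∫_0^1 |g_k(α;X)|^{2s} dα. -/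
noncomputable def Iint (s k : ℕ) (X : ℝ) : ℝ := ∫ α in (0:ℝ)..1, ‖gk k X α‖^(2*s)

/-- η*_r(s,w) = η(s - r(r-1)/2, w)/r. -/
noncomputable def etastar (r s w : ℕ) : ℝ := etaExp (s - r*(r-1)/2) w / r

/-!
By orthogonality `I_s(X)` counts the solutions of a single equation of degree `k`. Sorting the
variables by residue classes modulo powers of a large fixed prime `p` and singling out `j` pairs of
them in distinct classes forces congruences whose solutions are well spaced; iterating this `p`-adic
differencing for `j = 1, …, r - 1` adds the equations of degrees `1, …, r - 1` at the price of
confining the remaining `s - r (r - 1) / 2` pairs of variables to one class modulo `p ^ q`, where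
`q = (r - 1) h` and `X = p ^ (r h)`. This modulus is so large that the class alone forces the
power sums of degrees `r, …, k - 2` to differ by few values only. Within the class
`x = c + p ^ q u` with `u ≤ p ^ h`, and averaging over the translates of `c` places the differences
of the power sum vectors of the `u` on lines whose directions vary affinely with `c`. A large sieve
for these lines, together with the divisor bound, leaves the solutions of the complete systems of
degrees `k` and `k - 1`, which give the two terms.
-/

namespace WeylMoment

open Finset Filter
open scoped BigOperators

/-! ### Difference counts and character moments -/

section DiffCount

variable {α G : Type*} [AddCommGroup G] [DecidableEq G]

/-- The number of representations of `v` as a difference `f a - f b` with `a, b ∈ S`. For `v = 0`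
this is the additive energy of the family `f`, that is, a mean value of exponential sums. -/
def diffCount (S : Finset α) (f : α → G) (v : G) : ℕ :=
  #{z ∈ S ×ˢ S | f z.1 - f z.2 = v}

lemma diffCount_zero (S : Finset α) (f : α → G) :
    diffCount S f 0 = #{z ∈ S ×ˢ S | f z.1 = f z.2} := by
  simp only [diffCount, sub_eq_zero]

lemma diffCount_mono {S T : Finset α} (h : S ⊆ T) (f : α → G) (v : G) :
    diffCount S f v ≤ diffCount T f v :=
  card_le_card (filter_subset_filter _ (product_subset_product h h))

lemma diffCount_eq_sum_card_fiber (S : Finset α) (f : α → G) (v : G) :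
    diffCount S f v =
      ∑ g ∈ S.image f, #{a ∈ S | f a = g} * #{a ∈ S | f a = g + v} := by
  have h : diffCount S f v = ∑ b ∈ S, #{a ∈ S | f a = f b + v} := by
    rw [diffCount, card_filter, sum_product_right]
    simp only [card_filter, sub_eq_iff_eq_add']
  simpa only [smul_eq_mul] using h.trans (sum_comp (fun g => #{a ∈ S | f a = g + v}) f)

lemma sum_card_fiber_add_sq_le (S : Finset α) (f : α → G) (v : G) :
    ∑ g ∈ S.image f, #{a ∈ S | f a = g + v} ^ 2 ≤ ∑ g ∈ S.image f, #{a ∈ S | f a = g} ^ 2 := by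
  refine (sum_map (S.image f) (addRightEmbedding v)
    fun g => #{a ∈ S | f a = g} ^ 2).symm.trans_le ?_
  refine sum_le_sum_of_ne_zero fun g _ hg => ?_
  obtain ⟨a, ha⟩ := card_pos.1 (Nat.pos_of_ne_zero (ne_zero_pow two_ne_zero hg))
  rw [mem_filter] at ha
  exact mem_image.2 ⟨a, ha⟩

lemma diffCount_le_diffCount_zero (S : Finset α) (f : α → G) (v : G) :
    diffCount S f v ≤ diffCount S f 0 := by
  have amgm : ∀ g, 2 * (#{a ∈ S | f a = g} * #{a ∈ S | f a = g + v}) ≤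
      #{a ∈ S | f a = g} ^ 2 + #{a ∈ S | f a = g + v} ^ 2 := fun g => by
    simpa only [mul_assoc] using two_mul_le_add_sq _ _
  have h := (sum_le_sum fun g (_ : g ∈ S.image f) => amgm g).trans
    (sum_add_distrib.trans_le (Nat.add_le_add_left (sum_card_fiber_add_sq_le S f v) _))
  rw [← mul_sum, ← diffCount_eq_sum_card_fiber, ← two_mul] at h
  simpa only [diffCount_eq_sum_card_fiber S f 0, add_zero, ← pow_two] using
    Nat.le_of_mul_le_mul_left h two_pos

lemma diffCount_zero_eq_expect [Finite G] (S : Finset α) (f : α → G) :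
    (diffCount S f 0 : ℝ) = 𝔼 ψ : AddChar G ℂ, ‖∑ a ∈ S, ψ (f a)‖ ^ 2 := by
  have := Fintype.ofFinite G
  rw [← Complex.ofReal_inj, Fintype.expect_eq_sum_div_card, AddChar.card_eq]
  push_cast
  have expand : ∀ ψ : AddChar G ℂ, (‖∑ a ∈ S, ψ (f a)‖ : ℂ) ^ 2 =
      ∑ z ∈ S ×ˢ S, ψ (f z.1 - f z.2) := fun ψ => by
    simp only [← Complex.mul_conj', map_sum, sum_mul_sum, ← sum_product', sub_eq_add_neg,
      AddChar.map_add_eq_mul, AddChar.map_neg_eq_conj]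
  simp only [expand]
  rw [sum_comm]
  simp only [AddChar.sum_apply_eq_ite, sub_eq_zero]
  rw [← sum_filter, sum_const, nsmul_eq_mul, ← diffCount_zero, mul_div_assoc, div_self
    (Nat.cast_ne_zero.2 Fintype.card_ne_zero), mul_one]

end DiffCount

lemma addChar_sum_eq_prod {ι A M : Type*} [AddCommMonoid A] [CommMonoid M] (ψ : AddChar A M)
    (s : Finset ι) (f : ι → A) : ψ (∑ i ∈ s, f i) = ∏ i ∈ s, ψ (f i) :=
  (congrArg ψ.toMonoidHom (ofAdd_sum s f)).trans (map_prod ψ.toMonoidHom _ s)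

/-- The character of `ℤ ^ ι` obtained from a character `ψ` of `(ℤ / (N + 1)) ^ ι`. As finitely many
integer vectors are distinct modulo all large moduli, averaging over `ψ` detects equality. -/
def reducedChar {ι : Type*} (N : ℕ) (ψ : AddChar (ι → ZMod (N + 1)) ℂ) : AddChar (ι → ℤ) ℂ :=
  ψ.compAddMonoidHom ((Int.castAddHom (ZMod (N + 1))).compLeft ι)

lemma eventually_intCast_zmod_inj (a b : ℤ) :
    ∀ᶠ N : ℕ in atTop, (a : ZMod (N + 1)) = b → a = b := by
  filter_upwards [eventually_ge_atTop (b - a).natAbs] with N hN h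
  have hdvd := (ZMod.intCast_eq_intCast_iff_dvd_sub a b (N + 1)).1 (by exact_mod_cast h)
  have hlt : |b - a| < ((N + 1 : ℕ) : ℤ) := by rw [Int.abs_eq_natAbs]; omega
  exact (sub_eq_zero.1 (Int.eq_zero_of_abs_lt_dvd hdvd hlt)).symm

section Reduction

variable {ι : Type*} [Fintype ι]

lemma eventually_diffCount_zero_eq_expect {α : Type*} (S : Finset α) (f : α → ι → ℤ) :
    ∀ᶠ N : ℕ in atTop, (diffCount S f 0 : ℝ) =
      𝔼 ψ : AddChar (ι → ZMod (N + 1)) ℂ, ‖∑ a ∈ S, reducedChar N ψ (f a)‖ ^ 2 := by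
  have hinj : ∀ᶠ N : ℕ in atTop, ∀ z ∈ S ×ˢ S, ∀ i,
      (f z.1 i : ZMod (N + 1)) = f z.2 i → f z.1 i = f z.2 i :=
    (eventually_all_finset _).2 fun z _ => eventually_all.2 fun i =>
      eventually_intCast_zmod_inj _ _
  filter_upwards [hinj] with N hN
  refine Eq.trans ?_ (diffCount_zero_eq_expect S fun a i => (f a i : ZMod (N + 1)))
  rw [diffCount_zero, diffCount_zero]
  refine congrArg (fun T => (#T : ℝ)) (filter_congr fun z hz => ?_)
  exact ⟨fun h => funext fun i => congrArg _ (congrFun h i),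
    fun h => funext fun i => hN z hz i (congrFun h i)⟩

end Reduction

/-! ### Energies of systems in many variables -/

section TupleEnergy

variable {β G κ κ' : Type*} [AddCommGroup G] [DecidableEq G] [Fintype κ] [DecidableEq κ]
  [Fintype κ'] [DecidableEq κ']

/-- The number of solutions of `∑ l, γ (x l) = ∑ l, γ (y l)` with `x l, y l ∈ A l`. -/
def tupleEnergy (γ : β → G) (A : κ → Finset β) : ℕ :=
  diffCount (Fintype.piFinset A) (fun x => ∑ l, γ (x l)) 0

lemma tupleEnergy_mono (γ : β → G) {A B : κ → Finset β} (h : ∀ l, A l ⊆ B l) :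
    tupleEnergy γ A ≤ tupleEnergy γ B :=
  diffCount_mono (Fintype.piFinset_subset _ _ h) _ _

lemma tupleEnergy_equiv (γ : β → G) (e : κ ≃ κ') (A : κ' → Finset β) :
    tupleEnergy γ (A ∘ e) = tupleEnergy γ A := by
  have hmem : ∀ x, x ∈ Fintype.piFinset (A ∘ e) ↔ x ∘ e.symm ∈ Fintype.piFinset A := fun x => by
    simp [Fintype.mem_piFinset, e.forall_congr_left]
  have hsum : ∀ x : κ → β, ∑ l, γ ((x ∘ e.symm) l) = ∑ l, γ (x l) := fun x =>
    e.symm.sum_comp fun l => γ (x l)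
  let E : (κ → β) ≃ (κ' → β) := e.arrowCongr (Equiv.refl β)
  refine card_equiv (E.prodCongr E) fun z => ?_
  have hE : ∀ x, E x = x ∘ e.symm := fun x => rfl
  simp only [mem_filter, mem_product, Equiv.prodCongr_apply, Prod.map, hE, hmem, hsum]

lemma eventually_tupleEnergy_eq_expect {ι : Type*} [Fintype ι] (γ : β → ι → ℤ)
    (A : κ → Finset β) :
    ∀ᶠ N : ℕ in atTop, (tupleEnergy γ A : ℝ) =
      𝔼 ψ : AddChar (ι → ZMod (N + 1)) ℂ, ∏ l, ‖∑ x ∈ A l, reducedChar N ψ (γ x)‖ ^ 2 := by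
  filter_upwards [eventually_diffCount_zero_eq_expect (Fintype.piFinset A) fun x => ∑ l, γ (x l)]
    with N hN
  rw [tupleEnergy, hN]
  simp only [prod_pow, ← norm_prod, prod_univ_sum, addChar_sum_eq_prod]

end TupleEnergy

/-! ### Splitting into classes -/

section Splitting

variable {ρ : Type*}

lemma pow_sum_le_card_mul_sum_pow (R : Finset ρ) {a : ρ → ℝ} (ha : ∀ b ∈ R, 0 ≤ a b) (n : ℕ) :
    (∑ b ∈ R, a b) ^ (n + 1) ≤ (#R : ℝ) ^ n * ∑ b ∈ R, a b ^ (n + 1) := by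
  rcases R.eq_empty_or_nonempty with rfl | hR
  · simp
  · have hcard : (0 : ℝ) < (#R : ℝ) ^ n := pow_pos (mod_cast hR.card_pos) n
    exact (div_le_iff₀' hcard).1 (pow_sum_div_card_le_sum_pow ha n)

lemma sum_le_two_mul_sum_heavy (R : Finset ρ) {a : ρ → ℝ} (ha : ∀ b ∈ R, 0 ≤ a b) :
    ∑ b ∈ R, a b ≤ 2 * ∑ b ∈ R with ∑ b ∈ R, a b ≤ 2 * #R * a b, a b := by
  set T := ∑ b ∈ R, a b
  rcases R.eq_empty_or_nonempty with rfl | hR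
  · simp [T]
  have hR' : (0 : ℝ) < #R := mod_cast hR.card_pos
  have light : 2 * ∑ b ∈ R with ¬ T ≤ 2 * #R * a b, a b ≤ T := by
    have each : ∀ b ∈ {b ∈ R | ¬ T ≤ 2 * #R * a b}, 2 * a b ≤ T / #R := fun b hb => by
      rw [le_div_iff₀ hR']
      linarith [(mem_filter.1 hb).2]
    calc 2 * ∑ b ∈ R with ¬ T ≤ 2 * #R * a b, a b
        ≤ ∑ b ∈ R with ¬ T ≤ 2 * #R * a b, T / #R := by rw [mul_sum]; exact sum_le_sum each
      _ ≤ ∑ _b ∈ R, T / #R :=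
        sum_le_sum_of_subset_of_nonneg (filter_subset _ _) fun _ _ _ =>
          div_nonneg (sum_nonneg ha) hR'.le
      _ = T := by rw [sum_const, nsmul_eq_mul, mul_div_cancel₀ _ hR'.ne']
  linarith [sum_filter_add_sum_filter_not R (fun b => T ≤ 2 * #R * a b) a]

lemma pow_sum_le_card_pow_mul_sum_pow (R : Finset ρ) {a : ρ → ℝ} (ha : ∀ b ∈ R, 0 ≤ a b) {n : ℕ}
    (hn : n ≠ 0) : (∑ b ∈ R, a b) ^ n ≤ (#R : ℝ) ^ n * ∑ b ∈ R, a b ^ n := by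
  obtain ⟨m, rfl⟩ := Nat.exists_eq_succ_of_ne_zero hn
  rcases R.eq_empty_or_nonempty with rfl | hR
  · simp
  · refine (pow_sum_le_card_mul_sum_pow R ha m).trans (mul_le_mul_of_nonneg_right ?_
      (sum_nonneg fun b hb => pow_nonneg (ha b hb) _))
    exact pow_le_pow_right₀ (mod_cast hR.card_pos) m.le_succ

lemma pow_le_of_le_mul {j : ℕ} {F c : ℝ} (hF0 : 0 ≤ F) {a : Fin j → ℝ} (h : ∀ l, F ≤ c * a l)
    (τ : ℕ) : F ^ (2 * (j + τ)) ≤ c ^ (2 * j) * ((∏ l, a l ^ 2) * F ^ (2 * τ)) := by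
  calc F ^ (2 * (j + τ)) = (∏ _l : Fin j, F ^ 2) * F ^ (2 * τ) := by
        simp only [prod_const, card_univ, Fintype.card_fin, ← pow_mul, ← pow_add, mul_add]
    _ ≤ (∏ l, (c * a l) ^ 2) * F ^ (2 * τ) := by
        gcongr with l _
        exact h l
    _ = c ^ (2 * j) * ((∏ l, a l ^ 2) * F ^ (2 * τ)) := by
        simp only [mul_pow, prod_mul_distrib, prod_const, card_univ, Fintype.card_fin, ← pow_mul,
          mul_assoc]

/-- The broad-narrow dichotomy: either fewer than `j` classes are heavy and they dominate, or `j`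
distinct classes are each comparable to the average. -/
lemma pow_le_narrow_add_broad [DecidableEq ρ] (R : Finset ρ) {a : ρ → ℝ}
    (ha : ∀ b ∈ R, 0 ≤ a b) {F : ℝ} (hF0 : 0 ≤ F) (hF : F ≤ ∑ b ∈ R, a b) {j : ℕ} (hj : j ≠ 0)
    (τ : ℕ) :
    F ^ (2 * (j + τ)) ≤ (2 * j : ℝ) ^ (2 * (j + τ)) * ∑ b ∈ R, a b ^ (2 * (j + τ)) +
      (2 * #R : ℝ) ^ (2 * j) *
        ∑ b ∈ Fintype.piFinset (fun _ : Fin j => R) with Function.Injective b,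
          (∏ l, a (b l) ^ 2) * F ^ (2 * τ) := by
  set n := 2 * (j + τ) with hn
  set H := {b ∈ R | ∑ b ∈ R, a b ≤ 2 * #R * a b}
  have hHR : H ⊆ R := filter_subset _ _
  have broad_nonneg : ∀ b ∈ {b ∈ Fintype.piFinset (fun _ : Fin j => R) | Function.Injective b},
      0 ≤ (∏ l, a (b l) ^ 2) * F ^ (2 * τ) := fun b _ => by positivity
  rcases lt_or_ge #H j with few | many
  · refine le_trans ?_ (le_add_of_nonneg_right
      (mul_nonneg (by positivity) (sum_nonneg broad_nonneg)))
    have hH0 : ∀ b ∈ H, 0 ≤ a b := fun b hb => ha b (hHR hb)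
    calc F ^ n ≤ (2 * ∑ b ∈ H, a b) ^ n := by
          gcongr
          exact hF.trans (sum_le_two_mul_sum_heavy R ha)
      _ ≤ 2 ^ n * ((#H : ℝ) ^ n * ∑ b ∈ H, a b ^ n) := by
          rw [mul_pow]
          gcongr
          exact pow_sum_le_card_pow_mul_sum_pow H hH0 (by omega)
      _ ≤ 2 ^ n * ((j : ℝ) ^ n * ∑ b ∈ R, a b ^ n) := by
          have hsum := sum_le_sum_of_subset_of_nonneg hHR fun b hb _ => pow_nonneg (ha b hb) n
          have hpos := sum_nonneg fun b hb => pow_nonneg (hH0 b hb) n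
          gcongr
      _ = (2 * j : ℝ) ^ n * ∑ b ∈ R, a b ^ n := by rw [mul_pow, mul_assoc]
  · refine le_trans ?_ (le_add_of_nonneg_left
      (mul_nonneg (by positivity) (sum_nonneg fun b hb => pow_nonneg (ha b hb) _)))
    obtain ⟨H', hH', hcard⟩ := exists_subset_card_eq many
    let e := (H'.equivFinOfCardEq hcard).symm
    have heavy : ∀ l, F ≤ 2 * #R * a (e l) := fun l =>
      hF.trans (mem_filter.1 (hH' (e l).2)).2
    refine (pow_le_of_le_mul hF0 heavy τ).trans (mul_le_mul_of_nonneg_left ?_ (by positivity))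
    refine single_le_sum (f := fun b => (∏ l, a (b l) ^ 2) * F ^ (2 * τ)) broad_nonneg
      (mem_filter.2 ⟨Fintype.mem_piFinset.2 fun l => hHR (hH' (e l).2), ?_⟩)
    exact Subtype.val_injective.comp e.injective

lemma norm_sum_le_sum_norm_fiber {β : Type*} [DecidableEq ρ] {A : Finset β} {cls : β → ρ}
    {R : Finset ρ} (hR : ∀ x ∈ A, cls x ∈ R) (e : β → ℂ) :
    ‖∑ x ∈ A, e x‖ ≤ ∑ b ∈ R, ‖∑ x ∈ A with cls x = b, e x‖ := by
  rw [← sum_fiberwise_of_maps_to hR]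
  exact norm_sum_le _ _

variable [DecidableEq ρ] {β ι κ : Type*} [Fintype ι] [Fintype κ] [DecidableEq κ] (γ : β → ι → ℤ)
  (A : Finset β) {cls : β → ρ} {R : Finset ρ} (hR : ∀ x ∈ A, cls x ∈ R)

include hR

lemma tupleEnergy_elim_le_sum_fiber (B : κ → Finset β) {τ : ℕ} (hτ : τ ≠ 0) :
    tupleEnergy γ (Sum.elim B fun _ : Fin τ => A) ≤ #R ^ (2 * τ - 1) *
      ∑ b ∈ R, tupleEnergy γ (Sum.elim B fun _ : Fin τ => {x ∈ A | cls x = b}) := by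
  obtain ⟨N, hwhole, hclass⟩ := ((eventually_tupleEnergy_eq_expect γ
    (Sum.elim B fun _ : Fin τ => A)).and
    ((eventually_all_finset R).2 fun (b : ρ) _ => eventually_tupleEnergy_eq_expect γ
      (Sum.elim B fun _ : Fin τ => {x ∈ A | cls x = b}))).exists
  rw [← Nat.cast_le (α := ℝ), hwhole, Nat.cast_mul, Nat.cast_sum, sum_congr rfl hclass,
    ← expect_sum_comm, mul_expect]
  refine expect_le_expect fun ψ _ => ?_
  obtain ⟨m, hm⟩ : ∃ m, 2 * τ = m + 1 := ⟨2 * τ - 1, by omega⟩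
  simp only [Fintype.prod_sum_type, Sum.elim_inl, Sum.elim_inr, prod_const, card_univ,
    Fintype.card_fin, ← mul_sum, ← pow_mul, hm, Nat.add_sub_cancel, Nat.cast_pow]
  rw [mul_left_comm]
  gcongr
  refine le_trans ?_ (pow_sum_le_card_mul_sum_pow R (fun b _ => norm_nonneg _) m)
  gcongr
  exact norm_sum_le_sum_norm_fiber hR _

lemma tupleEnergy_const_le_sum_fiber {τ : ℕ} (hτ : τ ≠ 0) :
    tupleEnergy γ (fun _ : Fin τ => A) ≤ #R ^ (2 * τ - 1) *
      ∑ b ∈ R, tupleEnergy γ (fun _ : Fin τ => {x ∈ A | cls x = b}) := by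
  have elim_empty : ∀ A' : Finset β, tupleEnergy γ (Sum.elim Empty.elim fun _ : Fin τ => A') =
      tupleEnergy γ (fun _ : Fin τ => A') := fun A' => by
    rw [← tupleEnergy_equiv γ (Equiv.emptySum Empty (Fin τ)) (fun _ => A')]
    exact congrArg _ (funext (Sum.rec (fun l => l.elim) fun _ => rfl))
  simpa only [elim_empty] using tupleEnergy_elim_le_sum_fiber γ A hR Empty.elim hτ

lemma tupleEnergy_le_narrow_add_broad {j : ℕ} (hj : j ≠ 0) (τ : ℕ) :
    tupleEnergy γ (fun _ : Fin (j + τ) => A) ≤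
      (2 * j) ^ (2 * (j + τ)) *
        ∑ b ∈ R, tupleEnergy γ (fun _ : Fin (j + τ) => {x ∈ A | cls x = b}) +
      (2 * #R) ^ (2 * j) *
        ∑ b ∈ Fintype.piFinset (fun _ : Fin j => R) with Function.Injective b,
          tupleEnergy γ (Sum.elim (fun l => {x ∈ A | cls x = b l}) fun _ : Fin τ => A) := by
  set broad := {b ∈ Fintype.piFinset (fun _ : Fin j => R) | Function.Injective b}
  obtain ⟨N, hwhole, hnarrow, hbroad⟩ := ((eventually_tupleEnergy_eq_expect γ
    (fun _ : Fin (j + τ) => A)).and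
    (((eventually_all_finset R).2 fun b _ => eventually_tupleEnergy_eq_expect γ
      (fun _ : Fin (j + τ) => {x ∈ A | cls x = b})).and
    ((eventually_all_finset broad).2 fun b _ => eventually_tupleEnergy_eq_expect γ
      (Sum.elim (fun l : Fin j => {x ∈ A | cls x = b l}) fun _ : Fin τ => A)))).exists
  rw [← Nat.cast_le (α := ℝ), hwhole]
  push_cast
  rw [sum_congr rfl hnarrow, sum_congr rfl hbroad, ← expect_sum_comm, ← expect_sum_comm,
    mul_expect, mul_expect, ← expect_add_distrib]
  refine expect_le_expect fun ψ _ => ?_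
  simp only [Fintype.prod_sum_type, Sum.elim_inl, Sum.elim_inr, prod_const, card_univ,
    Fintype.card_fin, ← pow_mul]
  exact pow_le_narrow_add_broad R (fun b _ => norm_nonneg _) (norm_nonneg _)
    (norm_sum_le_sum_norm_fiber hR _) hj τ

end Splitting

section Restriction

variable {β G κ κ' : Type*} [AddCommGroup G] [DecidableEq G] [Fintype κ] [DecidableEq κ]
  [Fintype κ'] [DecidableEq κ']

/-- The pairs `(u, v)` of points of `∏ l, B l` which extend to a solution counted by
`tupleEnergy γ (Sum.elim B A)`. -/
def extendablePairs (γ : β → G) (B : κ → Finset β) (A : κ' → Finset β) :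
    Finset ((κ → β) × (κ → β)) :=
  {g ∈ Fintype.piFinset B ×ˢ Fintype.piFinset B |
    ∃ x ∈ Fintype.piFinset A, ∃ y ∈ Fintype.piFinset A,
      ∑ l, γ (g.1 l) + ∑ l, γ (x l) = ∑ l, γ (g.2 l) + ∑ l, γ (y l)}

lemma tupleEnergy_elim_le_mul_card_extendablePairs (γ : β → G)
    (B : κ → Finset β) (A : κ' → Finset β) :
    tupleEnergy γ (Sum.elim B A) ≤ tupleEnergy γ A * #(extendablePairs γ B A) := by
  classical
  rw [tupleEnergy, diffCount_zero]
  let left : (κ ⊕ κ' → β) × (κ ⊕ κ' → β) → (κ → β) × (κ → β) :=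
    fun z => (z.1 ∘ Sum.inl, z.2 ∘ Sum.inl)
  refine card_le_mul_card_image_of_maps_to (f := left) (fun z hz => ?_) _ fun g _ => ?_
  · simp only [mem_filter, mem_product, Fintype.mem_piFinset, Sum.forall, Sum.elim_inl,
      Sum.elim_inr, Fintype.sum_sum_type] at hz
    simp only [extendablePairs, mem_filter, mem_product, Fintype.mem_piFinset]
    exact ⟨⟨hz.1.1.1, hz.1.2.1⟩, z.1 ∘ Sum.inr, hz.1.1.2, z.2 ∘ Sum.inr, hz.1.2.2, hz.2⟩
  · refine le_trans ?_ (diffCount_le_diffCount_zero (Fintype.piFinset A)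
      (fun x => ∑ l, γ (x l)) (∑ l, γ (g.2 l) - ∑ l, γ (g.1 l)))
    refine card_le_card_of_injOn (fun z => (z.1 ∘ Sum.inr, z.2 ∘ Sum.inr)) (fun z hz => ?_)
      fun z hz z' hz' h => ?_
    · simp only [coe_filter, mem_filter, mem_product, Fintype.mem_piFinset, Sum.forall,
        Sum.elim_inl, Sum.elim_inr, Fintype.sum_sum_type, Set.mem_ofPred_eq] at hz ⊢
      obtain ⟨hz, rfl⟩ := hz
      refine ⟨⟨hz.1.1.2, hz.1.2.2⟩, ?_⟩
      refine sub_eq_sub_iff_add_eq_add.2 ?_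
      simpa only [left, Function.comp_apply, add_comm] using hz.2
    · have hleft : left z = left z' := (mem_filter.1 hz).2.trans (mem_filter.1 hz').2.symm
      have glue : ∀ {f f' : κ ⊕ κ' → β}, f ∘ Sum.inl = f' ∘ Sum.inl → f ∘ Sum.inr = f' ∘ Sum.inr →
          f = f' := fun h₁ h₂ => funext (Sum.rec (congrFun h₁) (congrFun h₂))
      simp only [left, Prod.mk.injEq] at hleft h
      exact Prod.ext (glue hleft.1 h.1) (glue hleft.2 h.2)

end Restriction

/-! ### Energies of power sums -/

section PowEnergy

variable {κ : Type*} [Fintype κ] [DecidableEq κ]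

/-- The curve `x ↦ (x ^ d)` with `d` ranging over a finite set of degrees. -/
def momentCurve (D : Finset ℕ) (x : ℤ) : D → ℤ := fun d => x ^ (d : ℕ)

/-- The number of pairs of points of `∏ l, A l` with equal power sums in all degrees of `D`. -/
def powEnergy (D : Finset ℕ) (A : κ → Finset ℤ) : ℕ := tupleEnergy (momentCurve D) A

omit [DecidableEq κ] in
lemma sum_momentCurve_eq_iff {κ' : Type*} [Fintype κ'] {D : Finset ℕ} {x : κ → ℤ} {y : κ' → ℤ} :
    ∑ l, momentCurve D (x l) = ∑ l, momentCurve D (y l) ↔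
      ∀ d ∈ D, ∑ l, x l ^ d = ∑ l, y l ^ d := by
  simp only [funext_iff, Finset.sum_apply, momentCurve, Subtype.forall]

/-- The pairs of points of `∏ l, A l` with equal power sums in all degrees of `D`. -/
def powSumPairs (D : Finset ℕ) (A : κ → Finset ℤ) : Finset ((κ → ℤ) × (κ → ℤ)) :=
  {z ∈ Fintype.piFinset A ×ˢ Fintype.piFinset A | ∀ d ∈ D, ∑ l, z.1 l ^ d = ∑ l, z.2 l ^ d}

lemma powEnergy_eq_card_powSumPairs (D : Finset ℕ) (A : κ → Finset ℤ) :
    powEnergy D A = #(powSumPairs D A) := by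
  simp only [powEnergy, tupleEnergy, diffCount_zero, sum_momentCurve_eq_iff, powSumPairs]

lemma powEnergy_le_card_image_mul (D : Finset ℕ) (j : ℕ) (A : κ → Finset ℤ) :
    powEnergy D A ≤ #((powSumPairs D A).image fun z => ∑ l, z.1 l ^ j - ∑ l, z.2 l ^ j) *
      powEnergy (insert j D) A := by
  rw [powEnergy_eq_card_powSumPairs, mul_comm]
  refine card_le_mul_card_image _ _ fun v _ => ?_
  refine le_trans (card_le_card fun z hz => ?_) (diffCount_le_diffCount_zero (Fintype.piFinset A)
    (fun x => ∑ l, momentCurve (insert j D) (x l)) fun d => if (d : ℕ) = j then v else 0)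
  simp only [powSumPairs, mem_filter] at hz ⊢
  refine ⟨hz.1.1, funext fun d => ?_⟩
  rw [Pi.sub_apply, Finset.sum_apply, Finset.sum_apply]
  split_ifs with hd
  · simpa only [momentCurve, hd] using hz.2
  · exact sub_eq_zero.2 (hz.1.2 d ((mem_insert.1 d.2).resolve_left hd))

end PowEnergy

section ResidueCount

lemma card_Ico_filter_dvd_sub (a c : ℤ) {M : ℕ} (hM : 0 < M) (K : ℕ) :
    #{t ∈ Ico a (a + M * K) | (M : ℤ) ∣ t - c} = K := by
  have h := Int.Ico_filter_modEq_card a (a + M * K) (r := M) (mod_cast hM) c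
  have hM' : (M : ℚ) ≠ 0 := by positivity
  simp only [Int.cast_add, Int.cast_mul, Int.cast_natCast, add_sub_right_comm, add_div,
    mul_div_cancel_left₀ _ hM', Int.ceil_add_natCast, sub_self, zero_add, Nat.cast_nonneg,
    max_eq_left, Nat.cast_inj] at h
  simpa only [Int.modEq_comm (b := c), Int.modEq_iff_dvd] using h

lemma card_le_of_forall_dvd_sub {S : Finset ℤ} {a c : ℤ} {M : ℕ} (hM : 0 < M) {K : ℕ}
    (hS : ∀ x ∈ S, a ≤ x ∧ x < a + M * K) (hc : ∀ x ∈ S, (M : ℤ) ∣ x - c) : #S ≤ K :=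
  (card_le_card fun x hx => mem_filter.2 ⟨mem_Ico.2 (hS x hx), hc x hx⟩).trans_eq
    (card_Ico_filter_dvd_sub a c hM K)

lemma card_piFinset_filter_pow_dvd_sub {ι : Type*} [Fintype ι] [DecidableEq ι] {p : ℕ}
    (hp : 0 < p) (a c : ι → ℤ) {m : ℕ} {e : ι → ℕ} (he : ∀ i, e i ≤ m) :
    #(Fintype.piFinset fun i => {t ∈ Ico (a i) (a i + (p : ℤ) ^ m) | (p : ℤ) ^ e i ∣ t - c i}) =
      p ^ ∑ i, (m - e i) := by
  rw [Fintype.card_piFinset, ← prod_pow_eq_pow_sum]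
  refine prod_congr rfl fun i _ => ?_
  have h := card_Ico_filter_dvd_sub (a i) (c i) (pow_pos hp (e i)) (p ^ (m - e i))
  rwa [← Nat.cast_mul, ← pow_add, Nat.add_sub_cancel' (he i), Nat.cast_pow, Nat.cast_pow] at h

end ResidueCount

/-! ### Translation of power sums -/

section PolynomialFunctional

open Polynomial

variable {R : Type*} [CommRing R] (L : R[X] →ₗ[R] R) {j k : ℕ}

lemma functional_add_C_pow (Y : R[X]) (b : R) (m : ℕ) :
    L ((Y + C b) ^ m) = ∑ i ∈ range (m + 1), (m.choose i : R) * b ^ (m - i) * L (Y ^ i) := by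
  rw [add_pow, map_sum]
  refine sum_congr rfl fun i _ => ?_
  rw [← smul_eq_mul _ (L _), ← map_smul, smul_eq_C_mul]
  congr 1
  simp only [map_mul, map_pow, map_natCast]
  ring

variable (h : ∀ t < j, L (X ^ t) = 0)

include h

lemma functional_X_sub_C_pow_eq_zero (c : R) {i : ℕ} (hi : i < j) : L ((X - C c) ^ i) = 0 := by
  rw [sub_eq_add_neg, ← C_neg, functional_add_C_pow]
  exact sum_eq_zero fun t ht => by rw [h t (by rw [mem_range] at ht; omega), mul_zero]

lemma functional_X_sub_C_pow_eq (c : R) : L ((X - C c) ^ j) = L (X ^ j) := by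
  rw [sub_eq_add_neg, ← C_neg, functional_add_C_pow, sum_range_succ, sum_eq_zero fun t ht => by
    rw [h t (mem_range.1 ht), mul_zero]]
  simp

lemma sum_choose_mul_functional_X_sub_C_pow (hk : L (X ^ k) = 0) (c : R) :
    ∑ i ∈ Ico j (k + 1), (k.choose i : R) * c ^ (k - i) * L ((X - C c) ^ i) = 0 := by
  have expand := functional_add_C_pow L (X - C c) c k
  rw [sub_add_cancel, hk] at expand
  rw [expand]
  refine sum_subset_zero_on_sdiff (fun i hi => mem_range.2 (mem_Ico.1 hi).2) (fun i hi => ?_)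
    fun _ _ => rfl
  rw [functional_X_sub_C_pow_eq_zero L h c (by simp at hi; omega), mul_zero]

lemma pow_dvd_functional_X_pow (hk : L (X ^ k) = 0) (hjk : j < k) {M c : R}
    (hM : ∀ i, j + 1 ≤ i → M ^ (j + 1) ∣ L ((X - C c) ^ i))
    (hcop : IsCoprime M ((k.choose j : R) * c ^ (k - j))) : M ^ (j + 1) ∣ L (X ^ j) := by
  have expand := sum_choose_mul_functional_X_sub_C_pow L h hk c
  rw [sum_eq_sum_Ico_succ_bot (by omega), functional_X_sub_C_pow_eq L h] at expand
  refine hcop.pow_left.dvd_of_dvd_mul_left ?_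
  rw [eq_neg_of_add_eq_zero_left expand, dvd_neg]
  exact dvd_sum fun i hi => Dvd.dvd.mul_left (hM i (mem_Ico.1 hi).1) _

end PolynomialFunctional

/-- The degrees `1, …, j - 1, k`, interpolating between the single equation of degree `k` at
`j = 1` and the Vinogradov system of degree `k` at `j = k`. -/
def degs (k j : ℕ) : Finset ℕ := insert k (Ico 1 j)

lemma degs_succ {k j : ℕ} (hj : 1 ≤ j) : degs k (j + 1) = insert j (degs k j) := by
  ext d
  simp only [degs, mem_insert, mem_Ico]
  omega

section DiffFunctional

open Polynomial

variable {κ κ' : Type*} [Fintype κ] [Fintype κ']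

/-- The functional `P ↦ ∑ P(x l) - ∑ P(y l)`. -/
noncomputable def diffFunctional (x y : κ → ℤ) : ℤ[X] →ₗ[ℤ] ℤ :=
  ∑ l, leval (x l) - ∑ l, leval (y l)

lemma diffFunctional_apply (x y : κ → ℤ) (P : ℤ[X]) :
    diffFunctional x y P = ∑ l, P.eval (x l) - ∑ l, P.eval (y l) := by
  simp only [diffFunctional, LinearMap.sub_apply, LinearMap.sum_apply, leval_apply]

lemma diffFunctional_X_pow (x y : κ → ℤ) (d : ℕ) :
    diffFunctional x y (X ^ d) = ∑ l, x l ^ d - ∑ l, y l ^ d := by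
  simp only [diffFunctional_apply, eval_pow, eval_X]

lemma diffFunctional_X_pow_eq_zero {x y : κ → ℤ} {k j : ℕ}
    (h : ∀ d ∈ degs k j, ∑ l, x l ^ d = ∑ l, y l ^ d) {t : ℕ} (ht : t < j ∨ t = k) :
    diffFunctional x y (X ^ t) = 0 := by
  rw [diffFunctional_X_pow, sub_eq_zero]
  rcases Nat.eq_zero_or_pos t with rfl | hpos
  · simp only [pow_zero]
  · refine h t ?_
    simp only [degs, mem_insert, mem_Ico]
    omega

lemma diffFunctional_sum (x y : κ ⊕ κ' → ℤ) :
    diffFunctional x y = diffFunctional (x ∘ Sum.inl) (y ∘ Sum.inl) +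
      diffFunctional (x ∘ Sum.inr) (y ∘ Sum.inr) := by
  simp only [diffFunctional, Fintype.sum_sum_type, Function.comp_apply, add_sub_add_comm]

lemma diffFunctional_X_sub_C_pow {u v w w' : κ → ℤ} {c Q : ℤ}
    (hu : ∀ l, u l - c = Q * w l) (hv : ∀ l, v l - c = Q * w' l) (t : ℕ) :
    diffFunctional u v ((X - C c) ^ t) = Q ^ t * diffFunctional w w' (X ^ t) := by
  simp only [diffFunctional_apply, eval_pow, eval_sub, eval_X, eval_C, hu, hv, mul_pow,
    ← mul_sum, ← mul_sub]

lemma pow_dvd_diffFunctional_X_sub_C_pow {x y : κ → ℤ} {M c : ℤ}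
    (hx : ∀ l, M ∣ x l - c) (hy : ∀ l, M ∣ y l - c) {i m : ℕ} (h : m ≤ i) :
    M ^ m ∣ diffFunctional x y ((X - C c) ^ i) := by
  simp only [diffFunctional_apply, eval_pow, eval_sub, eval_X, eval_C]
  exact dvd_sub
    (dvd_sum fun l _ => (pow_dvd_pow M h).trans (pow_dvd_pow_of_dvd (hx l) i))
    (dvd_sum fun l _ => (pow_dvd_pow M h).trans (pow_dvd_pow_of_dvd (hy l) i))

end DiffFunctional

/-- In a residue class modulo `M`, the system of degrees `1, …, j - 1, k` forces a congruence
modulo `M ^ (j + 1)` on the power sums of degree `j`, which therefore take few values. -/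
lemma powEnergy_degs_le_mul_powEnergy_degs_succ {κ : Type*} [Fintype κ] [DecidableEq κ] {k j : ℕ}
    (hj : 1 ≤ j) (hjk : j < k) {A : κ → Finset ℤ} {Y M : ℕ} (hM : 1 ≤ M) {c : ℤ}
    (hA : ∀ l, ∀ x ∈ A l, 1 ≤ x ∧ x ≤ Y ∧ (M : ℤ) ∣ x - c)
    (hcop : IsCoprime (M : ℤ) ((k.choose j : ℤ) * c ^ (k - j))) :
    powEnergy (degs k j) A ≤
      (2 * Fintype.card κ * Y ^ j / M ^ (j + 1) + 1) * powEnergy (degs k (j + 1)) A := by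
  rw [degs_succ hj]
  refine (powEnergy_le_card_image_mul _ j A).trans (Nat.mul_le_mul_right _ ?_)
  have bound : ∀ x ∈ Fintype.piFinset A,
      0 ≤ ∑ l, x l ^ j ∧ ∑ l, x l ^ j ≤ Fintype.card κ * (Y : ℤ) ^ j := fun x hx => by
    have hx' := fun l => hA l _ (Fintype.mem_piFinset.1 hx l)
    refine ⟨sum_nonneg fun l _ => pow_nonneg (zero_le_one.trans (hx' l).1) _, ?_⟩
    simpa only [card_univ, nsmul_eq_mul] using sum_le_card_nsmul univ (fun l => x l ^ j) _
      fun l _ => pow_le_pow_left₀ (zero_le_one.trans (hx' l).1) (hx' l).2.1 j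
  refine card_le_of_forall_dvd_sub (a := -(Fintype.card κ * (Y : ℤ) ^ j)) (c := 0)
    (M := M ^ (j + 1)) (pow_pos hM _) (fun v hv => ?_) fun v hv => ?_
  all_goals
    obtain ⟨z, hz, rfl⟩ := mem_image.1 hv
    obtain ⟨hz, hsol⟩ := mem_filter.1 hz
    rw [mem_product] at hz
  · have lt_mul : 2 * Fintype.card κ * Y ^ j <
        M ^ (j + 1) * (2 * Fintype.card κ * Y ^ j / M ^ (j + 1) + 1) :=
      Nat.lt_mul_div_succ _ (pow_pos hM _)
    zify at lt_mul ⊢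
    constructor <;> linarith [bound _ hz.1, bound _ hz.2]
  · rw [sub_zero, ← diffFunctional_X_pow, Nat.cast_pow]
    have hdvd := fun l => (hA l _ (Fintype.mem_piFinset.1 hz.1 l)).2.2
    have hdvd' := fun l => (hA l _ (Fintype.mem_piFinset.1 hz.2 l)).2.2
    exact pow_dvd_functional_X_pow _
      (fun t ht => diffFunctional_X_pow_eq_zero hsol (Or.inl ht))
      (diffFunctional_X_pow_eq_zero hsol (Or.inr rfl)) hjk
      (fun i hi => pow_dvd_diffFunctional_X_sub_C_pow hdvd hdvd' hi) hcop

/-! ### Well-spaced solutions of congruences to growing moduli -/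

section Hensel

open Polynomial

lemma sq_dvd_eval_add_mul_sub {R : Type*} [CommRing R] (P : R[X]) (x m h : R) :
    m ^ 2 ∣ P.eval (x + m * h) - P.eval x - m * (h * (derivative P).eval x) := by
  obtain ⟨y, hy⟩ := P.binomExpansion x (m * h)
  exact ⟨y * h ^ 2, by rw [hy]; ring⟩

lemma forall_dvd_of_dvd_sum_mul_pow {p j : ℕ} (hp : p.Prime) {w h : Fin j → ℤ}
    (hw : Pairwise fun l l' => ¬ (p : ℤ) ∣ w l - w l')
    (hsum : ∀ i : Fin j, (p : ℤ) ∣ ∑ l, h l * w l ^ (i : ℕ)) (l : Fin j) : (p : ℤ) ∣ h l := by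
  have := Fact.mk hp
  have hdet : (Matrix.vandermonde fun l => (w l : ZMod p)).det ≠ 0 := by
    rw [Matrix.det_vandermonde_ne_zero_iff]
    intro l l' hll
    by_contra hne
    exact hw (Ne.symm hne) ((ZMod.intCast_eq_intCast_iff_dvd_sub _ _ _).1 hll)
  have hzero : (fun l => (h l : ZMod p)) = 0 := by
    refine Matrix.eq_zero_of_vecMul_eq_zero hdet (funext fun i => ?_)
    have hi := (ZMod.intCast_zmod_eq_zero_iff_dvd _ p).2 (hsum i)
    push_cast at hi
    simpa only [Matrix.vecMul, dotProduct, Matrix.vandermonde_apply, Pi.zero_apply] using hi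
  exact (ZMod.intCast_zmod_eq_zero_iff_dvd _ p).1 (congrFun hzero l)

/-- Modulo `p`, the derivative of the `i`-th polynomial is a nonzero multiple of `X ^ i` as a
function, so that the Jacobian of the system is of Vandermonde type. -/
def MonomialDerivMod (p : ℕ) {j : ℕ} (P : Fin j → ℤ[X]) : Prop :=
  ∀ i, ∃ a : ℤ, ¬ (p : ℤ) ∣ a ∧ ∀ w, (p : ℤ) ∣ (derivative (P i)).eval w - a * w ^ (i : ℕ)

variable {p j : ℕ} {P : Fin j → ℤ[X]} (hp : p.Prime) (hP : MonomialDerivMod p P)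

include hp hP

lemma MonomialDerivMod.pow_succ_dvd_sub {w w' : Fin j → ℤ}
    (hw : Pairwise fun l l' => ¬ (p : ℤ) ∣ w l - w l') {t : ℕ} (ht : 1 ≤ t)
    (hww : ∀ l, (p : ℤ) ^ t ∣ w' l - w l)
    (hsum : ∀ i, (p : ℤ) ^ (t + 1) ∣ ∑ l, (P i).eval (w' l) - ∑ l, (P i).eval (w l))
    (l : Fin j) : (p : ℤ) ^ (t + 1) ∣ w' l - w l := by
  choose h hh using hww
  obtain rfl : w' = fun l => w l + p ^ t * h l := funext fun l => by linarith [hh l]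
  suffices ∀ l, (p : ℤ) ∣ h l by
    rw [add_sub_cancel_left, pow_succ]
    exact mul_dvd_mul_left _ (this l)
  refine forall_dvd_of_dvd_sum_mul_pow hp hw fun i => ?_
  obtain ⟨a, ha, hPa⟩ := hP i
  have taylor : (p : ℤ) ^ (t + 1) ∣ p ^ t * ∑ l, h l * (derivative (P i)).eval (w l) := by
    rw [← dvd_sub_right (hsum i), mul_sum, ← sum_sub_distrib, ← sum_sub_distrib]
    refine dvd_sum fun l _ => .trans ?_ (sq_dvd_eval_add_mul_sub (P i) (w l) (p ^ t) (h l))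
    rw [← pow_mul]
    exact pow_dvd_pow _ (by omega)
  have linear : (p : ℤ) ∣ ∑ l, h l * (derivative (P i)).eval (w l) :=
    Int.dvd_of_mul_dvd_mul_left (pow_ne_zero t (mod_cast hp.ne_zero)) (pow_succ (p : ℤ) t ▸ taylor)
  have monomial : (p : ℤ) ∣ a * ∑ l, h l * w l ^ (i : ℕ) := by
    rw [← dvd_sub_right linear, mul_sum, ← sum_sub_distrib]
    refine dvd_sum fun l _ => ((hPa (w l)).mul_left (h l)).trans (dvd_of_eq (by ring))
  exact ((Nat.prime_iff_prime_int.1 hp).dvd_mul.1 monomial).resolve_left ha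

lemma MonomialDerivMod.pow_dvd_sub {w w' : Fin j → ℤ}
    (hw : Pairwise fun l l' => ¬ (p : ℤ) ∣ w l - w l') (hww : ∀ l, (p : ℤ) ∣ w' l - w l) {m : ℕ}
    (hsum : ∀ i, (p : ℤ) ^ m ∣ ∑ l, (P i).eval (w' l) - ∑ l, (P i).eval (w l)) (l : Fin j) :
    (p : ℤ) ^ m ∣ w' l - w l := by
  rcases Nat.eq_zero_or_pos m with rfl | hm
  · simp only [pow_zero, isUnit_one, IsUnit.dvd]
  induction m, hm using Nat.le_induction generalizing l with
  | base => simpa only [zero_add, pow_one] using hww l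
  | succ t ht ih =>
    exact hP.pow_succ_dvd_sub hp hw ht
      (ih fun i => (pow_dvd_pow _ t.le_succ).trans (hsum i)) hsum l

variable {U : Finset (Fin j → ℤ)} (hdistinct : ∀ w ∈ U, Pairwise fun l l' => ¬ (p : ℤ) ∣ w l - w l')
  (hclass : ∀ w ∈ U, ∀ w' ∈ U, ∀ l, (p : ℤ) ∣ w' l - w l) {a : ℤ} {m : ℕ}
  (hbox : ∀ w ∈ U, ∀ l, a ≤ w l ∧ w l < a + p ^ m)

include hdistinct hclass hbox

lemma MonomialDerivMod.card_le_of_pow_dvd_sub {e : ℕ} (hem : e ≤ m)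
    (hU : ∀ w ∈ U, ∀ w' ∈ U, ∀ i,
      (p : ℤ) ^ e ∣ ∑ l, (P i).eval (w' l) - ∑ l, (P i).eval (w l)) :
    #U ≤ p ^ (j * (m - e)) := by
  rcases U.eq_empty_or_nonempty with rfl | ⟨w, hw⟩
  · exact Nat.zero_le _
  refine (card_le_card fun w' hw' => ?_).trans_eq
    ((card_piFinset_filter_pow_dvd_sub hp.pos (fun _ => a) w fun _ => hem).trans ?_)
  · exact Fintype.mem_piFinset.2 fun l => mem_filter.2 ⟨mem_Ico.2 (hbox w' hw' l),
      hP.pow_dvd_sub hp (hdistinct w hw) (hclass w hw w' hw') (hU w hw w' hw') l⟩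
  · simp only [sum_const, card_univ, Fintype.card_fin, smul_eq_mul]

omit hp hP hdistinct hclass hbox in
lemma sum_mul_sub_succ_mul_add (j b : ℕ) :
    ∑ i : Fin j, (j * b - ((i : ℕ) + 1) * b) + b * ∑ i ∈ range j, (i + 1) = j * (j * b) := by
  rw [mul_sum, ← Fin.sum_univ_eq_sum_range (fun i => b * (i + 1)), ← sum_add_distrib]
  refine (sum_congr rfl fun i _ => ?_).trans
    ((sum_const (j * b)).trans (by rw [card_univ, Fintype.card_fin, smul_eq_mul]))
  rw [mul_comm b, Nat.sub_add_cancel (Nat.mul_le_mul_right _ i.isLt)]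

/-- Sorting the solutions by the residues modulo `p ^ (j * b)` of the values of the system, one
saves the moduli of all congruences at once. -/
lemma MonomialDerivMod.card_mul_pow_le {b : ℕ} (hbm : j * b ≤ m) (T : Fin j → ℤ)
    (hU : ∀ w ∈ U, ∀ i : Fin j, (p : ℤ) ^ (((i : ℕ) + 1) * b) ∣ ∑ l, (P i).eval (w l) - T i) :
    #U * p ^ (b * ∑ i ∈ range j, (i + 1)) ≤ p ^ (j * m) := by
  have hle : ∀ i : Fin j, ((i : ℕ) + 1) * b ≤ j * b := fun i => Nat.mul_le_mul_right _ i.isLt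
  have hpos : (0 : ℤ) < (p : ℤ) ^ (j * b) := pow_pos (mod_cast hp.pos) _
  let φ : (Fin j → ℤ) → Fin j → ℤ := fun w i => (∑ l, (P i).eval (w l)) % (p : ℤ) ^ (j * b)
  have himage : #(U.image φ) ≤ p ^ ∑ i : Fin j, (j * b - ((i : ℕ) + 1) * b) := by
    refine (card_le_card fun v hv => ?_).trans_eq
      (card_piFinset_filter_pow_dvd_sub hp.pos (fun _ => 0) T hle)
    obtain ⟨w, hw, rfl⟩ := mem_image.1 hv
    refine Fintype.mem_piFinset.2 fun i => mem_filter.2 ⟨mem_Ico.2 ⟨Int.emod_nonneg _ hpos.ne',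
      (Int.emod_lt_of_pos _ hpos).trans_eq (zero_add _).symm⟩, ?_⟩
    rw [← dvd_sub_right (hU w hw i), sub_sub_sub_cancel_right]
    exact (pow_dvd_pow _ (hle i)).trans Int.dvd_self_sub_emod
  have hfiber : ∀ v ∈ U.image φ, #{w ∈ U | φ w = v} ≤ p ^ (j * (m - j * b)) := fun v _ => by
    refine hP.card_le_of_pow_dvd_sub hp
      (fun w hw => hdistinct w (mem_filter.1 hw).1)
      (fun w hw w' hw' => hclass w (mem_filter.1 hw).1 w' (mem_filter.1 hw').1)
      (fun w hw => hbox w (mem_filter.1 hw).1) hbm fun w hw w' hw' i => ?_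
    exact Int.ModEq.dvd (congrFun ((mem_filter.1 hw).2.trans (mem_filter.1 hw').2.symm) i)
  calc #U * p ^ (b * ∑ i ∈ range j, (i + 1))
      ≤ (p ^ (j * (m - j * b)) * p ^ ∑ i : Fin j, (j * b - ((i : ℕ) + 1) * b)) *
          p ^ (b * ∑ i ∈ range j, (i + 1)) :=
        Nat.mul_le_mul_right _ ((card_le_mul_card_image U _ hfiber).trans
          (Nat.mul_le_mul_left _ himage))
    _ = p ^ (j * m) := by
        rw [mul_assoc, ← pow_add, ← pow_add, sum_mul_sub_succ_mul_add, ← mul_add,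
          Nat.sub_add_cancel hbm]

end Hensel

/-! ### Variables in distinct residue classes -/

section Rescaling

variable {j : ℕ}

/-- The sets `B l` lie in `[1, p ^ n]`, in distinct residue classes modulo `p ^ (q + 1)` all of
which refine the class of `c` modulo `p ^ q`. -/
structure IsSpaced (p q n : ℕ) (c : ℤ) (B : Fin j → Finset ℤ) : Prop where
  subset_Icc : ∀ l, B l ⊆ Icc 1 ((p : ℤ) ^ n)
  dvd_sub_base : ∀ l, ∀ x ∈ B l, (p : ℤ) ^ q ∣ x - c
  dvd_sub : ∀ l, ∀ x ∈ B l, ∀ y ∈ B l, (p : ℤ) ^ (q + 1) ∣ x - y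
  not_dvd_sub : ∀ l l', l ≠ l' → ∀ x ∈ B l, ∀ y ∈ B l', ¬ (p : ℤ) ^ (q + 1) ∣ x - y

/-- The coordinates `w` of a point `u = c + Q * w`. -/
def rescale (c Q : ℤ) (u : Fin j → ℤ) (l : Fin j) : ℤ := (u l - c) / Q

variable {p q n : ℕ} {c : ℤ} {B : Fin j → Finset ℤ} (hB : IsSpaced p q n c B)

include hB

lemma IsSpaced.sub_eq_mul_rescale {u : Fin j → ℤ} (hu : ∀ l, u l ∈ B l) (l : Fin j) :
    u l - c = (p : ℤ) ^ q * rescale c ((p : ℤ) ^ q) u l :=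
  (Int.mul_ediv_cancel' (hB.dvd_sub_base l _ (hu l))).symm

lemma IsSpaced.sub_eq_mul_rescale_sub {u u' : Fin j → ℤ} (hu : ∀ l, u l ∈ B l)
    (hu' : ∀ l, u' l ∈ B l) (l l' : Fin j) : u l - u' l' =
      (p : ℤ) ^ q * (rescale c ((p : ℤ) ^ q) u l - rescale c ((p : ℤ) ^ q) u' l') := by
  rw [mul_sub, ← hB.sub_eq_mul_rescale hu, ← hB.sub_eq_mul_rescale hu', sub_sub_sub_cancel_right]

lemma IsSpaced.pow_succ_dvd_sub_iff (hp : 0 < p) {u u' : Fin j → ℤ} (hu : ∀ l, u l ∈ B l)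
    (hu' : ∀ l, u' l ∈ B l) (l l' : Fin j) : (p : ℤ) ^ (q + 1) ∣ u l - u' l' ↔
      (p : ℤ) ∣ rescale c ((p : ℤ) ^ q) u l - rescale c ((p : ℤ) ^ q) u' l' := by
  rw [hB.sub_eq_mul_rescale_sub hu hu', pow_succ,
    mul_dvd_mul_iff_left (pow_pos (Int.natCast_pos.2 hp) q).ne']

lemma IsSpaced.rescale_mem_Ico (hp : 0 < p) (hqn : q ≤ n) {u : Fin j → ℤ}
    (hu : ∀ l, u l ∈ B l) (l : Fin j) : -c / (p : ℤ) ^ q + 1 ≤ rescale c ((p : ℤ) ^ q) u l ∧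
      rescale c ((p : ℤ) ^ q) u l < -c / (p : ℤ) ^ q + 1 + (p : ℤ) ^ (n - q) := by
  have hQ : (0 : ℤ) < (p : ℤ) ^ q := pow_pos (Int.natCast_pos.2 hp) q
  have scale := hB.sub_eq_mul_rescale hu l
  have hul := mem_Icc.1 (hB.subset_Icc l (hu l))
  have hpn : (p : ℤ) ^ n = p ^ q * p ^ (n - q) := by rw [← pow_add, Nat.add_sub_cancel' hqn]
  have div_add_mod := Int.mul_ediv_add_emod (-c) ((p : ℤ) ^ q)
  constructor
  · exact lt_of_mul_lt_mul_left (by linarith [Int.emod_nonneg (-c) hQ.ne']) hQ.le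
  · refine lt_of_mul_lt_mul_left (a := (p : ℤ) ^ q) ?_ hQ.le
    linarith [Int.emod_lt_of_pos (-c) hQ]

lemma IsSpaced.card_piFinset_le (hp : 0 < p) (hqn : q ≤ n) :
    #(Fintype.piFinset B) ≤ p ^ (j * (n - q)) := by
  refine (card_le_card fun u hu => ?_).trans_eq
    ((card_piFinset_filter_pow_dvd_sub hp (fun _ => 1) (fun _ => c) fun _ => hqn).trans ?_)
  · rw [Fintype.mem_piFinset] at hu ⊢
    intro l
    have hul := mem_Icc.1 (hB.subset_Icc l (hu l))
    exact mem_filter.2 ⟨mem_Ico.2 ⟨hul.1, by linarith⟩, hB.dvd_sub_base l _ (hu l)⟩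
  · simp only [sum_const, card_univ, Fintype.card_fin, smul_eq_mul]

open Polynomial in
lemma IsSpaced.card_mul_pow_le (hp : p.Prime) {P : Fin j → ℤ[X]} (hP : MonomialDerivMod p P)
    {b : ℕ} (hqn : q + j * b ≤ n) {U : Finset (Fin j → ℤ)} (hUB : ∀ u ∈ U, ∀ l, u l ∈ B l)
    (T : Fin j → ℤ) (hU : ∀ u ∈ U, ∀ i : Fin j, (p : ℤ) ^ (((i : ℕ) + 1) * b) ∣
      ∑ l, (P i).eval (rescale c ((p : ℤ) ^ q) u l) - T i) :
    #U * p ^ (b * ∑ i ∈ range j, (i + 1)) ≤ p ^ (j * (n - q)) := by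
  have hinj : Set.InjOn (rescale c ((p : ℤ) ^ q)) (U : Set (Fin j → ℤ)) := by
    intro u hu u' hu' h
    funext l
    rw [← sub_eq_zero, hB.sub_eq_mul_rescale_sub (hUB u (mem_coe.1 hu)) (hUB u' (mem_coe.1 hu')), h,
      sub_self, mul_zero]
  rw [← card_image_of_injOn hinj]
  refine hP.card_mul_pow_le hp (forall_mem_image.2 fun u hu l l' hll => ?_)
    (forall_mem_image.2 fun u hu => forall_mem_image.2 fun u' hu' l => ?_)
    (forall_mem_image.2 fun u hu => hB.rescale_mem_Ico hp.pos (by omega) (hUB u hu)) (by omega) T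
    (forall_mem_image.2 hU)
  · beta_reduce
    rw [← hB.pow_succ_dvd_sub_iff hp.pos (hUB u hu) (hUB u hu)]
    exact hB.not_dvd_sub l l' hll _ (hUB u hu l) _ (hUB u hu l')
  · rw [← hB.pow_succ_dvd_sub_iff hp.pos (hUB u' hu') (hUB u hu)]
    exact hB.dvd_sub l _ (hUB u' hu' l) _ (hUB u hu l)

end Rescaling

section LocalSystem

open Polynomial

lemma not_dvd_natCast_of_lt {p m : ℕ} (h0 : 0 < m) (h : m < p) : ¬ (p : ℤ) ∣ (m : ℤ) :=
  fun hd => (Nat.le_of_dvd h0 (Int.natCast_dvd_natCast.1 hd)).not_gt h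

lemma not_dvd_choose_mul_pow {p k j : ℕ} (hp : p.Prime) (hkp : k < p) (hjk : j ≤ k) {c : ℤ}
    (hc : ¬ (p : ℤ) ∣ c) (m : ℕ) : ¬ (p : ℤ) ∣ (k.choose j : ℤ) * c ^ m := by
  have hpp := Nat.prime_iff_prime_int.1 hp
  rw [hpp.dvd_mul, Int.natCast_dvd_natCast]
  rintro (h | h)
  · refine hkp.not_ge (hp.dvd_factorial.1 ?_)
    rw [← Nat.choose_mul_factorial_mul_factorial hjk, mul_assoc]
    exact h.mul_right _
  · exact hc (hpp.dvd_of_dvd_pow h)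

/-- The terms of degree at least `j` of `(c + Q * X) ^ k`, divided by `Q ^ j`. -/
noncomputable def binomialTail (k j : ℕ) (c Q : ℤ) : ℤ[X] :=
  ∑ t ∈ Ico j (k + 1), C ((k.choose t : ℤ) * c ^ (k - t) * Q ^ (t - j)) * X ^ t

/-- The system of degrees `1, …, j - 1, k` in the variable `(x - c) / Q`: after translation by `c`
the terms of degree less than `j` of the last equation follow from the other equations. -/
noncomputable def localSystem (k j : ℕ) (c Q : ℤ) (i : Fin j) : ℤ[X] :=
  if (i : ℕ) + 1 < j then X ^ ((i : ℕ) + 1) else binomialTail k j c Q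

variable {k j : ℕ}

lemma dvd_eval_derivative_binomialTail_sub {c Q M : ℤ} (hQ : M ∣ Q) (hjk : j ≤ k) (w : ℤ) :
    M ∣ (derivative (binomialTail k j c Q)).eval w -
      (k.choose j : ℤ) * c ^ (k - j) * j * w ^ (j - 1) := by
  rw [binomialTail, sum_eq_sum_Ico_succ_bot (by omega), derivative_add, eval_add]
  simp only [derivative_C_mul_X_pow, derivative_sum, eval_finsetSum, eval_mul, eval_C,
    eval_pow, eval_X, Nat.sub_self, pow_zero, mul_one, add_sub_cancel_left]
  refine dvd_sum fun t ht => ?_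
  rw [mem_Ico] at ht
  exact (((hQ.trans (dvd_pow_self _ (by omega))).mul_left _).mul_right _).mul_right _

lemma monomialDerivMod_localSystem {p : ℕ} (hp : p.Prime) (hkp : k < p) (hjk : j ≤ k) {c Q : ℤ}
    (hc : ¬ (p : ℤ) ∣ c) (hQ : (p : ℤ) ∣ Q) : MonomialDerivMod p (localSystem k j c Q) := by
  intro i
  rw [localSystem]
  split_ifs with hi
  · refine ⟨((i : ℕ) + 1 : ℕ), not_dvd_natCast_of_lt (by omega) (by omega), fun w => ?_⟩
    simp
  · refine ⟨(k.choose j : ℤ) * c ^ (k - j) * j, fun h => ?_, fun w => ?_⟩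
    · rcases (Nat.prime_iff_prime_int.1 hp).dvd_mul.1 h with h | h
      · exact not_dvd_choose_mul_pow hp hkp hjk hc _ h
      · exact not_dvd_natCast_of_lt (by omega) (by omega) h
    · rw [show (i : ℕ) = j - 1 by omega]
      exact dvd_eval_derivative_binomialTail_sub hQ hjk w

variable {κ κ' : Type*} [Fintype κ] [Fintype κ'] {z z' : κ ⊕ κ' → ℤ} {c Q g : ℤ} {w w' : κ → ℤ}
  (hw : ∀ l, z (Sum.inl l) - c = Q * w l) (hw' : ∀ l, z' (Sum.inl l) - c = Q * w' l)
  (hx : ∀ l, Q * g ∣ z (Sum.inr l) - c) (hy : ∀ l, Q * g ∣ z' (Sum.inr l) - c)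

include hw hw' hx hy

lemma pow_dvd_diffFunctional_X_sub_C_pow_sub_mul {m t : ℕ} (hmt : m ≤ t) :
    (Q * g) ^ m ∣ diffFunctional z z' ((X - C c) ^ t) - Q ^ t * diffFunctional w w' (X ^ t) := by
  rw [diffFunctional_sum, LinearMap.add_apply,
    diffFunctional_X_sub_C_pow (u := z ∘ Sum.inl) (v := z' ∘ Sum.inl) hw hw', add_sub_cancel_left]
  exact pow_dvd_diffFunctional_X_sub_C_pow hx hy hmt

variable (hz : ∀ d ∈ degs k j, ∑ l, z l ^ d = ∑ l, z' l ^ d) (hQ : Q ≠ 0)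

include hz hQ

lemma pow_dvd_diffFunctional_X_pow {t : ℕ} (ht : t < j) :
    g ^ t ∣ diffFunctional w w' (X ^ t) := by
  have h := pow_dvd_diffFunctional_X_sub_C_pow_sub_mul hw hw' hx hy (le_refl t)
  rw [functional_X_sub_C_pow_eq_zero _ (fun i hi => diffFunctional_X_pow_eq_zero hz (Or.inl hi)) c
    ht, zero_sub, dvd_neg, mul_pow] at h
  exact Int.dvd_of_mul_dvd_mul_left (pow_ne_zero t hQ) h

lemma pow_dvd_diffFunctional_binomialTail :
    g ^ j ∣ diffFunctional w w' (binomialTail k j c Q) := by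
  refine Int.dvd_of_mul_dvd_mul_left (pow_ne_zero j hQ) ?_
  have scale : Q ^ j * diffFunctional w w' (binomialTail k j c Q) =
      ∑ t ∈ Ico j (k + 1), (k.choose t : ℤ) * c ^ (k - t) *
        (Q ^ t * diffFunctional w w' (X ^ t)) := by
    rw [binomialTail, map_sum, mul_sum]
    refine sum_congr rfl fun t ht => ?_
    rw [← smul_eq_C_mul, map_smul, smul_eq_mul, ← Nat.add_sub_cancel' (mem_Ico.1 ht).1, pow_add,
      Nat.add_sub_cancel_left]
    ring
  have translate := sum_choose_mul_functional_X_sub_C_pow (diffFunctional z z')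
    (fun i hi => diffFunctional_X_pow_eq_zero hz (Or.inl hi))
    (diffFunctional_X_pow_eq_zero hz (Or.inr rfl)) c
  rw [← mul_pow, scale, ← dvd_neg, ← zero_sub, ← translate, ← sum_sub_distrib]
  refine dvd_sum fun t ht => ?_
  rw [← mul_sub]
  exact (pow_dvd_diffFunctional_X_sub_C_pow_sub_mul hw hw' hx hy (mem_Ico.1 ht).1).mul_left _

lemma pow_dvd_sum_eval_localSystem_sub (i : Fin j) : g ^ ((i : ℕ) + 1) ∣
    ∑ l, (localSystem k j c Q i).eval (w l) - ∑ l, (localSystem k j c Q i).eval (w' l) := by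
  rw [← diffFunctional_apply, localSystem]
  split_ifs with hi
  · exact pow_dvd_diffFunctional_X_pow hw hw' hx hy hz hQ hi
  · obtain hi : (i : ℕ) + 1 = j := by omega
    rw [hi]
    exact pow_dvd_diffFunctional_binomialTail hw hw' hx hy hz hQ

end LocalSystem

section MixedEnergy

variable {κ : Type*} [Fintype κ] [DecidableEq κ] {p k j q b n : ℕ} {c : ℤ}
  {B : Fin j → Finset ℤ} {A : κ → Finset ℤ} (hp : p.Prime) (hkp : k < p) (hjk : j < k)
  (hq : 1 ≤ q) (hqn : q + j * b ≤ n) (hc : ¬ (p : ℤ) ∣ c) (hB : IsSpaced p q n c B)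
  (hA : ∀ l, ∀ x ∈ A l, (p : ℤ) ^ (q + b) ∣ x - c)

include hp hkp hjk hq hqn hc hB hA

lemma card_extendablePairs_mul_le :
    #(extendablePairs (momentCurve (degs k j)) B A) * p ^ (b * ∑ i ∈ range j, (i + 1)) ≤
      p ^ (j * (n - q)) * p ^ (j * (n - q)) := by
  set E := extendablePairs (momentCurve (degs k j)) B A with hE
  have mem_E : ∀ g ∈ E, (∀ l, g.1 l ∈ B l) ∧ ∀ l, g.2 l ∈ B l := fun g hg => by
    rw [hE, extendablePairs, mem_filter, mem_product, Fintype.mem_piFinset,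
      Fintype.mem_piFinset] at hg
    exact hg.1
  have hfiber : ∀ v ∈ Fintype.piFinset B,
      #{g ∈ E | g.2 = v} * p ^ (b * ∑ i ∈ range j, (i + 1)) ≤ p ^ (j * (n - q)) := by
    intro v hv
    have hinj : Set.InjOn Prod.fst (SetLike.coe {g ∈ E | g.2 = v}) := by
      intro g hg g' hg' h
      exact Prod.ext h
        ((mem_filter.1 (mem_coe.1 hg)).2.trans (mem_filter.1 (mem_coe.1 hg')).2.symm)
    rw [← card_image_of_injOn hinj]
    refine hB.card_mul_pow_le hp (monomialDerivMod_localSystem hp hkp hjk.le hc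
      (dvd_pow_self (p : ℤ) (Nat.one_le_iff_ne_zero.1 hq))) hqn
      (forall_mem_image.2 fun g hg => (mem_E g (mem_filter.1 hg).1).1)
      (fun i => ∑ l, (localSystem k j c ((p : ℤ) ^ q) i).eval (rescale c ((p : ℤ) ^ q) v l))
      (forall_mem_image.2 fun g hg i => ?_)
    obtain ⟨hgE, rfl⟩ := mem_filter.1 hg
    obtain ⟨x, hx, y, hy, hxy⟩ := (mem_filter.1 hgE).2
    rw [Fintype.mem_piFinset] at hx hy
    have hz : ∀ d ∈ degs k j, ∑ l, Sum.elim g.1 x l ^ d = ∑ l, Sum.elim g.2 y l ^ d :=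
      sum_momentCurve_eq_iff.1 (by
        simpa only [Fintype.sum_sum_type, Sum.elim_inl, Sum.elim_inr] using hxy)
    rw [mul_comm, pow_mul]
    refine pow_dvd_sum_eval_localSystem_sub (z := Sum.elim g.1 x) (z' := Sum.elim g.2 y)
      (hB.sub_eq_mul_rescale (mem_E g hgE).1) (hB.sub_eq_mul_rescale (mem_E g hgE).2)
      (fun l => ?_) (fun l => ?_) hz
      (pow_pos (Int.natCast_pos.2 hp.pos) q).ne' i
    · exact pow_add (p : ℤ) q b ▸ hA l _ (hx l)
    · exact pow_add (p : ℤ) q b ▸ hA l _ (hy l)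
  rw [card_eq_sum_card_fiberwise (f := Prod.snd) (t := Fintype.piFinset B)
    (fun g hg => Fintype.mem_piFinset.2 (mem_E g hg).2), sum_mul]
  calc _ ≤ #(Fintype.piFinset B) * p ^ (j * (n - q)) := sum_le_card_nsmul _ _ _ hfiber
    _ ≤ _ := Nat.mul_le_mul_right _ (hB.card_piFinset_le hp.pos (by omega))

lemma powEnergy_elim_mul_pow_le (hj : 1 ≤ j) (hA' : ∀ l, A l ⊆ Icc 1 ((p : ℤ) ^ n)) :
    powEnergy (degs k j) (Sum.elim B A) * p ^ (b * ∑ i ∈ range j, (i + 1)) ≤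
      p ^ (2 * (j * (n - q))) * ((2 * Fintype.card κ * (p ^ n) ^ j / (p ^ (q + b)) ^ (j + 1) + 1) *
        powEnergy (degs k (j + 1)) A) := by
  have differencing := powEnergy_degs_le_mul_powEnergy_degs_succ hj hjk (A := A) (Y := p ^ n)
    (M := p ^ (q + b)) (Nat.one_le_pow _ _ hp.pos)
    (fun l x hx => by
      simpa only [Nat.cast_pow, ← and_assoc] using ⟨mem_Icc.1 (hA' l hx), hA l x hx⟩)
    (by
      rw [Nat.cast_pow]
      exact ((Nat.prime_iff_prime_int.1 hp).irreducible.coprime_iff_not_dvd.2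
        (not_dvd_choose_mul_pow hp hkp hjk.le hc _)).pow_left)
  calc powEnergy (degs k j) (Sum.elim B A) * p ^ (b * ∑ i ∈ range j, (i + 1))
      ≤ powEnergy (degs k j) A * (#(extendablePairs (momentCurve (degs k j)) B A) *
          p ^ (b * ∑ i ∈ range j, (i + 1))) := by
        rw [← mul_assoc]
        exact Nat.mul_le_mul_right _ (tupleEnergy_elim_le_mul_card_extendablePairs _ B A)
    _ ≤ _ := (Nat.mul_le_mul differencing
          (card_extendablePairs_mul_le hp hkp hjk hq hqn hc hB hA)).trans_eq (by
        rw [← pow_add, ← two_mul, mul_comm])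

end MixedEnergy

section ResidueClasses

/-- The integers of `[1, p ^ n]` that are prime to `p` and have residue `c` modulo `p ^ q`. -/
noncomputable def residueClass (p n q : ℕ) (c : ℤ) : Finset ℤ :=
  {x ∈ Icc 1 ((p : ℤ) ^ n) | ¬ (p : ℤ) ∣ x ∧ x % (p : ℤ) ^ q = c}

/-- The residues modulo `p ^ (q + b)` that reduce to `c` modulo `p ^ q`. -/
noncomputable def lifts (p q b : ℕ) (c : ℤ) : Finset ℤ :=
  {c' ∈ Ico 0 ((p : ℤ) ^ (q + b)) | c' % (p : ℤ) ^ q = c}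

/-- The number of solutions of the power sum equations of degrees `degs k j` in `σ` pairs of
variables from `[1, p ^ n]`, prime to `p` and all in one residue class modulo `p ^ q`. -/
noncomputable def classEnergy (k p n j q σ : ℕ) : ℕ :=
  ∑ c ∈ Ico 0 ((p : ℤ) ^ q), powEnergy (degs k j) fun _ : Fin σ => residueClass p n q c

variable {p n q b : ℕ} {c c' x : ℤ}

lemma residueClass_subset_Icc : residueClass p n q c ⊆ Icc 1 ((p : ℤ) ^ n) := filter_subset _ _

lemma dvd_sub_of_mem_residueClass (hx : x ∈ residueClass p n q c) : (p : ℤ) ^ q ∣ x - c :=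
  (mem_filter.1 hx).2.2 ▸ Int.dvd_self_sub_emod

lemma residueClass_eq_empty (hq : 1 ≤ q) (hc : (p : ℤ) ∣ c) : residueClass p n q c = ∅ :=
  eq_empty_of_forall_notMem fun _ hx => (mem_filter.1 hx).2.1
    ((dvd_sub_left hc).1
      ((dvd_pow_self (p : ℤ) (by omega)).trans (dvd_sub_of_mem_residueClass hx)))

lemma emod_pow_add_emod_pow (x : ℤ) : x % (p : ℤ) ^ (q + b) % (p : ℤ) ^ q = x % (p : ℤ) ^ q :=
  Int.emod_emod_of_dvd x (pow_dvd_pow _ (Nat.le_add_right q b))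

lemma emod_mem_Ico (hp : 0 < p) (q : ℕ) (x : ℤ) : x % (p : ℤ) ^ q ∈ Ico 0 ((p : ℤ) ^ q) :=
  have hpq : (0 : ℤ) < (p : ℤ) ^ q := by positivity
  mem_Ico.2 ⟨Int.emod_nonneg _ hpq.ne', Int.emod_lt_of_pos _ hpq⟩

lemma dvd_sub_of_mem_lifts (h : c' ∈ lifts p q b c) : (p : ℤ) ^ q ∣ c' - c :=
  (mem_filter.1 h).2 ▸ Int.dvd_self_sub_emod

lemma card_lifts_le (hp : 0 < p) : #(lifts p q b c) ≤ p ^ b :=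
  card_le_of_forall_dvd_sub (a := 0) (c := c) (M := p ^ q) (by positivity)
    (fun x hx => by simpa [pow_add] using (mem_filter.1 hx).1)
    (fun x hx => by simpa only [Nat.cast_pow] using dvd_sub_of_mem_lifts hx)

lemma sum_lifts {M : Type*} [AddCommMonoid M] (hp : 0 < p) (q b : ℕ) (f : ℤ → M) :
    ∑ c ∈ Ico 0 ((p : ℤ) ^ q), ∑ c' ∈ lifts p q b c, f c' =
      ∑ c ∈ Ico 0 ((p : ℤ) ^ (q + b)), f c :=
  sum_fiberwise_of_maps_to (fun _ _ => emod_mem_Ico hp q _) _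

lemma emod_mem_lifts (hp : 0 < p) (b : ℕ) :
    ∀ x ∈ residueClass p n q c, x % (p : ℤ) ^ (q + b) ∈ lifts p q b c := fun x hx =>
  mem_filter.2 ⟨emod_mem_Ico hp _ x, (emod_pow_add_emod_pow x).trans (mem_filter.1 hx).2.2⟩

lemma filter_residueClass_emod (hc' : c' ∈ lifts p q b c) :
    {x ∈ residueClass p n q c | x % (p : ℤ) ^ (q + b) = c'} = residueClass p n (q + b) c' := by
  rw [residueClass, filter_filter, residueClass]
  refine filter_congr fun x _ => ⟨fun h => ⟨h.1.1, h.2⟩, fun h => ⟨⟨h.1, ?_⟩, h.2⟩⟩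
  rw [← emod_pow_add_emod_pow (b := b), h.2, (mem_filter.1 hc').2]

lemma isSpaced_residueClass {j : ℕ} {β : Fin j → ℤ} (hβ : ∀ l, β l ∈ lifts p q 1 c)
    (hinj : Function.Injective β) (hc' : c' ∈ lifts p q b c) :
    IsSpaced p q n c' fun l => residueClass p n (q + 1) (β l) where
  subset_Icc _ := residueClass_subset_Icc
  dvd_sub_base l x hx := by
    have hx' := (pow_dvd_pow (p : ℤ) q.le_succ).trans (dvd_sub_of_mem_residueClass hx)
    simpa only [sub_add_sub_cancel, sub_sub_sub_cancel_right] using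
      dvd_sub (dvd_add hx' (dvd_sub_of_mem_lifts (hβ l))) (dvd_sub_of_mem_lifts hc')
  dvd_sub l x hx y hy := by
    simpa only [sub_sub_sub_cancel_right] using
      dvd_sub (dvd_sub_of_mem_residueClass hx) (dvd_sub_of_mem_residueClass hy)
  not_dvd_sub l l' hll x hx y hy h := hll <| hinj <| by
    rw [← (mem_filter.1 hx).2.2, ← (mem_filter.1 hy).2.2]
    exact Int.emod_eq_emod_iff_emod_sub_eq_zero.2 (Int.emod_eq_zero_of_dvd h)

end ResidueClasses

section Step

variable {κ : Type*} [Fintype κ] [DecidableEq κ]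

lemma powEnergy_eq_zero {D : Finset ℕ} {A : κ → Finset ℤ} (l : κ) (h : A l = ∅) :
    powEnergy D A = 0 := by
  rw [powEnergy, tupleEnergy, diffCount_zero, Fintype.piFinset_eq_empty.2 ⟨l, h⟩]
  simp only [product_empty, filter_empty, card_empty]

lemma two_mul_mul_pow_div_le {p n j Q τ : ℕ} (hp : 0 < p) (h : n * j ≤ Q * (j + 1)) :
    2 * τ * (p ^ n) ^ j / (p ^ Q) ^ (j + 1) ≤ 2 * τ := by
  refine Nat.div_le_of_le_mul ?_
  rw [mul_comm, ← pow_mul, ← pow_mul]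
  exact Nat.mul_le_mul_right _ (Nat.pow_le_pow_right hp h)

variable {p k j q b n τ : ℕ} {c : ℤ} {β : Fin j → ℤ} (hp : p.Prime) (hkp : k < p) (hj : 1 ≤ j)
  (hjk : j < k) (hq : 1 ≤ q) (hqn : q + j * b ≤ n) (hτ : 1 ≤ τ) (hbig : n * j ≤ (q + b) * (j + 1))

include hp hkp hj hjk hq hqn hτ hbig

lemma powEnergy_elim_lift_mul_pow_le (hβ : ∀ l, β l ∈ lifts p q 1 c)
    (hinj : Function.Injective β) {c' : ℤ} (hc' : c' ∈ lifts p q b c) :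
    powEnergy (degs k j) (Sum.elim (fun l => residueClass p n (q + 1) (β l))
        fun _ : Fin τ => residueClass p n (q + b) c') * p ^ (b * ∑ i ∈ range j, (i + 1)) ≤
      p ^ (2 * (j * (n - q))) * ((2 * τ + 1) *
        powEnergy (degs k (j + 1)) fun _ : Fin τ => residueClass p n (q + b) c') := by
  by_cases hpc : (p : ℤ) ∣ c'
  · rw [powEnergy_eq_zero (Sum.inr ⟨0, hτ⟩) (residueClass_eq_empty (by omega) hpc), zero_mul]
    exact Nat.zero_le _
  · refine (powEnergy_elim_mul_pow_le hp hkp hjk hq hqn hpc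
      (isSpaced_residueClass hβ hinj hc') (fun _ x hx => dvd_sub_of_mem_residueClass hx) hj
      (fun _ => residueClass_subset_Icc)).trans ?_
    rw [Fintype.card_fin]
    gcongr
    exact two_mul_mul_pow_div_le hp.pos hbig

lemma powEnergy_elim_residueClass_mul_pow_le (hβ : ∀ l, β l ∈ lifts p q 1 c)
    (hinj : Function.Injective β) :
    powEnergy (degs k j) (Sum.elim (fun l => residueClass p n (q + 1) (β l))
        fun _ : Fin τ => residueClass p n q c) * p ^ (b * ∑ i ∈ range j, (i + 1)) ≤
      (p ^ b) ^ (2 * τ - 1) * ∑ c' ∈ lifts p q b c, p ^ (2 * (j * (n - q))) * ((2 * τ + 1) *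
        powEnergy (degs k (j + 1)) fun _ : Fin τ => residueClass p n (q + b) c') := by
  refine (Nat.mul_le_mul_right _ (tupleEnergy_elim_le_sum_fiber _ (residueClass p n q c)
    (emod_mem_lifts hp.pos b) _ (by omega))).trans ?_
  rw [mul_assoc, sum_mul]
  refine Nat.mul_le_mul (Nat.pow_le_pow_left (card_lifts_le hp.pos) _)
    (sum_le_sum fun c' hc' => ?_)
  rw [filter_residueClass_emod hc']
  exact powEnergy_elim_lift_mul_pow_le hp hkp hj hjk hq hqn hτ hbig hβ hinj hc'

lemma powEnergy_residueClass_mul_pow_le (c : ℤ) :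
    powEnergy (degs k j) (fun _ : Fin (j + τ) => residueClass p n q c) *
        p ^ (b * ∑ i ∈ range j, (i + 1)) ≤
      (2 * j) ^ (2 * (j + τ)) * (∑ c' ∈ lifts p q 1 c, powEnergy (degs k j)
        fun _ : Fin (j + τ) => residueClass p n (q + 1) c') * p ^ (b * ∑ i ∈ range j, (i + 1)) +
      (2 * p) ^ (2 * j) * (p ^ j * ((p ^ b) ^ (2 * τ - 1) * ∑ c' ∈ lifts p q b c,
        p ^ (2 * (j * (n - q))) * ((2 * τ + 1) *
          powEnergy (degs k (j + 1)) fun _ : Fin τ => residueClass p n (q + b) c'))) := by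
  have card_lifts : #(lifts p q 1 c) ≤ p := (card_lifts_le hp.pos).trans_eq (pow_one p)
  have card_broad : #{β ∈ Fintype.piFinset (fun _ : Fin j => lifts p q 1 c) |
      Function.Injective β} ≤ p ^ j := by
    refine (card_filter_le _ _).trans ?_
    rw [Fintype.card_piFinset_const]
    exact Nat.pow_le_pow_left card_lifts j
  refine (Nat.mul_le_mul_right _ (tupleEnergy_le_narrow_add_broad _ (residueClass p n q c)
    (emod_mem_lifts hp.pos 1) (by omega : j ≠ 0) τ)).trans ?_
  rw [add_mul]
  refine Nat.add_le_add (Nat.mul_le_mul_right _ (Nat.mul_le_mul_left _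
    (sum_le_sum fun c' hc' => ?_))) ?_
  · rw [filter_residueClass_emod hc', powEnergy]
  rw [mul_assoc, sum_mul]
  refine Nat.mul_le_mul (by gcongr) ((sum_le_card_nsmul _ _ _ fun β hβ => ?_).trans
    (Nat.mul_le_mul_right _ card_broad))
  obtain ⟨hβ, hinj⟩ := mem_filter.1 hβ
  rw [Fintype.mem_piFinset] at hβ
  simp only [filter_residueClass_emod (hβ _)]
  exact powEnergy_elim_residueClass_mul_pow_le hp hkp hj hjk hq hqn hτ hbig hβ hinj

lemma classEnergy_mul_pow_le :
    classEnergy k p n j q (j + τ) * p ^ (b * ∑ i ∈ range j, (i + 1)) ≤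
      (2 * j) ^ (2 * (j + τ)) * classEnergy k p n j (q + 1) (j + τ) *
          p ^ (b * ∑ i ∈ range j, (i + 1)) +
        ((2 * p) ^ (2 * j) * p ^ j * (2 * τ + 1)) * p ^ (b * (2 * τ - 1) + 2 * (j * (n - q))) *
          classEnergy k p n (j + 1) (q + b) τ := by
  rw [classEnergy, sum_mul]
  refine (sum_le_sum fun c _ =>
    powEnergy_residueClass_mul_pow_le hp hkp hj hjk hq hqn hτ hbig c).trans_eq ?_
  simp only [sum_add_distrib, ← mul_sum, ← sum_mul]
  rw [sum_lifts hp.pos q 1, sum_lifts hp.pos q b, ← classEnergy, ← classEnergy, pow_add, ← pow_mul]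
  ring

end Step

section ClassEnergy

variable {p k n j q τ : ℕ}

lemma sum_powEnergy_fiber_le {ρ : Type*} [DecidableEq ρ] (D : Finset ℕ) (hτ : 1 ≤ τ)
    (A : Finset ℤ) (cls : ℤ → ρ) (R : Finset ρ) :
    ∑ b ∈ R, powEnergy D (fun _ : Fin τ => {x ∈ A | cls x = b}) ≤
      powEnergy D (fun _ : Fin τ => A) := by
  simp only [powEnergy_eq_card_powSumPairs, powSumPairs]
  rw [← card_biUnion]
  · refine card_le_card fun z hz => ?_
    simp only [mem_biUnion, mem_filter, mem_product, Fintype.mem_piFinset] at hz ⊢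
    obtain ⟨b, _, ⟨hx, hy⟩, hxy⟩ := hz
    exact ⟨⟨fun l => (hx l).1, fun l => (hy l).1⟩, hxy⟩
  · intro b _ b' _ hbb
    refine disjoint_left.2 fun z hz hz' => hbb ?_
    simp only [mem_filter, mem_product, Fintype.mem_piFinset] at hz hz'
    exact (hz.1.1 ⟨0, hτ⟩).2.symm.trans (hz'.1.1 ⟨0, hτ⟩).2

lemma classEnergy_antitone (hp : 0 < p) (hτ : 1 ≤ τ) :
    Antitone fun q => classEnergy k p n j q τ := by
  refine antitone_nat_of_succ_le fun q => ?_
  rw [classEnergy, classEnergy, ← sum_lifts hp q 1]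
  refine sum_le_sum fun c _ => le_trans (sum_le_sum fun c' hc' => ?_) (sum_powEnergy_fiber_le _ hτ _
    (· % (p : ℤ) ^ (q + 1)) (lifts p q 1 c))
  rw [filter_residueClass_emod hc']

lemma classEnergy_le_pow_mul (hp : 0 < p) (b : ℕ) (hτ : 1 ≤ τ) :
    classEnergy k p n j q τ ≤ (p ^ b) ^ (2 * τ - 1) * classEnergy k p n j (q + b) τ := by
  rw [classEnergy, classEnergy, ← sum_lifts hp q b, mul_sum]
  refine sum_le_sum fun c _ => (tupleEnergy_const_le_sum_fiber _ (residueClass p n q c)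
    (emod_mem_lifts hp b) (by omega : τ ≠ 0)).trans (Nat.mul_le_mul
      (Nat.pow_le_pow_left (card_lifts_le hp) _) (sum_le_sum fun c' hc' => ?_))
  rw [filter_residueClass_emod hc', powEnergy]

lemma powEnergy_le_of_card_le_one (D D' : Finset ℕ) {σ : ℕ} (hσ : 1 ≤ σ) {A : Finset ℤ}
    (hA : #A ≤ 1) : powEnergy D (fun _ : Fin σ => A) ≤ powEnergy D' (fun _ : Fin τ => A) := by
  rcases A.eq_empty_or_nonempty with rfl | ⟨a, ha⟩
  · rw [powEnergy_eq_zero (⟨0, hσ⟩ : Fin σ) rfl]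
    exact Nat.zero_le _
  · rw [powEnergy_eq_card_powSumPairs, powEnergy_eq_card_powSumPairs]
    calc #(powSumPairs D fun _ : Fin σ => A) ≤ 1 := by
          refine (card_filter_le _ _).trans ?_
          rw [card_product, Fintype.card_piFinset_const]
          exact mul_le_one₀ (pow_le_one₀ (Nat.zero_le _) hA) (Nat.zero_le _)
            (pow_le_one₀ (Nat.zero_le _) hA)
      _ ≤ _ := card_pos.2 ⟨(fun _ => a, fun _ => a), by simp [powSumPairs, ha]⟩

lemma classEnergy_self_le (hp : 0 < p) (k n j j' τ : ℕ) {σ : ℕ} (hσ : 1 ≤ σ) :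
    classEnergy k p n j n σ ≤ classEnergy k p n j' n τ := by
  refine sum_le_sum fun c _ => powEnergy_le_of_card_le_one _ _ hσ ?_
  refine card_le_of_forall_dvd_sub (a := 1) (c := c) (M := p ^ n) (by positivity)
    (fun x hx => ?_) (fun x hx => by simpa only [Nat.cast_pow] using dvd_sub_of_mem_residueClass hx)
  have hx := mem_Icc.1 (residueClass_subset_Icc hx)
  push_cast
  constructor <;> linarith [hx.1, hx.2]

end ClassEnergy

section Iteration

lemma le_mul_pow_of_le_mul_succ_add {f : ℕ → ℕ} {C B n q₀ : ℕ} (hf : f n ≤ B) (hq₀ : q₀ ≤ n)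
    (hrec : ∀ q, q₀ ≤ q → q < n → f q ≤ C * f (q + 1) + B) :
    f q₀ ≤ B * (C + 1) ^ (n - q₀) := by
  refine Nat.decreasingInduction' (P := fun q => f q ≤ B * (C + 1) ^ (n - q))
    (fun q hqn hq ih => ?_) hq₀ (by simpa using hf)
  calc f q ≤ C * f (q + 1) + B := hrec q hq hqn
    _ ≤ C * (B * (C + 1) ^ (n - (q + 1))) + B * (C + 1) ^ (n - (q + 1)) := by
      gcongr
      exact Nat.le_mul_of_pos_right _ (by positivity)
    _ = B * (C + 1) ^ (n - q) := by
      rw [show n - q = n - (q + 1) + 1 by omega]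
      ring

lemma two_mul_sum_range_succ (j : ℕ) : 2 * ∑ i ∈ range j, (i + 1) = j * (j + 1) := by
  have gauss := Finset.sum_range_id_mul_two (j + 1)
  rw [sum_range_succ', Nat.add_sub_cancel] at gauss
  linarith

/-- The difference of classes from `p ^ q` to `p ^ (q + b)` must not exceed `n`, but has to reach
the modulus at which the differencing loses nothing; `b = a` serves until `q` is within `j * a` of
`n`, and `b = (n - q) / j` from there on. -/
lemma exists_differencing_step {j a n q : ℕ} (t T : ℕ) (hj : 1 ≤ j) (hT : 2 * T = j * (j + 1))
    (hn : n = j * (j + 1) * a) (hq : q ≤ n) (hqn : n ≤ q + (j + 1) * a) :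
    ∃ b, q + j * b ≤ n ∧ j ^ 2 * a ≤ q + b ∧
      b * t + 2 * (j * (n - q)) ≤ a * t + 3 * a * T + 2 * j ^ 2 + b * T := by
  obtain ⟨l, hl⟩ := Nat.exists_eq_add_of_le hq
  have hn' : n = j ^ 2 * a + j * a := by rw [hn]; ring
  have hja : (j + 1) * a = j * a + a := by ring
  rw [Nat.sub_eq_of_eq_add' hl]
  rcases le_or_gt (j * a) l with h | h
  · refine ⟨a, by omega, by omega, ?_⟩
    have hl' : 2 * (j * l) ≤ 2 * (j * ((j + 1) * a)) := by gcongr; omega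
    have hT' : 2 * (j * ((j + 1) * a)) = 3 * a * T + a * T := by
      linear_combination (2 * a) * hT.symm
    omega
  · have hdiv : j * (l / j) ≤ l := Nat.mul_div_le l j
    have hmod : l < j * (l / j) + j := by
      have := Nat.div_add_mod l j
      have := Nat.mod_lt l hj
      omega
    have hba : l / j ≤ a := Nat.div_le_of_le_mul h.le
    generalize l / j = b at *
    refine ⟨b, by omega, by omega, ?_⟩
    have hbt : b * t ≤ a * t := Nat.mul_le_mul_right _ hba
    nlinarith

variable {p k j τ : ℕ} (hp : p.Prime) (hkp : k < p) (hj : 1 ≤ j) (hjk : j < k) (hτ : 1 ≤ τ)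

include hp hkp hj hjk hτ

lemma classEnergy_le_mul_classEnergy_succ {q₀ a n : ℕ} (hn : n = j * (j + 1) * a) (hq : 1 ≤ q₀)
    (hq₀ : q₀ ≤ n) (hqn : n ≤ q₀ + (j + 1) * a) :
    classEnergy k p n j q₀ (j + τ) ≤
      (((2 * p) ^ (2 * j) * p ^ j * (2 * τ + 1)) *
          p ^ (a * (2 * τ - 1) + 3 * a * (∑ i ∈ range j, (i + 1)) + 2 * j ^ 2) *
          classEnergy k p n (j + 1) (j ^ 2 * a) τ) *
        ((2 * j) ^ (2 * (j + τ)) + 1) ^ (n - q₀) := by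
  have hp0 := hp.pos
  set T := ∑ i ∈ range j, (i + 1)
  have hja : j ^ 2 * a ≤ n := by rw [hn]; gcongr; nlinarith
  refine le_mul_pow_of_le_mul_succ_add (f := fun q => classEnergy k p n j q (j + τ)) ?_ hq₀
    fun q hq₀q hqn' => ?_
  · exact ((classEnergy_self_le hp0 k n j (j + 1) τ (by omega)).trans
      (classEnergy_antitone hp0 hτ hja)).trans (Nat.le_mul_of_pos_left _ (by positivity))
  · obtain ⟨b, hb, hja, hexp⟩ := exists_differencing_step (2 * τ - 1) T hj
      (two_mul_sum_range_succ j) hn hqn'.le (by omega)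
    have step := classEnergy_mul_pow_le hp hkp hj hjk (by omega : 1 ≤ q) hb hτ (by
      calc n * j = j ^ 2 * a * (j + 1) := by rw [hn]; ring
        _ ≤ _ := Nat.mul_le_mul_right _ hja)
    refine Nat.le_of_mul_le_mul_right (step.trans ?_) (pow_pos hp0 (b * T))
    rw [add_mul]
    refine Nat.add_le_add_left ?_ _
    calc _ ≤ (2 * p) ^ (2 * j) * p ^ j * (2 * τ + 1) *
          p ^ (a * (2 * τ - 1) + 3 * a * T + 2 * j ^ 2 + b * T) *
          classEnergy k p n (j + 1) (j ^ 2 * a) τ := by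
          gcongr
          exact classEnergy_antitone hp0 hτ hja
      _ = _ := by rw [pow_add _ _ (b * T)]; ring

lemma classEnergy_sub_div_le {a n : ℕ} (hn : n = j * (j + 1) * a) (ha : 1 ≤ a) :
    classEnergy k p n j (n - n / j) (j + τ) ≤
      p ^ (2 * (j + τ) - 1) * ((2 * p) ^ (2 * j) * p ^ j * (2 * τ + 1) * p ^ (2 * j ^ 2)) *
        ((2 * j) ^ (2 * (j + τ)) + 1) ^ n *
        p ^ (a * (2 * τ - 1) + 3 * a * ∑ i ∈ range j, (i + 1)) *
        classEnergy k p n (j + 1) (j ^ 2 * a) τ := by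
  have hp0 := hp.pos
  have hdiv : n / j = (j + 1) * a := by
    rw [hn, mul_assoc, Nat.mul_div_cancel_left _ hj]
  have hn1 : 1 ≤ n := hn ▸ Nat.mul_pos (Nat.mul_pos hj j.succ_pos) ha
  have raise : classEnergy k p n j (n - n / j) (j + τ) ≤
      p ^ (2 * (j + τ) - 1) * classEnergy k p n j (max 1 (n - n / j)) (j + τ) := by
    rcases Nat.eq_zero_or_pos (n - n / j) with h | h
    · rw [h]
      simpa using classEnergy_le_pow_mul hp0 1 (q := 0) (by omega : 1 ≤ j + τ)
    · rw [max_eq_right h]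
      exact Nat.le_mul_of_pos_left _ (by positivity)
  have step := classEnergy_le_mul_classEnergy_succ hp hkp hj hjk hτ hn (le_max_left 1 (n - n / j))
    (max_le hn1 (Nat.sub_le _ _)) (by omega)
  have hpow : ((2 * j) ^ (2 * (j + τ)) + 1) ^ (n - max 1 (n - n / j)) ≤
      ((2 * j) ^ (2 * (j + τ)) + 1) ^ n := Nat.pow_le_pow_right (by omega) (Nat.sub_le _ _)
  refine (raise.trans (Nat.mul_le_mul_left _ (step.trans
    (Nat.mul_le_mul_left _ hpow)))).trans_eq ?_
  rw [pow_add p _ (2 * j ^ 2)]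
  ring

omit hp hkp hjk hτ in
lemma iterate_exponent_identity (a t T : ℕ) :
    (2 * T + t) * (j ^ 2 * a - a) + (j - 1) * (a * T) + (a * t + 3 * a * T) =
      (2 * T + t) * (j ^ 2 * a) + j * (a * T) := by
  obtain ⟨i, rfl⟩ := Nat.exists_eq_add_of_le' hj
  obtain ⟨w, hw⟩ := Nat.exists_eq_add_of_le (Nat.le_mul_of_pos_left a (pow_pos hj 2))
  rw [hw, Nat.add_sub_cancel_left, Nat.add_sub_cancel]
  ring

end Iteration

lemma exists_classEnergy_iterate (k s : ℕ) : ∀ j : ℕ, 1 ≤ j → j < k → j * (j - 1) / 2 < s →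
    ∃ K : ℕ, 1 ≤ K ∧ ∀ p : ℕ, p.Prime → k < p → ∃ C : ℕ, 1 ≤ C ∧ ∀ n : ℕ, 1 ≤ n → 2 ∣ n →
      (∀ i, 1 ≤ i → i < j → i * (i + 1) ∣ n) →
      classEnergy k p n 1 0 s ≤ C * K ^ n * p ^ ((2 * s - 1) * (n - n / j) + (j - 1) * (n / 2)) *
        classEnergy k p n j (n - n / j) (s - j * (j - 1) / 2) := by
  intro j hj
  induction j, hj using Nat.le_induction with
  | base => exact fun _ _ => ⟨1, le_rfl, fun p _ _ => ⟨1, le_rfl, fun n _ _ _ => by simp⟩⟩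
  | succ j hj ih =>
    intro hjk hjs
    rw [Nat.triangle_succ] at hjs
    obtain ⟨K, hK, ih⟩ := ih (by omega) (by omega)
    obtain ⟨τ, rfl⟩ := Nat.exists_eq_add_of_le hjs.le
    refine ⟨K * ((2 * j) ^ (2 * (j + τ)) + 1), Nat.mul_pos hK (by positivity),
      fun p hp hkp => ?_⟩
    obtain ⟨C, hC, ih⟩ := ih p hp hkp
    have hp0 := hp.pos
    refine ⟨C * (p ^ (2 * (j + τ) - 1) * ((2 * p) ^ (2 * j) * p ^ j * (2 * τ + 1) *
      p ^ (2 * j ^ 2))), Nat.mul_pos hC (by positivity), fun n hn hn2 hdvd => ?_⟩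
    obtain ⟨a, ha⟩ := hdvd j hj (by omega)
    have ha1 : 1 ≤ a := Nat.one_le_iff_ne_zero.2 fun h => by simp [ha, h] at hn
    set T := ∑ i ∈ range j, (i + 1)
    have h2T : 2 * T = j * (j + 1) := two_mul_sum_range_succ j
    have hn_half : n / 2 = a * T := by
      rw [ha, ← h2T, mul_assoc, Nat.mul_div_cancel_left _ two_pos, mul_comm]
    have hn_div : n - n / j = j ^ 2 * a - a := by
      rw [ha, mul_assoc, Nat.mul_div_cancel_left _ hj, ← mul_assoc, mul_add, add_mul, ← sq,
        add_mul, mul_one, one_mul, Nat.sub_add_eq, add_comm, Nat.add_sub_cancel_left]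
    have hn_div' : n - n / (j + 1) = j ^ 2 * a := by
      rw [ha, mul_right_comm, Nat.mul_div_cancel _ j.succ_pos, mul_add, mul_one,
        Nat.add_sub_cancel, mul_right_comm, sq]
    have hs : 2 * (j * (j - 1) / 2 + j + τ) - 1 = 2 * T + (2 * τ - 1) := by
      have := Nat.triangle_succ j
      rw [Nat.add_sub_cancel, mul_comm, ← h2T, Nat.mul_div_cancel_left _ two_pos] at this
      omega
    have step := classEnergy_sub_div_le hp hkp hj (by omega) (by omega : 1 ≤ τ) ha ha1
    have start := ih n hn hn2 fun i hi hij => hdvd i hi (by omega)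
    rw [show j * (j - 1) / 2 + j + τ - j * (j - 1) / 2 = j + τ by omega] at start
    refine (start.trans (Nat.mul_le_mul_left _ step)).trans_eq ?_
    rw [Nat.triangle_succ, Nat.add_sub_cancel_left, hn_div', hs, hn_half, hn_div,
      Nat.add_sub_cancel, ← iterate_exponent_identity hj, pow_add p (_ + _) (_ + _), mul_pow K]
    ring

/-! ### A large sieve for arithmetic progressions of lines -/

section Bombieri

variable {𝕜 E ι : Type*} [RCLike 𝕜] [NormedAddCommGroup E] [InnerProductSpace 𝕜 E]

lemma norm_sum_smul_sq_le (s : Finset ι) (e : ι → E) (c : ι → 𝕜) {R : ℝ}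
    (hR : ∀ i ∈ s, ∑ j ∈ s, ‖inner 𝕜 (e i) (e j)‖ ≤ R) :
    ‖∑ i ∈ s, c i • e i‖ ^ 2 ≤ R * ∑ i ∈ s, ‖c i‖ ^ 2 := by
  have amgm : ∀ i j, ‖inner 𝕜 (c i • e i) (c j • e j)‖ ≤
      ‖c i‖ ^ 2 * ‖inner 𝕜 (e i) (e j)‖ / 2 + ‖c j‖ ^ 2 * ‖inner 𝕜 (e j) (e i)‖ / 2 :=
    fun i j => by
      rw [inner_smul_left, inner_smul_right, norm_mul, norm_mul, RCLike.norm_conj,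
        norm_inner_symm (e j) (e i)]
      nlinarith [mul_nonneg (norm_nonneg (inner 𝕜 (e i) (e j))) (sq_nonneg (‖c i‖ - ‖c j‖))]
  calc ‖∑ i ∈ s, c i • e i‖ ^ 2
      = ‖inner 𝕜 (∑ i ∈ s, c i • e i) (∑ i ∈ s, c i • e i)‖ := by
        rw [inner_self_eq_norm_sq_to_K]; simp
    _ ≤ ∑ i ∈ s, ∑ j ∈ s, ‖inner 𝕜 (c i • e i) (c j • e j)‖ := by
      rw [sum_inner]
      refine (norm_sum_le _ _).trans (sum_le_sum fun i _ => ?_)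
      rw [inner_sum]
      exact norm_sum_le _ _
    _ ≤ ∑ i ∈ s, ∑ j ∈ s, (‖c i‖ ^ 2 * ‖inner 𝕜 (e i) (e j)‖ / 2 +
          ‖c j‖ ^ 2 * ‖inner 𝕜 (e j) (e i)‖ / 2) :=
      sum_le_sum fun i _ => sum_le_sum fun j _ => amgm i j
    _ = ∑ i ∈ s, ‖c i‖ ^ 2 * ∑ j ∈ s, ‖inner 𝕜 (e i) (e j)‖ := by
      simp only [sum_add_distrib]
      rw [sum_comm (f := fun i j => ‖c j‖ ^ 2 * ‖inner 𝕜 (e j) (e i)‖ / 2)]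
      simp only [← sum_div, ← mul_sum, add_halves]
    _ ≤ R * ∑ i ∈ s, ‖c i‖ ^ 2 := by
      rw [mul_sum]
      simp only [mul_comm R]
      exact sum_le_sum fun i hi => mul_le_mul_of_nonneg_left (hR i hi) (sq_nonneg _)

/-- Bombieri's generalisation of Bessel's inequality. -/
lemma sum_norm_inner_sq_le (s : Finset ι) (e : ι → E) (v : E) {R : ℝ} (hR0 : 0 ≤ R)
    (hR : ∀ i ∈ s, ∑ j ∈ s, ‖inner 𝕜 (e i) (e j)‖ ≤ R) :
    ∑ i ∈ s, ‖inner 𝕜 (e i) v‖ ^ 2 ≤ R * ‖v‖ ^ 2 := by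
  set S := ∑ i ∈ s, ‖inner 𝕜 (e i) v‖ ^ 2
  set u := ∑ i ∈ s, inner 𝕜 (e i) v • e i
  have inner_u : inner 𝕜 u v = (S : 𝕜) := by
    simp only [u, S, sum_inner, inner_smul_left, RCLike.ofReal_sum, RCLike.ofReal_pow,
      RCLike.conj_mul]
  have cauchy : S * S ≤ S * (R * ‖v‖ ^ 2) := by
    calc S * S = ‖inner 𝕜 u v‖ ^ 2 := by rw [inner_u, RCLike.norm_ofReal, sq_abs, sq]
      _ ≤ (‖u‖ * ‖v‖) ^ 2 := by gcongr; exact norm_inner_le_norm u v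
      _ = ‖u‖ ^ 2 * ‖v‖ ^ 2 := mul_pow _ _ _
      _ ≤ R * S * ‖v‖ ^ 2 := by gcongr; exact norm_sum_smul_sq_le s e _ hR
      _ = S * (R * ‖v‖ ^ 2) := by ring
  rcases (sum_nonneg fun _ _ => sq_nonneg _ : 0 ≤ S).eq_or_lt with h | h
  · exact h.symm.trans_le (by positivity)
  · exact le_of_mul_le_mul_left cauchy h

lemma sum_norm_sum_mul_sq_le {τ : Type*} (T : Finset τ) (s : Finset ι) (e : ι → τ → 𝕜) (v : τ → 𝕜)
    {R : ℝ} (hR0 : 0 ≤ R)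
    (hR : ∀ i ∈ s, ∑ j ∈ s, ‖∑ t ∈ T, e i t * (starRingEnd 𝕜) (e j t)‖ ≤ R) :
    ∑ i ∈ s, ‖∑ t ∈ T, e i t * v t‖ ^ 2 ≤ R * ∑ t ∈ T, ‖v t‖ ^ 2 := by
  let E (i : ι) : EuclideanSpace 𝕜 T := WithLp.toLp 2 fun t => (starRingEnd 𝕜) (e i t)
  let V : EuclideanSpace 𝕜 T := WithLp.toLp 2 fun t => v t
  have inner_V : ∀ i, inner 𝕜 (E i) V = ∑ t ∈ T, e i t * v t := fun i => by
    rw [PiLp.inner_apply, ← sum_coe_sort T]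
    simp only [E, V, RCLike.inner_apply', RCLike.conj_conj]
  have inner_E : ∀ i j, inner 𝕜 (E i) (E j) = ∑ t ∈ T, e i t * (starRingEnd 𝕜) (e j t) :=
    fun i j => by
      rw [PiLp.inner_apply, ← sum_coe_sort T]
      simp only [E, RCLike.inner_apply', RCLike.conj_conj]
  have norm_V : ‖V‖ ^ 2 = ∑ t ∈ T, ‖v t‖ ^ 2 := by
    rw [EuclideanSpace.norm_sq_eq, ← sum_coe_sort T]
  simp only [← inner_E] at hR
  simpa only [inner_V, norm_V] using sum_norm_inner_sq_le s E V hR0 hR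

end Bombieri

section GeometricSums

lemma sum_product_range_two_mul_ite {R : Type*} [CommSemiring R] (B : ℕ) (F : ℕ → R) :
    ∑ t ∈ range (2 * B) ×ˢ range (2 * B),
        (if t.2 < B ∧ t.2 ≤ t.1 ∧ t.1 < t.2 + B then F (t.1 - t.2) else 0) =
      B * ∑ t ∈ range B, F t := by
  have e : (B : R) * ∑ t ∈ range B, F t = ∑ t ∈ range B ×ˢ range B, F t.1 := by
    rw [sum_product_right]
    simp only [sum_const, card_range, nsmul_eq_mul]
  rw [e, ← sum_filter]
  refine sum_nbij' (fun t => (t.1 - t.2, t.2)) (fun t => (t.1 + t.2, t.2)) ?_ ?_ ?_ ?_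
    fun _ _ => rfl
  all_goals
    simp only [mem_filter, mem_product, mem_range, Prod.forall, Prod.mk.injEq, and_true]
    omega

variable {ω : ℂ}

lemma conj_zpow_of_norm_eq_one (hω : ‖ω‖ = 1) (n : ℤ) :
    (starRingEnd ℂ) (ω ^ n) = ω ^ (-n) := by
  rw [map_zpow₀, zpow_neg, ← inv_zpow, Complex.inv_eq_conj hω]

/-- The Fejér kernel as a double sum. -/
lemma sum_zpow_mul_sub (hω : ‖ω‖ = 1) (d : ℤ) (B : ℕ) :
    ∑ t ∈ range B ×ˢ range B, ω ^ (d * ((t.1 : ℤ) - t.2)) =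
      ((‖∑ t ∈ range B, (ω ^ d) ^ t‖ ^ 2 : ℝ) : ℂ) := by
  have h0 : ω ≠ 0 := norm_ne_zero_iff.1 (hω ▸ one_ne_zero)
  push_cast
  rw [← Complex.mul_conj', map_sum, sum_mul_sum, sum_product]
  refine sum_congr rfl fun t _ => sum_congr rfl fun t' _ => ?_
  rw [← zpow_natCast, ← zpow_natCast, ← zpow_mul, ← zpow_mul, conj_zpow_of_norm_eq_one hω,
    ← zpow_add₀ h0, mul_sub, sub_eq_add_neg]

lemma sum_comp_sub_le_sum_Icc {G : ℤ → ℝ} (hG : ∀ d, 0 ≤ G d) {M : Finset ℤ} {X : ℤ}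
    (hM : ∀ m ∈ M, ∀ m' ∈ M, |m - m'| ≤ X) {m : ℤ} (hm : m ∈ M) :
    ∑ m' ∈ M, G (m - m') ≤ ∑ d ∈ Icc (-X) X, G d := by
  rw [← sum_image (g := fun m' => m - m') fun x _ y _ h => sub_right_injective h]
  exact sum_le_sum_of_subset_of_nonneg
    (image_subset_iff.2 fun m' hm' => mem_Icc.2 (abs_le.1 (hM m hm m' hm'))) fun _ _ _ => hG _

/-- Bombieri's inequality is applied to the vectors `ω ^ (m (t - t'))` indexed by pairs `(t, t')`
in `[0, 2B)²`; pairing them with the function `z ^ (t - t')` supported on `t' < B` and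
`t' ≤ t < t' + B` repeats each geometric sum `B` times. -/
lemma sum_norm_geom_sq_le {z : ℂ} (hz : ‖z‖ = 1) (hω : ‖ω‖ = 1) {M : Finset ℤ} {X : ℤ}
    (hM : ∀ m ∈ M, ∀ m' ∈ M, |m - m'| ≤ X) (B : ℕ) :
    ∑ m ∈ M, ‖∑ t ∈ range B, (z * ω ^ m) ^ t‖ ^ 2 ≤
      ∑ d ∈ Icc (-X) X, ‖∑ t ∈ range (2 * B), (ω ^ d) ^ t‖ ^ 2 := by
  rcases Nat.eq_zero_or_pos B with rfl | hB
  · simp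
  have h0 : ω ≠ 0 := norm_ne_zero_iff.1 (hω ▸ one_ne_zero)
  let e (m : ℤ) (t : ℕ × ℕ) : ℂ := ω ^ (m * ((t.1 : ℤ) - t.2))
  let v (t : ℕ × ℕ) : ℂ := if t.2 < B ∧ t.2 ≤ t.1 ∧ t.1 < t.2 + B then z ^ (t.1 - t.2) else 0
  have norm_v : ∑ t ∈ range (2 * B) ×ˢ range (2 * B), ‖v t‖ ^ 2 = (B : ℝ) ^ 2 := by
    simpa [v, apply_ite, hz, sq] using sum_product_range_two_mul_ite B fun _ => (1 : ℝ)
  have inner_v : ∀ m, ∑ t ∈ range (2 * B) ×ˢ range (2 * B), e m t * v t =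
      B * ∑ t ∈ range B, (z * ω ^ m) ^ t := fun m => by
    rw [← sum_product_range_two_mul_ite]
    refine sum_congr rfl fun t _ => ?_
    simp only [e, v, mul_ite, mul_zero]
    refine if_ctx_congr Iff.rfl (fun h => ?_) fun _ => rfl
    rw [mul_pow, ← zpow_natCast (ω ^ m), ← zpow_mul, Nat.cast_sub h.2.1, mul_comm]
  have inner_e : ∀ m m',
      ‖∑ t ∈ range (2 * B) ×ˢ range (2 * B), e m t * (starRingEnd ℂ) (e m' t)‖ =
        ‖∑ t ∈ range (2 * B), (ω ^ (m - m')) ^ t‖ ^ 2 := fun m m' => by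
    simp only [e, conj_zpow_of_norm_eq_one hω, ← zpow_add₀ h0, ← sub_eq_add_neg, ← sub_mul]
    rw [sum_zpow_mul_sub hω, Complex.norm_real, Real.norm_of_nonneg (sq_nonneg _)]
  have sieve := sum_norm_sum_mul_sq_le (range (2 * B) ×ˢ range (2 * B)) M e v
    (sum_nonneg fun d (_ : d ∈ Icc (-X) X) => sq_nonneg ‖∑ t ∈ range (2 * B), (ω ^ d) ^ t‖)
    fun m hm => by
      simp only [inner_e]
      exact sum_comp_sub_le_sum_Icc (G := fun d => ‖∑ t ∈ range (2 * B), (ω ^ d) ^ t‖ ^ 2)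
        (fun _ => sq_nonneg _) hM hm
  have hB2 : (0 : ℝ) < (B : ℝ) ^ 2 := pow_pos (Nat.cast_pos.2 hB) 2
  rw [norm_v, mul_comm _ ((B : ℝ) ^ 2)] at sieve
  simp only [inner_v, norm_mul, RCLike.norm_natCast, mul_pow (B : ℝ), ← mul_sum] at sieve
  exact le_of_mul_le_mul_left sieve hB2

end GeometricSums

section ShiftEnergy

variable {α G : Type*} [AddCommGroup G]

lemma sum_addChar_sub_nsmul (χ : AddChar G ℂ) (S : Finset α) (f : α → G) (w : G) (B : ℕ) :
    ∑ a ∈ S ×ˢ range B, χ (f a.1 - a.2 • w) =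
      (∑ a ∈ S, χ (f a)) * ∑ t ∈ range B, χ (-w) ^ t := by
  simp only [sum_mul_sum, sum_product, sub_eq_add_neg, ← smul_neg, AddChar.map_add_eq_mul,
    AddChar.map_nsmul_eq_pow]

variable [DecidableEq G]

/-- The number of solutions of `f a - t • w = f a' - t' • w` with `a, a' ∈ S` and
`0 ≤ t, t' < B`, the energy of the family `f` shifted along the line spanned by `w`. -/
def shiftEnergy (S : Finset α) (f : α → G) (w : G) (B : ℕ) : ℕ :=
  diffCount (S ×ˢ range B) (fun a => f a.1 - a.2 • w) 0

open Classical in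
lemma mul_card_line_le_shiftEnergy (S : Finset α) (f : α → G) (w : G) (B : ℕ) :
    B * #{z ∈ S ×ˢ S | ∃ t : ℤ, |t| ≤ B ∧ f z.1 - f z.2 = t • w} ≤
      shiftEnergy S f w (2 * B) := by
  have hex : ∀ z : α × α, ∃ t : ℤ, (∃ t : ℤ, |t| ≤ B ∧ f z.1 - f z.2 = t • w) →
      |t| ≤ B ∧ f z.1 - f z.2 = t • w := fun z => by
    by_cases h : ∃ t : ℤ, |t| ≤ B ∧ f z.1 - f z.2 = t • w
    · exact h.imp fun t ht _ => ht
    · exact ⟨0, fun h' => (h h').elim⟩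
  choose τ hτ using hex
  rw [shiftEnergy, diffCount_zero, ← card_range B, ← card_product, card_range]
  refine card_le_card_of_injOn (fun y => ((y.2.1, y.1 + (τ y.2).toNat),
    (y.2.2, y.1 + (-τ y.2).toNat))) (fun y hy => ?_) fun y _ y' _ h => ?_
  · simp only [coe_product, coe_range, coe_filter, Set.mem_prod, Set.mem_Iio, Set.mem_ofPred_eq,
      mem_product] at hy
    obtain ⟨hτB, hτw⟩ := hτ y.2 hy.2.2
    rw [abs_le] at hτB
    simp only [coe_filter, mem_product, mem_range, Set.mem_ofPred_eq]
    refine ⟨⟨⟨hy.2.1.1, by omega⟩, hy.2.1.2, by omega⟩, ?_⟩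
    have hsplit : τ y.2 = ((y.1 + (τ y.2).toNat : ℕ) : ℤ) - ((y.1 + (-τ y.2).toNat : ℕ) : ℤ) := by
      omega
    rw [hsplit, sub_smul, natCast_zsmul, natCast_zsmul] at hτw
    exact sub_eq_sub_iff_sub_eq_sub.1 hτw
  · simp only [Prod.mk.injEq] at h
    have h2 : y.2 = y'.2 := Prod.ext h.1.1 h.2.1
    exact Prod.ext (Nat.add_right_cancel (h.1.2.trans (h2 ▸ rfl))) h2

lemma shiftEnergy_le_mul_sum_diffCount (S : Finset α) (f : α → G) (w : G) (B : ℕ) :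
    shiftEnergy S f w B ≤ B * ∑ t ∈ Icc (-(B : ℤ)) B, diffCount S f (t • w) := by
  have e : ∑ t ∈ Icc (-(B : ℤ)) B, diffCount S f (t • w) =
      #((Icc (-(B : ℤ)) B).sigma fun t => {z ∈ S ×ˢ S | f z.1 - f z.2 = t • w}) :=
    (card_sigma _ _).symm
  rw [shiftEnergy, diffCount_zero, e, ← card_range B, ← card_product, card_range]
  refine card_le_card_of_injOn
    (fun z => (z.1.2, ⟨(z.1.2 : ℤ) - z.2.2, (z.1.1, z.2.1)⟩)) (fun z hz => ?_) fun z _ z' _ h => ?_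
  · simp only [coe_filter, mem_product, mem_range, Set.mem_ofPred_eq] at hz
    simp only [coe_product, coe_range, Set.mem_prod, Set.mem_Iio, mem_coe, mem_sigma, mem_Icc,
      mem_filter, mem_product]
    refine ⟨hz.1.1.2, ⟨by omega, by omega⟩, ⟨hz.1.1.1, hz.1.2.1⟩, ?_⟩
    rw [sub_smul, natCast_zsmul, natCast_zsmul]
    exact sub_eq_sub_iff_sub_eq_sub.1 hz.2
  · simp only [Prod.mk.injEq, Sigma.mk.injEq, heq_eq_eq] at h
    obtain ⟨h1, h2, h3, h4⟩ := h
    exact Prod.ext (Prod.ext h3 h1) (Prod.ext h4 (by omega))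

end ShiftEnergy

section Lines

variable {α ι : Type*} [Fintype ι] (S : Finset α) (f : α → ι → ℤ)

lemma eventually_shiftEnergy_eq_expect (w : ι → ℤ) (B : ℕ) :
    ∀ᶠ N : ℕ in atTop, (shiftEnergy S f w B : ℝ) =
      𝔼 ψ : AddChar (ι → ZMod (N + 1)) ℂ, ‖∑ a ∈ S, reducedChar N ψ (f a)‖ ^ 2 *
        ‖∑ t ∈ range B, reducedChar N ψ (-w) ^ t‖ ^ 2 := by
  filter_upwards [eventually_diffCount_zero_eq_expect (S ×ˢ range B) fun a => f a.1 - a.2 • w]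
    with N hN
  rw [shiftEnergy, hN]
  simp only [sum_addChar_sub_nsmul, norm_mul, mul_pow]

/-- For each character the large sieve sees only the differences `d` of the `m`, so that `w₀` drops
out. -/
lemma sum_shiftEnergy_le (w₀ w₁ : ι → ℤ) {M : Finset ℤ} {X : ℤ}
    (hM : ∀ m ∈ M, ∀ m' ∈ M, |m - m'| ≤ X) (B : ℕ) :
    ∑ m ∈ M, shiftEnergy S f (w₀ + m • w₁) B ≤
      ∑ d ∈ Icc (-X) X, shiftEnergy S f (d • w₁) (2 * B) := by
  obtain ⟨N, hN, hN'⟩ := (((eventually_all_finset M).2 fun m _ =>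
    eventually_shiftEnergy_eq_expect S f (w₀ + m • w₁) B).and
    ((eventually_all_finset (Icc (-X) X)).2 fun d _ =>
      eventually_shiftEnergy_eq_expect S f (d • w₁) (2 * B))).exists
  rw [← Nat.cast_le (α := ℝ), Nat.cast_sum, Nat.cast_sum, sum_congr rfl hN, sum_congr rfl hN',
    ← expect_sum_comm, ← expect_sum_comm]
  refine expect_le_expect fun ψ _ => ?_
  simp only [← mul_sum, neg_add, ← smul_neg, AddChar.map_add_eq_mul, AddChar.map_zsmul_eq_zpow]
  exact mul_le_mul_of_nonneg_left
    (sum_norm_geom_sq_le (AddChar.norm_apply ψ _) (AddChar.norm_apply ψ _) hM B) (sq_nonneg _)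

open Classical in
lemma sum_card_line_le (w₀ w₁ : ι → ℤ) {M : Finset ℤ} {X : ℕ}
    (hM : ∀ m ∈ M, ∀ m' ∈ M, |m - m'| ≤ X) {B : ℕ} (hB : 1 ≤ B) :
    ∑ m ∈ M, #{z ∈ S ×ˢ S | ∃ t : ℤ, |t| ≤ B ∧ f z.1 - f z.2 = t • (w₀ + m • w₁)} ≤
      4 * ∑ y ∈ Icc (-(X : ℤ)) X ×ˢ Icc (-((4 * B : ℕ) : ℤ)) (4 * B : ℕ),
        diffCount S f ((y.1 * y.2) • w₁) := by
  refine Nat.le_of_mul_le_mul_left ?_ hB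
  rw [mul_sum]
  calc _ ≤ ∑ m ∈ M, shiftEnergy S f (w₀ + m • w₁) (2 * B) :=
        sum_le_sum fun m _ => mul_card_line_le_shiftEnergy S f (w₀ + m • w₁) B
    _ ≤ ∑ d ∈ Icc (-(X : ℤ)) X, shiftEnergy S f (d • w₁) (2 * (2 * B)) :=
        sum_shiftEnergy_le S f w₀ w₁ hM (2 * B)
    _ ≤ ∑ d ∈ Icc (-(X : ℤ)) X, 4 * B *
          ∑ t ∈ Icc (-((4 * B : ℕ) : ℤ)) (4 * B : ℕ), diffCount S f ((d * t) • w₁) := by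
        refine sum_le_sum fun d _ => ?_
        rw [← mul_assoc 2 2]
        refine (shiftEnergy_le_mul_sum_diffCount S f (d • w₁) (4 * B)).trans_eq ?_
        simp only [smul_smul, mul_comm d]
    _ = _ := by rw [← mul_sum, sum_product, mul_comm 4 B, mul_assoc]

end Lines

section Multiples

variable {α G : Type*} [AddCommGroup G] [DecidableEq G] (S : Finset α) (f : α → G) (w : G)

lemma card_mul_eq_zero_le (X B : ℕ) :
    #{y ∈ Icc (-(X : ℤ)) X ×ˢ Icc (-(B : ℤ)) B | y.1 * y.2 = 0} ≤ 2 * X + 2 * B + 2 := by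
  have hsub : {y ∈ Icc (-(X : ℤ)) X ×ˢ Icc (-(B : ℤ)) B | y.1 * y.2 = 0} ⊆
      ({0} ×ˢ Icc (-(B : ℤ)) B) ∪ (Icc (-(X : ℤ)) X ×ˢ {0}) := fun y hy => by
    rw [mem_filter, mem_product] at hy
    rw [mem_union, mem_product, mem_product, mem_singleton, mem_singleton]
    exact (mul_eq_zero.1 hy.2).imp (fun h => ⟨h, hy.1.2⟩) fun h => ⟨hy.1.1, h⟩
  refine (card_le_card hsub).trans ((card_union_le _ _).trans ?_)
  rw [card_product, card_product, card_singleton, Int.card_Icc, Int.card_Icc]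
  omega

open Classical in
lemma sum_diffCount_zsmul_le [IsAddTorsionFree G] (hw : w ≠ 0) (T : Finset ℤ) :
    ∑ b ∈ T, diffCount S f (b • w) ≤ #{z ∈ S ×ˢ S | ∃ b : ℤ, f z.1 - f z.2 = b • w} := by
  have hdisj : (T : Set ℤ).PairwiseDisjoint fun b => {z ∈ S ×ˢ S | f z.1 - f z.2 = b • w} :=
    fun b _ b' _ hbb => disjoint_filter.2 fun z _ h h' =>
      hbb (smul_left_injective ℤ hw (h.symm.trans h'))
  refine (card_biUnion hdisj).symm.trans_le (card_le_card (biUnion_subset.2 fun b _ => ?_))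
  exact monotone_filter_right _ fun z _ h => ⟨b, h⟩

open Classical in
lemma sum_diffCount_mul_le [IsAddTorsionFree G] (hw : w ≠ 0) {X B Δ : ℕ}
    (hΔ : ∀ b : ℤ, b ≠ 0 → diffCount S f (b • w) ≠ 0 →
      #{y ∈ Icc (-(X : ℤ)) X ×ˢ Icc (-(B : ℤ)) B | y.1 * y.2 = b} ≤ Δ) :
    ∑ y ∈ Icc (-(X : ℤ)) X ×ˢ Icc (-(B : ℤ)) B, diffCount S f ((y.1 * y.2) • w) ≤
      (2 * X + 2 * B + 2) * diffCount S f 0 +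
        Δ * #{z ∈ S ×ˢ S | ∃ b : ℤ, f z.1 - f z.2 = b • w} := by
  set P := Icc (-(X : ℤ)) X ×ˢ Icc (-(B : ℤ)) B
  rw [sum_comp (fun b : ℤ => diffCount S f (b • w)) fun y : ℤ × ℤ => y.1 * y.2]
  simp only [smul_eq_mul]
  rw [← sum_filter_add_sum_filter_not _ fun b : ℤ => b = 0]
  refine add_le_add ?_ ?_
  · calc ∑ b ∈ P.image (fun y => y.1 * y.2) with b = 0,
          #{y ∈ P | y.1 * y.2 = b} * diffCount S f (b • w)
        ≤ ∑ b ∈ {0}, #{y ∈ P | y.1 * y.2 = b} * diffCount S f (b • w) :=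
          sum_le_sum_of_subset fun b hb => mem_singleton.2 (mem_filter.1 hb).2
      _ = #{y ∈ P | y.1 * y.2 = 0} * diffCount S f 0 := by rw [sum_singleton, zero_smul]
      _ ≤ _ := Nat.mul_le_mul_right _ (card_mul_eq_zero_le X B)
  · refine le_trans ?_ (Nat.mul_le_mul_left Δ (sum_diffCount_zsmul_le S f w hw
      {b ∈ P.image fun y => y.1 * y.2 | ¬ b = 0}))
    rw [mul_sum]
    refine sum_le_sum fun b hb => ?_
    by_cases h : diffCount S f (b • w) = 0
    · rw [h, mul_zero]
      exact Nat.zero_le _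
    · exact Nat.mul_le_mul_right _ (hΔ b (mem_filter.1 hb).2 h)

end Multiples

/-! ### From residue classes to Vinogradov systems -/

section LargeModuli

variable {p k r : ℕ} (hp : p.Prime) (hkp : k < p) (hr : 1 ≤ r)

lemma residueClass_eq_empty_or_not_dvd (n q : ℕ) (c : ℤ) :
    residueClass p n q c = ∅ ∨ q = 0 ∨ ¬ (p : ℤ) ∣ c := by
  rcases q.eq_zero_or_pos with hq | hq
  · exact Or.inr (Or.inl hq)
  · exact (em ((p : ℤ) ∣ c)).imp (residueClass_eq_empty hq) Or.inr

include hp in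
lemma isCoprime_pow_of_eq_zero_or_not_dvd {q : ℕ} {a : ℤ} (h : q = 0 ∨ ¬ (p : ℤ) ∣ a) :
    IsCoprime ((p : ℤ) ^ q) a := by
  rcases h with rfl | h
  · simpa only [pow_zero] using isCoprime_one_left
  · exact ((Nat.prime_iff_prime_int.1 hp).coprime_iff_not_dvd.2 h).pow_left

lemma two_mul_mul_pow_div_add_one_le (hp0 : 0 < p) (h τ e : ℕ) :
    2 * τ * (p ^ ((r + 1) * h)) ^ (r + 1 + e) / (p ^ (r * h)) ^ (r + 1 + e + 1) + 1 ≤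
      (2 * τ + 1) * (p ^ h) ^ (e + 1) := by
  have quotient : 2 * τ * (p ^ ((r + 1) * h)) ^ (r + 1 + e) / (p ^ (r * h)) ^ (r + 1 + e + 1) ≤
      2 * τ * (p ^ h) ^ (e + 1) := by
    refine Nat.div_le_of_le_mul (le_of_eq ?_)
    rw [← pow_mul, ← pow_mul, ← pow_mul, mul_left_comm, ← pow_add]
    ring_nf
  linarith [Nat.one_le_pow (e + 1) _ (pow_pos hp0 h)]

include hp hkp hr

lemma classEnergy_le_succ_of_large {e : ℕ} (hek : r + e < k) (h : ℕ) {τ : ℕ} (hτ : 1 ≤ τ) :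
    classEnergy k p (r * h) (r + e) ((r - 1) * h) τ ≤
      ((2 * τ + 1) * (p ^ h) ^ (e + 1)) *
        classEnergy k p (r * h) (r + e + 1) ((r - 1) * h) τ := by
  obtain ⟨r, rfl⟩ := Nat.exists_eq_add_of_le' hr
  rw [Nat.add_sub_cancel, classEnergy, classEnergy, mul_sum]
  refine sum_le_sum fun c _ => ?_
  rcases residueClass_eq_empty_or_not_dvd (p := p) ((r + 1) * h) (r * h) c with hempty | hc
  · rw [powEnergy_eq_zero (⟨0, hτ⟩ : Fin τ) hempty]
    exact Nat.zero_le _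
  have hcop : IsCoprime ((p ^ (r * h) : ℕ) : ℤ)
      ((k.choose (r + 1 + e) : ℤ) * c ^ (k - (r + 1 + e))) := by
    rw [Nat.cast_pow]
    exact isCoprime_pow_of_eq_zero_or_not_dvd hp
      (hc.imp_right fun hc => not_dvd_choose_mul_pow hp hkp hek.le hc _)
  refine (powEnergy_degs_le_mul_powEnergy_degs_succ (by omega) hek (Y := p ^ ((r + 1) * h))
    (Nat.one_le_pow _ _ hp.pos) (fun _ x hx => ?_) hcop).trans (Nat.mul_le_mul_right _ ?_)
  · have hx' := mem_Icc.1 (residueClass_subset_Icc hx)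
    rw [Nat.cast_pow, Nat.cast_pow]
    exact ⟨hx'.1, hx'.2, dvd_sub_of_mem_residueClass hx⟩
  · rw [Fintype.card_fin]
    exact two_mul_mul_pow_div_add_one_le hp.pos h τ e

lemma classEnergy_le_of_large (h : ℕ) {τ : ℕ} (hτ : 1 ≤ τ) : ∀ b : ℕ, r + b < k →
    classEnergy k p (r * h) r ((r - 1) * h) τ ≤
      ((2 * τ + 1) ^ b * (p ^ h) ^ (∑ i ∈ range b, (i + 1))) *
        classEnergy k p (r * h) (r + b) ((r - 1) * h) τ
  | 0, _ => by simp only [pow_zero, range_zero, sum_empty, mul_one, one_mul, add_zero, le_refl]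
  | b + 1, hb => by
    refine (classEnergy_le_of_large h hτ b (by omega)).trans ((Nat.mul_le_mul_left _
      (classEnergy_le_succ_of_large hp hkp hr (by omega) h hτ)).trans_eq ?_)
    rw [sum_range_succ, pow_add _ _ (b + 1), ← add_assoc]
    ring

end LargeModuli

section Affine

variable {κ : Type*} [Fintype κ] {m Q : ℤ} {u v : κ → ℤ} {j : ℕ}

lemma sum_pow_affine_sub (m Q : ℤ) (u v : κ → ℤ) (d : ℕ) :
    ∑ l, (m + Q * u l) ^ d - ∑ l, (m + Q * v l) ^ d =
      ∑ i ∈ range (d + 1), Q ^ i * m ^ (d - i) * (d.choose i : ℤ) *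
        (∑ l, u l ^ i - ∑ l, v l ^ i) := by
  simp only [← sum_sub_distrib, mul_sum]
  rw [sum_comm]
  refine sum_congr rfl fun l _ => ?_
  rw [add_comm, add_comm m, add_pow, add_pow, ← sum_sub_distrib]
  exact sum_congr rfl fun i _ => by rw [mul_pow, mul_pow]; ring

lemma sum_pow_eq_of_affine (hQ : Q ≠ 0)
    (h : ∀ d ∈ Ico 1 j, ∑ l, (m + Q * u l) ^ d = ∑ l, (m + Q * v l) ^ d) :
    ∀ d < j, ∑ l, u l ^ d = ∑ l, v l ^ d := by
  intro d
  induction d using Nat.strong_induction_on with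
  | _ d ih =>
    intro hd
    rcases d.eq_zero_or_pos with rfl | hd0
    · simp only [pow_zero]
    have expansion := sum_pow_affine_sub m Q u v d
    rw [h d (mem_Ico.2 ⟨hd0, hd⟩), sub_self, sum_range_succ, sum_eq_zero fun i hi => by
      rw [ih i (mem_range.1 hi) ((mem_range.1 hi).trans hd), sub_self, mul_zero],
      Nat.choose_self, Nat.sub_self, pow_zero, mul_one, Nat.cast_one, mul_one, zero_add]
      at expansion
    exact sub_eq_zero.1 ((mul_eq_zero.1 expansion.symm).resolve_left (pow_ne_zero _ hQ))

lemma add_one_mul_mul_add_mul_eq_zero (hQ : Q ≠ 0)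
    (hlow : ∀ d < j, ∑ l, u l ^ d = ∑ l, v l ^ d)
    (htop : ∑ l, (m + Q * u l) ^ (j + 1) = ∑ l, (m + Q * v l) ^ (j + 1)) :
    ((j + 1 : ℕ) : ℤ) * m * (∑ l, u l ^ j - ∑ l, v l ^ j) +
      Q * (∑ l, u l ^ (j + 1) - ∑ l, v l ^ (j + 1)) = 0 := by
  have expansion := sum_pow_affine_sub m Q u v (j + 1)
  rw [htop, sub_self, sum_range_succ, sum_range_succ, sum_eq_zero fun i hi => by
    rw [hlow i (mem_range.1 hi), sub_self, mul_zero], Nat.choose_succ_self_right,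
    Nat.choose_self, Nat.sub_self, Nat.add_sub_cancel_left] at expansion
  refine (mul_eq_zero.1 ?_).resolve_left (pow_ne_zero j hQ)
  rw [expansion]
  push_cast
  ring

/-- The vector of power sums of degrees `1, …, k` of the coordinates of `x`. -/
def powerSums (k : ℕ) (x : κ → ℤ) : Icc 1 k → ℤ := ∑ l, momentCurve (Icc 1 k) (x l)

lemma powerSums_sub_apply (k : ℕ) (x y : κ → ℤ) (d : Icc 1 k) :
    (powerSums k x - powerSums k y) d = ∑ l, x l ^ (d : ℕ) - ∑ l, y l ^ (d : ℕ) := by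
  simp only [powerSums, momentCurve, Pi.sub_apply, Finset.sum_apply]

/-- The vector with entry `a` in degree `j` and zeros elsewhere. -/
def degreeVec (k j : ℕ) (a : ℤ) : Icc 1 k → ℤ := fun d => if (d : ℕ) = j then a else 0

/-- If `u` and `v` become solutions of the system of degrees `1, …, j - 1, j + 1` under the
substitution `x = m + Q u`, then their vectors of power sums of degrees `1, …, j + 1` differ by an
integer multiple of this direction. It is affine in `m`. -/
def affineDirection (j : ℕ) (Q m : ℤ) : Icc 1 (j + 1) → ℤ :=
  degreeVec (j + 1) j Q + m • degreeVec (j + 1) (j + 1) (-((j + 1 : ℕ) : ℤ))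

lemma affineDirection_apply (j : ℕ) (Q m : ℤ) (d : Icc 1 (j + 1)) :
    affineDirection j Q m d =
      if (d : ℕ) = j then Q else if (d : ℕ) = j + 1 then -(((j + 1 : ℕ) : ℤ) * m) else 0 := by
  simp only [affineDirection, degreeVec, Pi.add_apply, Pi.smul_apply, smul_eq_mul]
  split_ifs <;> first | omega | ring

lemma exists_powerSums_sub_eq_smul (hQ : Q ≠ 0) (hcop : IsCoprime Q (((j + 1 : ℕ) : ℤ) * m))
    (h : ∀ d ∈ degs (j + 1) j, ∑ l, (m + Q * u l) ^ d = ∑ l, (m + Q * v l) ^ d) :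
    ∃ t : ℤ, powerSums (j + 1) u - powerSums (j + 1) v = t • affineDirection j Q m := by
  have low := sum_pow_eq_of_affine hQ fun d hd => h d (mem_insert_of_mem hd)
  have top := add_one_mul_mul_add_mul_eq_zero hQ low (h _ (mem_insert_self _ _))
  obtain ⟨t, ht⟩ : Q ∣ ∑ l, u l ^ j - ∑ l, v l ^ j :=
    hcop.dvd_of_dvd_mul_left
      ⟨-(∑ l, u l ^ (j + 1) - ∑ l, v l ^ (j + 1)), by linear_combination top⟩
  have ht' : ∑ l, u l ^ (j + 1) - ∑ l, v l ^ (j + 1) = -(((j + 1 : ℕ) : ℤ) * m * t) :=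
    mul_left_cancel₀ hQ (by linear_combination top - ((j + 1 : ℕ) : ℤ) * m * ht)
  refine ⟨t, funext fun d => ?_⟩
  obtain ⟨d, hd⟩ := d
  rw [powerSums_sub_apply, Pi.smul_apply, affineDirection_apply, smul_eq_mul]
  have hdj : d < j ∨ d = j ∨ d = j + 1 := by have := (mem_Icc.1 hd).2; omega
  rcases hdj with hdj | rfl | rfl
  · rw [if_neg (by simp only; omega), if_neg (by simp only; omega), low d hdj, sub_self, mul_zero]
  · rw [if_pos rfl, ht, mul_comm]
  · rw [if_neg (by simp only; omega), if_pos rfl, ht']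
    ring

lemma abs_sum_pow_sub_le {Y : ℤ} (hu : ∀ l, u l ∈ Icc 1 Y) (hv : ∀ l, v l ∈ Icc 1 Y) (d : ℕ) :
    |∑ l, u l ^ d - ∑ l, v l ^ d| ≤ Fintype.card κ * Y ^ d := by
  have bounds : ∀ w : κ → ℤ, (∀ l, w l ∈ Icc 1 Y) →
      0 ≤ ∑ l, w l ^ d ∧ ∑ l, w l ^ d ≤ Fintype.card κ * Y ^ d := fun w hw => by
    have hw0 := fun l => zero_le_one.trans (mem_Icc.1 (hw l)).1
    refine ⟨sum_nonneg fun l _ => pow_nonneg (hw0 l) _, ?_⟩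
    simpa only [card_univ, nsmul_eq_mul] using sum_le_card_nsmul univ (fun l => w l ^ d) _
      fun l _ => pow_le_pow_left₀ (hw0 l) (mem_Icc.1 (hw l)).2 d
  rw [abs_le]
  constructor <;> linarith [bounds u hu, bounds v hv]

end Affine

section Transfer

variable {p j r τ Y B : ℕ}

open Classical in
/-- The pairs of points of `[1, Y] ^ τ` whose vectors of power sums of degrees `1, …, j + 1` differ
by a multiple `t • affineDirection j Q m` with `|t| ≤ B`. -/
noncomputable def linePairs (j τ Y B : ℕ) (Q m : ℤ) : Finset ((Fin τ → ℤ) × (Fin τ → ℤ)) :=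
  {z ∈ (Fintype.piFinset fun _ => Icc (1 : ℤ) Y) ×ˢ (Fintype.piFinset fun _ => Icc (1 : ℤ) Y) |
    ∃ t : ℤ, |t| ≤ B ∧ powerSums (j + 1) z.1 - powerSums (j + 1) z.2 = t • affineDirection j Q m}

lemma powEnergy_image_affine_le_card_linePairs (hj : 1 ≤ j) {m : ℤ} {Q : ℕ} (hQ : 1 ≤ Q)
    (hB : τ * Y ^ j ≤ Q * B) (hcop : IsCoprime (Q : ℤ) (((j + 1 : ℕ) : ℤ) * m)) :
    powEnergy (degs (j + 1) j)
        (fun _ : Fin τ => (Icc (1 : ℤ) Y).image fun u => m + (Q : ℤ) * u) ≤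
      #(linePairs j τ Y B Q m) := by
  classical
  have hQ0 : (Q : ℤ) ≠ 0 := by exact_mod_cast (by omega : Q ≠ 0)
  rw [powEnergy_eq_card_powSumPairs]
  refine card_le_card_of_surjOn
    (fun z => (fun l => m + (Q : ℤ) * z.1 l, fun l => m + (Q : ℤ) * z.2 l)) fun z hz => ?_
  simp only [powSumPairs, coe_filter, mem_product, Fintype.mem_piFinset, mem_image,
    Set.mem_ofPred_eq] at hz
  obtain ⟨⟨hx, hy⟩, hsol⟩ := hz
  choose u hu hux using hx
  choose v hv hvy using hy
  obtain rfl : z = (fun l => m + (Q : ℤ) * u l, fun l => m + (Q : ℤ) * v l) :=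
    Prod.ext (funext fun l => (hux l).symm) (funext fun l => (hvy l).symm)
  obtain ⟨t, ht⟩ := exists_powerSums_sub_eq_smul hQ0 hcop hsol
  have degree_j : ∑ l, u l ^ j - ∑ l, v l ^ j = t * Q := by
    have := congrFun ht ⟨j, mem_Icc.2 ⟨hj, j.le_succ⟩⟩
    rwa [powerSums_sub_apply, Pi.smul_apply, affineDirection_apply, if_pos rfl] at this
  have ht' : |t| ≤ B := by
    have bound := abs_sum_pow_sub_le hu hv j
    rw [degree_j, abs_mul, Nat.abs_cast, Fintype.card_fin] at bound
    refine le_of_mul_le_mul_right (bound.trans ?_) (by exact_mod_cast hQ : (0 : ℤ) < Q)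
    rw [mul_comm (B : ℤ)]
    exact_mod_cast hB
  exact ⟨(u, v), mem_filter.2 ⟨mem_product.2 ⟨Fintype.mem_piFinset.2 hu,
    Fintype.mem_piFinset.2 hv⟩, t, ht', ht⟩, rfl⟩

lemma sum_Icc_neg_mul_eq {M : Type*} [AddCommMonoid M] {Q : ℤ} (hQ : 0 < Q) (L : ℤ)
    (f : ℤ → M) :
    ∑ m ∈ Icc (-(Q * L)) (-1), f m = ∑ c ∈ Ico 0 Q, ∑ y ∈ Icc 1 L, f (c - Q * y) := by
  rw [← sum_product']
  refine sum_nbij' (fun m => (m % Q, -(m / Q))) (fun y => y.1 - Q * y.2) ?_ ?_ ?_ ?_ ?_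
  · intro m hm
    rw [mem_Icc] at hm
    rw [mem_product, mem_Ico, mem_Icc]
    refine ⟨⟨Int.emod_nonneg _ hQ.ne', Int.emod_lt_of_pos _ hQ⟩, ?_, ?_⟩
    · have := Int.ediv_lt_of_lt_mul (a := m) (b := 0) hQ (by omega)
      omega
    · have := Int.le_ediv_of_mul_le (a := -L) (b := m) hQ (by linarith)
      omega
  · intro y hy
    rw [mem_product, mem_Ico, mem_Icc] at hy
    rw [mem_Icc]
    constructor <;> nlinarith
  · intro m _
    simp only
    linarith [Int.emod_add_mul_ediv m Q]
  · intro y hy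
    rw [mem_product, mem_Ico] at hy
    simp only [Int.sub_mul_emod_self_left, Int.emod_eq_of_lt hy.1.1 hy.1.2,
      Int.sub_mul_ediv_left _ _ hQ.ne', Int.ediv_eq_zero_of_lt hy.1.1 hy.1.2, zero_sub, neg_neg]
  · intro m _
    simp only
    congr 1
    linarith [Int.emod_add_mul_ediv m Q]

lemma residueClass_subset_image_affine (hp : 0 < p) {q h : ℕ} {c y : ℤ}
    (hc : c ∈ Ico 0 ((p : ℤ) ^ q)) (hy : y ∈ Icc 1 ((p : ℤ) ^ h)) :
    residueClass p (q + h) q c ⊆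
      (Icc (1 : ℤ) (2 * p ^ h : ℕ)).image fun u => c - (p : ℤ) ^ q * y + (p ^ q : ℕ) * u := by
  intro x hx
  have hQ : (0 : ℤ) < (p : ℤ) ^ q := by positivity
  obtain ⟨a, ha⟩ := dvd_sub_of_mem_residueClass hx
  have hx' := mem_Icc.1 (residueClass_subset_Icc hx)
  rw [mem_Ico] at hc
  rw [mem_Icc] at hy
  rw [pow_add] at hx'
  have ha0 : 0 ≤ a := by
    by_contra! hneg
    nlinarith
  have haL : a ≤ (p : ℤ) ^ h := by
    by_contra! hlt
    nlinarith
  refine mem_image.2 ⟨a + y, mem_Icc.2 ?_, ?_⟩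
  all_goals push_cast
  · constructor <;> linarith
  · linear_combination -ha

lemma powEnergy_residueClass_le_card_linePairs (hp : p.Prime) (hjp : j + 1 < p) (hj : 1 ≤ j)
    {q h : ℕ} (hτ : 1 ≤ τ) (hB : τ * (2 * p ^ h) ^ j ≤ p ^ q * B) {c y : ℤ}
    (hc : c ∈ Ico 0 ((p : ℤ) ^ q)) (hy : y ∈ Icc 1 ((p : ℤ) ^ h)) :
    powEnergy (degs (j + 1) j) (fun _ : Fin τ => residueClass p (q + h) q c) ≤
      #(linePairs j τ (2 * p ^ h) B (p ^ q : ℕ) (c - (p : ℤ) ^ q * y)) := by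
  rcases residueClass_eq_empty_or_not_dvd (p := p) (q + h) q c with hempty | hcp
  · rw [powEnergy_eq_zero (⟨0, hτ⟩ : Fin τ) hempty]
    exact Nat.zero_le _
  refine (tupleEnergy_mono _ fun _ => residueClass_subset_image_affine hp.pos hc hy).trans
    (powEnergy_image_affine_le_card_linePairs hj (Nat.one_le_pow _ _ hp.pos) hB ?_)
  rw [Nat.cast_pow]
  refine isCoprime_pow_of_eq_zero_or_not_dvd hp ?_
  rcases Nat.eq_zero_or_pos q with hq | hq
  · exact Or.inl hq
  refine Or.inr fun hd => ?_
  rcases (Nat.prime_iff_prime_int.1 hp).dvd_or_dvd hd with hd | hd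
  · exact not_dvd_natCast_of_lt j.succ_pos hjp hd
  · exact hcp.resolve_left hq.ne'
      ((dvd_sub_left ((dvd_pow_self (p : ℤ) hq.ne').mul_right y)).1 hd)

/-- Each residue class is covered by the progressions `c - p ^ q * y + p ^ q * u`, and as `c` and
`y` vary the offsets `c - p ^ q * y` are distinct. -/
lemma mul_classEnergy_le_sum_card_linePairs (hp : p.Prime) (hjp : j + 1 < p) (hj : 1 ≤ j)
    (q h : ℕ) (hτ : 1 ≤ τ) (hB : τ * (2 * p ^ h) ^ j ≤ p ^ q * B) :
    p ^ h * classEnergy (j + 1) p (q + h) j q τ ≤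
      ∑ m ∈ Icc (-((p : ℤ) ^ q * (p : ℤ) ^ h)) (-1),
        #(linePairs j τ (2 * p ^ h) B (p ^ q : ℕ) m) := by
  have hQ : (0 : ℤ) < (p : ℤ) ^ q := pow_pos (mod_cast hp.pos) q
  rw [sum_Icc_neg_mul_eq hQ, classEnergy, mul_sum]
  refine sum_le_sum fun c hc => ?_
  calc _ = ∑ _y ∈ Icc 1 ((p : ℤ) ^ h),
        powEnergy (degs (j + 1) j) fun _ : Fin τ => residueClass p (q + h) q c := by
        rw [sum_const, Int.card_Icc, smul_eq_mul, add_sub_cancel_right, ← Nat.cast_pow,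
          Int.toNat_natCast]
    _ ≤ _ := sum_le_sum fun y hy =>
        powEnergy_residueClass_le_card_linePairs hp hjp hj hτ hB hc hy

/-- The number of solutions of Vinogradov's system of degree `w` in `τ` pairs of variables from
`[1, Y]`. -/
noncomputable def vinoCount (τ w Y : ℕ) : ℕ :=
  powEnergy (Icc 1 w) fun _ : Fin τ => Icc (1 : ℤ) Y

open Classical in
lemma card_powerSums_sub_eq_zsmul_degreeVec_le (j τ Y : ℕ) (a : ℤ) :
    #{z ∈ (Fintype.piFinset fun _ : Fin τ => Icc (1 : ℤ) Y) ×ˢ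
        (Fintype.piFinset fun _ : Fin τ => Icc (1 : ℤ) Y) |
      ∃ b : ℤ, powerSums (j + 1) z.1 - powerSums (j + 1) z.2 = b • degreeVec (j + 1) (j + 1) a} ≤
      vinoCount τ j Y := by
  rw [vinoCount, powEnergy_eq_card_powSumPairs]
  refine card_le_card (monotone_filter_right _ ?_)
  rintro z - ⟨b, hb⟩ d hd
  rw [mem_Icc] at hd
  have := congrFun hb ⟨d, mem_Icc.2 ⟨hd.1, by omega⟩⟩
  rwa [powerSums_sub_apply, Pi.smul_apply, degreeVec, if_neg (by simp only; omega), smul_zero,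
    sub_eq_zero] at this

lemma card_filter_mul_eq_le (P : Finset (ℤ × ℤ)) {b : ℤ} (hb : b ≠ 0) :
    #{y ∈ P | y.1 * y.2 = b} ≤ 2 * #b.natAbs.divisors := by
  have hcard : 2 * #b.natAbs.divisors = #((univ : Finset Bool) ×ˢ b.natAbs.divisors) := by
    rw [card_product, card_univ, Fintype.card_bool]
  rw [hcard]
  refine card_le_card_of_injOn (fun y => (decide (0 ≤ y.1), y.1.natAbs)) (fun y hy => ?_) ?_
  · refine mem_product.2 ⟨mem_univ _, Nat.mem_divisors.2 ⟨?_, Int.natAbs_ne_zero.2 hb⟩⟩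
    exact Int.natAbs_dvd_natAbs.2 ⟨y.2, (mem_filter.1 hy).2.symm⟩
  · intro y hy y' hy' h
    have hy := (mem_filter.1 hy).2
    have hy' := (mem_filter.1 hy').2
    simp only [Prod.mk.injEq, decide_eq_decide] at h
    have hfst : y.1 = y'.1 := by omega
    have hne : y.1 ≠ 0 := left_ne_zero_of_mul (hy ▸ hb)
    exact Prod.ext hfst (mul_left_cancel₀ hne (by rw [hy, hfst, hy']))

lemma mul_classEnergy_le_vinoCount (hp : p.Prime) (hjp : j + 1 < p) (hj : 1 ≤ j) (q h : ℕ)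
    {Δ : ℕ} (hτ : 1 ≤ τ) (hB1 : 1 ≤ B) (hB : τ * (2 * p ^ h) ^ j ≤ p ^ q * B)
    (hΔ : ∀ b ∈ Icc 1 (τ * (2 * p ^ h) ^ (j + 1)), 2 * #b.divisors ≤ Δ) :
    p ^ h * classEnergy (j + 1) p (q + h) j q τ ≤
      4 * ((2 * p ^ (q + h) + 2 * (4 * B) + 2) * vinoCount τ (j + 1) (2 * p ^ h) +
        Δ * vinoCount τ j (2 * p ^ h)) := by
  classical
  set a : ℤ := -((j + 1 : ℕ) : ℤ) with ha
  have one_le_abs : 1 ≤ |a| := by rw [ha, abs_neg, Nat.abs_cast]; exact_mod_cast j.succ_pos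
  refine (mul_classEnergy_le_sum_card_linePairs hp hjp hj q h hτ hB).trans
    ((sum_card_line_le _ (powerSums (j + 1)) (degreeVec (j + 1) j (p ^ q : ℕ))
      (degreeVec (j + 1) (j + 1) a) (X := p ^ (q + h)) ?_ hB1).trans
    (Nat.mul_le_mul_left _ ((sum_diffCount_mul_le _ _ _ ?_ (Δ := Δ) ?_).trans
    (Nat.add_le_add_left (Nat.mul_le_mul_left _
      (card_powerSums_sub_eq_zsmul_degreeVec_le j τ _ a)) _))))
  · intro m hm m' hm'
    rw [mem_Icc, ← pow_add] at hm hm'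
    rw [abs_le, Nat.cast_pow]
    constructor <;> linarith
  · intro h0
    have := congrFun h0 ⟨j + 1, mem_Icc.2 ⟨j.succ_pos, le_rfl⟩⟩
    rw [degreeVec, if_pos rfl, Pi.zero_apply] at this
    rw [this, abs_zero] at one_le_abs
    exact absurd one_le_abs (by norm_num)
  · intro b hb hcount
    refine (card_filter_mul_eq_le _ hb).trans (hΔ _ (mem_Icc.2 ⟨Int.natAbs_pos.2 hb, ?_⟩))
    obtain ⟨z, hz⟩ := card_pos.1 (Nat.pos_of_ne_zero hcount)
    obtain ⟨hz, hzb⟩ := mem_filter.1 hz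
    rw [mem_product, Fintype.mem_piFinset, Fintype.mem_piFinset] at hz
    have bound := abs_sum_pow_sub_le hz.1 hz.2 (j + 1)
    have top := congrFun hzb ⟨j + 1, mem_Icc.2 ⟨j.succ_pos, le_rfl⟩⟩
    rw [powerSums_sub_apply, Pi.smul_apply, degreeVec, if_pos rfl, smul_eq_mul] at top
    rw [top, abs_mul, Fintype.card_fin] at bound
    zify
    push_cast at bound
    exact (le_mul_of_one_le_right (abs_nonneg b) one_le_abs).trans bound

lemma two_mul_pow_add_le {L : ℕ} (hL : 1 ≤ L) (hr : 1 ≤ r) (hrj : r ≤ j) (τ : ℕ) :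
    2 * L ^ r + 2 * (4 * (τ * 2 ^ j * L ^ (j + 1 - r))) + 2 ≤ (4 + 8 * τ * 2 ^ j) * L ^ j := by
  have first : L ^ r ≤ L ^ j := Nat.pow_le_pow_right hL hrj
  have second : τ * 2 ^ j * L ^ (j + 1 - r) ≤ τ * 2 ^ j * L ^ j :=
    Nat.mul_le_mul_left _ (Nat.pow_le_pow_right hL (by omega))
  linarith [Nat.one_le_pow j L hL]

lemma classEnergy_le_vinoCount (hp : p.Prime) (hjp : j + 1 < p) (hr : 1 ≤ r) (hrj : r ≤ j) (h : ℕ)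
    {Δ : ℕ} (hτ : 1 ≤ τ)
    (hΔ : ∀ b ∈ Icc 1 (τ * (2 * p ^ h) ^ (j + 1)), 2 * #b.divisors ≤ Δ) :
    p ^ h * classEnergy (j + 1) p (r * h) r ((r - 1) * h) τ ≤
      ((2 * τ + 1) ^ (j - r) * (4 * (4 + 8 * τ * 2 ^ j))) *
        (p ^ h) ^ (∑ i ∈ range (j - r), (i + 1)) *
        ((p ^ h) ^ j * vinoCount τ (j + 1) (2 * p ^ h) + Δ * vinoCount τ j (2 * p ^ h)) := by
  have hL : 1 ≤ p ^ h := Nat.one_le_pow _ _ hp.pos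
  have raise := classEnergy_le_of_large hp hjp hr h hτ (j - r) (by omega)
  rw [Nat.add_sub_cancel' hrj] at raise
  have hrh : (r - 1) * h + h = r * h := by
    rw [← Nat.succ_mul, Nat.succ_eq_add_one, Nat.sub_add_cancel hr]
  have hpow (i : ℕ) : p ^ (i * h) = (p ^ h) ^ i := by rw [← pow_mul, mul_comm]
  have hB : τ * (2 * p ^ h) ^ j ≤ p ^ ((r - 1) * h) * (τ * 2 ^ j * (p ^ h) ^ (j + 1 - r)) := by
    have split : (p ^ h) ^ j = p ^ ((r - 1) * h) * (p ^ h) ^ (j + 1 - r) := by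
      rw [hpow, ← pow_add]
      congr 1
      omega
    rw [mul_pow, split]
    exact le_of_eq (by ring)
  have transfer := mul_classEnergy_le_vinoCount hp hjp (hr.trans hrj) ((r - 1) * h) h hτ
    (Nat.mul_pos (by positivity) (by positivity)) hB hΔ
  rw [hrh, hpow r] at transfer
  set E := classEnergy (j + 1) p (r * h) j ((r - 1) * h) τ
  set V := vinoCount τ (j + 1) (2 * p ^ h)
  set V' := vinoCount τ j (2 * p ^ h)
  have top : p ^ h * E ≤ 4 * (4 + 8 * τ * 2 ^ j) * ((p ^ h) ^ j * V + Δ * V') := by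
    have := Nat.mul_le_mul_right V (two_mul_pow_add_le hL hr hrj τ)
    have : Δ * V' ≤ (4 + 8 * τ * 2 ^ j) * (Δ * V') := Nat.le_mul_of_pos_left _ (by positivity)
    linarith
  calc _ ≤ p ^ h * (((2 * τ + 1) ^ (j - r) * (p ^ h) ^ (∑ i ∈ range (j - r), (i + 1))) * E) :=
        Nat.mul_le_mul_left _ raise
    _ = ((2 * τ + 1) ^ (j - r) * (p ^ h) ^ (∑ i ∈ range (j - r), (i + 1))) * (p ^ h * E) := by
        ring
    _ ≤ ((2 * τ + 1) ^ (j - r) * (p ^ h) ^ (∑ i ∈ range (j - r), (i + 1))) *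
        (4 * (4 + 8 * τ * 2 ^ j) * ((p ^ h) ^ j * V + Δ * V')) := Nat.mul_le_mul_left _ top
    _ = _ := by ring

end Transfer

/-! ### The divisor bound -/

section Divisors

lemma natCast_add_one_le_mul_pow {a x : ℝ} (ha : 0 < a) (hx : 1 + a ≤ x) (e : ℕ) :
    (e : ℝ) + 1 ≤ (1 + 1 / a) * x ^ e := by
  have bernoulli : 1 + e * a ≤ x ^ e :=
    (one_add_mul_le_pow (by linarith) e).trans (pow_le_pow_left₀ (by linarith) hx e)
  have expand : (1 + 1 / a) * (1 + e * a) = e + 1 + (e * a + 1 / a) := by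
    field_simp
    ring
  calc (e : ℝ) + 1 ≤ (1 + 1 / a) * (1 + e * a) := by
        rw [expand]
        exact le_add_of_nonneg_right (by positivity)
    _ ≤ _ := mul_le_mul_of_nonneg_left bernoulli (by positivity)

lemma natCast_add_one_le_pow {x : ℝ} (hx : 2 ≤ x) (e : ℕ) : (e : ℝ) + 1 ≤ x ^ e :=
  calc (e : ℝ) + 1 ≤ 2 ^ e := by exact_mod_cast Nat.lt_two_pow_self
    _ ≤ _ := pow_le_pow_left₀ zero_le_two hx e

lemma prod_primeFactors_rpow_pow_factorization {n : ℕ} (hn : n ≠ 0) (δ : ℝ) :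
    ∏ p ∈ n.primeFactors, ((p : ℝ) ^ δ) ^ n.factorization p = (n : ℝ) ^ δ := by
  conv_rhs => rw [← Nat.prod_factorization_pow_eq_self hn,
    Nat.prod_factorization_eq_prod_primeFactors, Nat.cast_prod,
    ← Real.finsetProd_rpow _ _ fun _ _ => Nat.cast_nonneg _]
  refine prod_congr rfl fun p _ => ?_
  rw [Nat.cast_pow, ← Real.rpow_natCast, ← Real.rpow_natCast, ← Real.rpow_mul p.cast_nonneg,
    ← Real.rpow_mul p.cast_nonneg, mul_comm]

/-- A prime `p` with `p ^ δ ≥ 2` contributes at most `p ^ (δ e)` to the number of divisors; the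
finitely many smaller primes are absorbed by the constant. -/
lemma exists_card_divisors_le {δ : ℝ} (hδ : 0 < δ) :
    ∃ C : ℝ, 1 ≤ C ∧ ∀ n : ℕ, n ≠ 0 → (#n.divisors : ℝ) ≤ C * (n : ℝ) ^ δ := by
  obtain ⟨M, hM⟩ := exists_nat_ge ((2 : ℝ) ^ (1 / δ))
  have ha : 0 < (2 : ℝ) ^ δ - 1 := sub_pos.2 (Real.one_lt_rpow one_lt_two hδ)
  set K : ℝ := 1 + 1 / ((2 : ℝ) ^ δ - 1)
  have hK : 1 ≤ K := le_add_of_nonneg_right (by positivity)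
  refine ⟨K ^ M, one_le_pow₀ hK, fun n hn => ?_⟩
  have factor : ∀ p ∈ n.primeFactors, ((n.factorization p + 1 : ℕ) : ℝ) ≤
      (if p < M then K else 1) * ((p : ℝ) ^ δ) ^ n.factorization p := fun p hp => by
    have hp2 : (2 : ℝ) ≤ p := by exact_mod_cast (Nat.prime_of_mem_primeFactors hp).two_le
    rw [Nat.cast_add_one]
    split_ifs with h
    · refine natCast_add_one_le_mul_pow ha ?_ _
      rw [add_sub_cancel]
      exact Real.rpow_le_rpow zero_le_two hp2 hδ.le
    · rw [one_mul]
      refine natCast_add_one_le_pow ?_ _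
      have hMp : (2 : ℝ) ^ (1 / δ) ≤ p := hM.trans (by exact_mod_cast not_lt.1 h)
      rwa [one_div, Real.rpow_inv_le_iff_of_pos zero_le_two p.cast_nonneg hδ] at hMp
  have small : ∏ p ∈ n.primeFactors, (if p < M then K else 1) ≤ K ^ M := by
    rw [prod_ite, prod_const, prod_const_one, mul_one]
    refine pow_le_pow_right₀ hK ((card_le_card fun x hx => ?_).trans_eq (card_range M))
    exact mem_range.2 (mem_filter.1 hx).2
  calc (#n.divisors : ℝ) = ∏ p ∈ n.primeFactors, ((n.factorization p + 1 : ℕ) : ℝ) := by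
        rw [Nat.card_divisors hn, Nat.cast_prod]
    _ ≤ _ := prod_le_prod (fun _ _ => Nat.cast_nonneg _) factor
    _ = (∏ p ∈ n.primeFactors, if p < M then K else 1) * (n : ℝ) ^ δ := by
        rw [prod_mul_distrib, prod_primeFactors_rpow_pow_factorization hn]
    _ ≤ _ := mul_le_mul_of_nonneg_right small (by positivity)

end Divisors

/-! ### Moments of the Weyl sum -/

section WeylSum

lemma ec_add (x y : ℝ) : ec (x + y) = ec x * ec y := by
  rw [ec, ec, ec, ← Complex.exp_add, ← mul_add, Complex.ofReal_add]

lemma conj_ec (x : ℝ) : (starRingEnd ℂ) (ec x) = ec (-x) := by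
  rw [ec, ec, ← Complex.exp_conj, map_mul, Complex.conj_ofReal, map_mul, map_mul, Complex.conj_I,
    Complex.conj_ofReal, map_ofNat, mul_neg, neg_mul, Complex.ofReal_neg, mul_neg]

lemma ec_sum {ι : Type*} (T : Finset ι) (f : ι → ℝ) : ec (∑ i ∈ T, f i) = ∏ i ∈ T, ec (f i) := by
  simp only [ec, ← Complex.exp_sum, Complex.ofReal_sum, mul_sum]

lemma integral_ec_mul_intCast (m : ℤ) :
    ∫ α in (0 : ℝ)..1, ec (α * m) = if m = 0 then 1 else 0 := by
  split_ifs with h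
  · simp [h, ec]
  · have hc : (2 * Real.pi * Complex.I * m : ℂ) ≠ 0 :=
      mul_ne_zero Complex.two_pi_I_ne_zero (Int.cast_ne_zero.2 h)
    have hexp : Complex.exp (2 * Real.pi * Complex.I * m * ((1 : ℝ) : ℂ)) = 1 :=
      Complex.exp_eq_one_iff.2 ⟨m, by push_cast; ring⟩
    calc _ = ∫ α in (0 : ℝ)..1, Complex.exp ((2 * Real.pi * Complex.I * m : ℂ) * α) := by
          congr 1
          funext α
          rw [ec]
          congr 1
          push_cast
          ring
      _ = 0 := by
          rw [integral_exp_mul_complex hc, hexp, Complex.ofReal_zero, mul_zero, Complex.exp_zero,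
            sub_self, zero_div]

lemma continuous_ec_mul (c : ℝ) : Continuous fun α : ℝ => ec (α * c) := by
  unfold ec
  fun_prop

lemma integral_norm_sum_ec_sq {ι : Type*} (S : Finset ι) (f : ι → ℤ) :
    ∫ α in (0 : ℝ)..1, ‖∑ i ∈ S, ec (α * f i)‖ ^ 2 = diffCount S f 0 := by
  have expand (α : ℝ) : ((‖∑ i ∈ S, ec (α * f i)‖ ^ 2 : ℝ) : ℂ) =
      ∑ z ∈ S ×ˢ S, ec (α * ((f z.1 - f z.2 : ℤ) : ℝ)) := by
    rw [Complex.ofReal_pow, ← Complex.mul_conj', map_sum, sum_mul_sum, ← sum_product']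
    refine sum_congr rfl fun z _ => ?_
    rw [conj_ec, ← ec_add, Int.cast_sub, mul_sub, sub_eq_add_neg]
  apply Complex.ofReal_injective
  rw [← intervalIntegral.integral_ofReal]
  simp_rw [expand]
  rw [intervalIntegral.integral_finsetSum
    fun z _ => (continuous_ec_mul _).intervalIntegrable _ _]
  simp_rw [integral_ec_mul_intCast]
  rw [sum_boole, diffCount, Complex.ofReal_natCast]

lemma gk_eq_sum_Icc_int (k : ℕ) (X α : ℝ) :
    gk k X α = ∑ x ∈ Icc (1 : ℤ) ⌊X⌋₊, ec (α * (x : ℝ) ^ k) := by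
  refine sum_nbij' (fun x => (x : ℤ)) Int.toNat ?_ ?_ ?_ ?_ ?_
  all_goals intro x hx; simp only [mem_Icc, Int.toNat_natCast, Int.cast_natCast] at hx ⊢
  all_goals omega

lemma gk_pow (s k : ℕ) (X α : ℝ) :
    gk k X α ^ s = ∑ x ∈ Fintype.piFinset fun _ : Fin s => Icc (1 : ℤ) ⌊X⌋₊,
      ec (α * ((∑ i, x i ^ k : ℤ) : ℝ)) := by
  rw [gk_eq_sum_Icc_int]
  calc _ = ∏ _i : Fin s, ∑ x ∈ Icc (1 : ℤ) ⌊X⌋₊, ec (α * (x : ℝ) ^ k) := by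
        rw [prod_const, card_univ, Fintype.card_fin]
    _ = _ := by
        rw [prod_univ_sum]
        refine sum_congr rfl fun x _ => ?_
        rw [← ec_sum, ← mul_sum, Int.cast_sum]
        simp only [Int.cast_pow]

lemma Iint_eq_powEnergy (s k : ℕ) (X : ℝ) :
    Iint s k X = powEnergy {k} fun _ : Fin s => Icc (1 : ℤ) ⌊X⌋₊ := by
  have moment (α : ℝ) : ‖gk k X α‖ ^ (2 * s) = ‖gk k X α ^ s‖ ^ 2 := by
    rw [norm_pow, ← pow_mul, mul_comm]
  simp only [Iint, moment, gk_pow]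
  rw [integral_norm_sum_ec_sq, powEnergy_eq_card_powSumPairs, powSumPairs, diffCount_zero]
  simp only [mem_singleton, forall_eq]

end WeylSum

/-! ### Vinogradov systems bound the moment -/

section Coprime

variable {p n b : ℕ} {x : ℤ}

lemma powEnergy_image_mul_left_le {κ : Type*} [Fintype κ] [DecidableEq κ] (D : Finset ℕ) {c : ℤ}
    (hc : c ≠ 0) (A : κ → Finset ℤ) :
    powEnergy D (fun l => (A l).image (c * ·)) ≤ powEnergy D A := by
  rw [powEnergy_eq_card_powSumPairs, powEnergy_eq_card_powSumPairs]
  refine card_le_card_of_surjOn (fun z => (fun l => c * z.1 l, fun l => c * z.2 l)) fun z hz => ?_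
  simp only [powSumPairs, coe_filter, mem_product, Fintype.mem_piFinset, mem_image,
    Set.mem_ofPred_eq] at hz
  obtain ⟨⟨hx, hy⟩, hsol⟩ := hz
  choose u hu hux using hx
  choose v hv hvy using hy
  obtain rfl : z = (fun l => c * u l, fun l => c * v l) :=
    Prod.ext (funext fun l => (hux l).symm) (funext fun l => (hvy l).symm)
  simp only [mul_pow, ← mul_sum] at hsol
  exact ⟨(u, v), mem_filter.2 ⟨mem_product.2 ⟨Fintype.mem_piFinset.2 hu,
    Fintype.mem_piFinset.2 hv⟩, fun d hd => mul_left_cancel₀ (pow_ne_zero d hc) (hsol d hd)⟩, rfl⟩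

lemma padicValInt_le_of_mem_Icc_pow (hp : p.Prime) (hx : x ∈ Icc 1 ((p : ℤ) ^ n)) :
    padicValInt p x ≤ n := by
  rw [mem_Icc] at hx
  have hdvd : (p : ℤ) ^ padicValInt p x ≤ (p : ℤ) ^ n :=
    (Int.le_of_dvd hx.1 (padicValInt_dvd x)).trans hx.2
  exact (Nat.pow_le_pow_iff_right hp.one_lt).1 (by exact_mod_cast hdvd)

lemma filter_padicValInt_eq_subset_image (hp : p.Prime) :
    {x ∈ Icc 1 ((p : ℤ) ^ n) | padicValInt p x = b} ⊆
      (residueClass p n 0 0).image ((p : ℤ) ^ b * ·) := by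
  have := Fact.mk hp
  intro x hx
  obtain ⟨hxn, rfl⟩ := mem_filter.1 hx
  rw [mem_Icc] at hxn
  have hpow : (1 : ℤ) ≤ (p : ℤ) ^ padicValInt p x := one_le_pow₀ (by exact_mod_cast hp.one_le)
  obtain ⟨y, hy⟩ := padicValInt_dvd (p := p) x
  have hy1 : 1 ≤ y := by
    by_contra! hy0
    nlinarith
  have hpy : ¬ (p : ℤ) ∣ y := fun hpy => by
    have hdvd : (p : ℤ) ^ (padicValInt p x + 1) ∣ x := by
      rw [pow_succ]
      nth_rw 2 [hy]
      exact mul_dvd_mul_left _ hpy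
    rw [padicValInt_dvd_iff] at hdvd
    omega
  exact mem_image.2 ⟨y, mem_filter.2 ⟨mem_Icc.2 ⟨hy1, by nlinarith⟩, hpy, by simp⟩, hy.symm⟩

lemma powEnergy_Icc_le_classEnergy (hp : p.Prime) (k n : ℕ) {s : ℕ} (hs : s ≠ 0) :
    powEnergy {k} (fun _ : Fin s => Icc 1 ((p : ℤ) ^ n)) ≤
      (n + 1) ^ (2 * s) * classEnergy k p n 1 0 s := by
  have hR : ∀ x ∈ Icc 1 ((p : ℤ) ^ n), padicValInt p x ∈ range (n + 1) := fun x hx =>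
    mem_range_succ_iff.2 (padicValInt_le_of_mem_Icc_pow hp hx)
  have coprime_part : classEnergy k p n 1 0 s =
      powEnergy {k} fun _ : Fin s => residueClass p n 0 0 := by
    rw [classEnergy, pow_zero, show Ico (0 : ℤ) 1 = {0} from rfl, sum_singleton, degs, Ico_self,
      insert_empty_eq]
  calc _ ≤ #(range (n + 1)) ^ (2 * s - 1) * ∑ b ∈ range (n + 1),
        powEnergy {k} (fun _ : Fin s => {x ∈ Icc 1 ((p : ℤ) ^ n) | padicValInt p x = b}) :=
        tupleEnergy_const_le_sum_fiber _ _ hR hs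
    _ ≤ #(range (n + 1)) ^ (2 * s - 1) * ∑ _b ∈ range (n + 1), classEnergy k p n 1 0 s := by
        gcongr with b
        rw [coprime_part]
        exact (tupleEnergy_mono _ fun _ => filter_padicValInt_eq_subset_image hp).trans
          (powEnergy_image_mul_left_le _ (pow_ne_zero b (by exact_mod_cast hp.ne_zero)) _)
    _ = _ := by
        rw [sum_const, card_range, smul_eq_mul, ← mul_assoc, ← pow_succ,
          Nat.sub_add_cancel (by omega)]

end Coprime

section Vinogradov

lemma Jcount_eq_vinoCount (τ w : ℕ) {X : ℝ} (hX : 0 ≤ X) :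
    Jcount τ w X = vinoCount τ w ⌊X⌋₊ := by
  have le_floor (x : ℤ) : (x : ℝ) ≤ X ↔ x ≤ (⌊X⌋₊ : ℤ) := by
    rw [Int.natCast_floor_eq_floor hX, Int.le_floor]
  rw [Jcount, vinoCount, powEnergy_eq_card_powSumPairs, ← Set.ncard_coe_finset]
  congr 1
  ext z
  simp only [powSumPairs, Set.mem_ofPred_eq, coe_filter, mem_product, Fintype.mem_piFinset,
    mem_Icc, le_floor, sum_sub_distrib, sub_eq_zero, and_assoc, and_imp]

lemma vinoCount_le_pow (τ w Y : ℕ) : vinoCount τ w Y ≤ Y ^ (2 * τ) := by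
  rw [vinoCount, powEnergy_eq_card_powSumPairs]
  refine (card_filter_le _ _).trans ?_
  rw [card_product, Fintype.card_piFinset_const, Int.card_Icc, ← pow_add, ← two_mul,
    add_sub_cancel_right, Int.toNat_natCast]

/-- The exponent in the bounds `J_{τ,w}(X) ≪ X ^ (vinoExp τ w + δ)`, valid for every `δ > 0`. -/
noncomputable def vinoExp (τ w : ℕ) : ℝ := 2 * τ - w * (w + 1) / 2 + etaExp τ w

lemma Jcount_le_rpow (τ w : ℕ) {X : ℝ} (hX : 1 ≤ X) : (Jcount τ w X : ℝ) ≤ X ^ (2 * τ : ℝ) := by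
  rw [Jcount_eq_vinoCount τ w (zero_le_one.trans hX)]
  calc (vinoCount τ w ⌊X⌋₊ : ℝ) ≤ (⌊X⌋₊ : ℝ) ^ (2 * τ) := by
        exact_mod_cast vinoCount_le_pow τ w _
    _ ≤ X ^ (2 * τ) := pow_le_pow_left₀ (Nat.cast_nonneg _) (Nat.floor_le (by linarith)) _
    _ = X ^ (2 * τ : ℝ) := by rw [← Real.rpow_natCast, Nat.cast_mul, Nat.cast_ofNat]

lemma exists_Jcount_le (τ w : ℕ) {δ : ℝ} (hδ : 0 < δ) :
    ∃ C X₀ : ℝ, 0 < C ∧ ∀ X : ℝ, X₀ ≤ X → (Jcount τ w X : ℝ) ≤ C * X ^ (vinoExp τ w + δ) := by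
  obtain ⟨η, hη, hηlt⟩ := exists_lt_of_csInf_lt
    (s := {η : ℝ | 0 < η ∧ ∀ ε : ℝ, 0 < ε → ∃ C X₀ : ℝ, 0 < C ∧ ∀ X : ℝ, X₀ ≤ X →
      (Jcount τ w X : ℝ) ≤ C * X ^ (2 * (τ : ℝ) - (w : ℝ) * ((w : ℝ) + 1) / 2 + η + ε)})
    (b := etaExp τ w + δ / 2)
    ⟨w * (w + 1) / 2 + 1, by positivity, fun ε hε => ⟨1, 1, one_pos, fun X hX => by
      rw [one_mul]
      exact (Jcount_le_rpow τ w hX).trans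
        (Real.rpow_le_rpow_of_exponent_le hX (by linarith))⟩⟩
    (lt_add_of_pos_right (etaExp τ w) (half_pos hδ))
  obtain ⟨C, X₀, hC, h⟩ := hη.2 (δ / 2) (half_pos hδ)
  refine ⟨C, max X₀ 1, hC, fun X hX => (h X ((le_max_left _ _).trans hX)).trans ?_⟩
  refine mul_le_mul_of_nonneg_left ?_ hC.le
  refine Real.rpow_le_rpow_of_exponent_le ((le_max_right _ _).trans hX) ?_
  rw [vinoExp]
  linarith

lemma exists_vinoCount_le (τ w : ℕ) {δ : ℝ} (hδ : 0 < δ) :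
    ∃ C : ℝ, 0 < C ∧ ∀ Y : ℕ, 1 ≤ Y →
      (vinoCount τ w Y : ℝ) ≤ C * (Y : ℝ) ^ (vinoExp τ w + δ) := by
  obtain ⟨C, X₀, hC, h⟩ := exists_Jcount_le τ w hδ
  obtain ⟨M, hM⟩ := exists_nat_ge X₀
  set E := vinoExp τ w + δ
  have hnn : ∀ Y ∈ range M, 0 ≤ (vinoCount τ w Y : ℝ) / (Y : ℝ) ^ E := fun Y _ => by positivity
  have hsum := sum_nonneg hnn
  refine ⟨C + ∑ Y ∈ range M, (vinoCount τ w Y : ℝ) / (Y : ℝ) ^ E,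
    add_pos_of_pos_of_nonneg hC hsum, fun Y hY => ?_⟩
  have hpos : 0 < (Y : ℝ) ^ E := Real.rpow_pos_of_pos (by exact_mod_cast hY) _
  rcases lt_or_ge Y M with hlt | hge
  · rw [← div_le_iff₀ hpos]
    exact (single_le_sum hnn (mem_range.2 hlt)).trans (le_add_of_nonneg_left hC.le)
  · have hle := h Y (hM.trans (by exact_mod_cast hge))
    rw [Jcount_eq_vinoCount τ w (Nat.cast_nonneg _), Nat.floor_natCast] at hle
    exact hle.trans (mul_le_mul_of_nonneg_right (le_add_of_nonneg_right hsum) hpos.le)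

lemma exists_vinoCount_two_mul_le (τ w : ℕ) {δ : ℝ} (hδ : 0 < δ) :
    ∃ C : ℝ, 0 < C ∧ ∀ Y : ℕ, 1 ≤ Y →
      (vinoCount τ w (2 * Y) : ℝ) ≤ C * ((Y : ℝ) ^ vinoExp τ w * (Y : ℝ) ^ δ) := by
  obtain ⟨C, hC, h⟩ := exists_vinoCount_le τ w hδ
  refine ⟨C * 2 ^ (vinoExp τ w + δ), by positivity, fun Y hY => (h _ (by omega)).trans_eq ?_⟩
  rw [Nat.cast_mul, Nat.cast_ofNat, Real.mul_rpow zero_le_two Y.cast_nonneg,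
    Real.rpow_add (by exact_mod_cast hY : (0 : ℝ) < Y), mul_assoc]

lemma exists_two_mul_card_divisors_le (N d : ℕ) {δ : ℝ} (hδ : 0 < δ) :
    ∃ C : ℝ, 0 < C ∧ ∀ Y : ℕ, 1 ≤ Y → ∀ b ∈ Icc 1 (N * Y ^ d),
      2 * (#b.divisors : ℝ) ≤ C * (Y : ℝ) ^ δ := by
  obtain ⟨C, hC, h⟩ := exists_card_divisors_le (δ := δ / (d + 1)) (by positivity)
  have hN : (0 : ℝ) < N + 1 := by positivity
  refine ⟨2 * (C * (N + 1 : ℝ) ^ (δ / (d + 1))), by positivity, fun Y hY b hb => ?_⟩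
  rw [mem_Icc] at hb
  have hb' : (b : ℝ) ≤ (N + 1) * (Y : ℝ) ^ (d + 1) := by
    exact_mod_cast hb.2.trans (Nat.mul_le_mul N.le_succ (Nat.pow_le_pow_right hY d.le_succ))
  have key : (b : ℝ) ^ (δ / (d + 1)) ≤ (N + 1 : ℝ) ^ (δ / (d + 1)) * (Y : ℝ) ^ δ := by
    refine (Real.rpow_le_rpow b.cast_nonneg hb' (by positivity)).trans_eq ?_
    rw [Real.mul_rpow hN.le (by positivity), ← Real.rpow_natCast_mul Y.cast_nonneg,
      Nat.cast_add_one, mul_div_cancel₀ δ (by positivity)]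
  calc 2 * (#b.divisors : ℝ) ≤ 2 * (C * (b : ℝ) ^ (δ / (d + 1))) := by
        gcongr
        exact h b (by omega)
    _ ≤ 2 * (C * ((N + 1 : ℝ) ^ (δ / (d + 1)) * (Y : ℝ) ^ δ)) := by gcongr
    _ = _ := by ring

end Vinogradov

section Moment

variable {j r s : ℕ}

lemma two_mul_mul_pred_div_two (r : ℕ) : 2 * (r * (r - 1) / 2) = r * (r - 1) :=
  Nat.mul_div_cancel' (Nat.even_mul_pred_self r).two_dvd

/-- The power of `p ^ h` lost in passing from the moment of order `2 s` over `[1, p ^ (r h)]` to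
Vinogradov systems over `[1, 2 p ^ h]`: the first two summands come from the differencing
iteration, the last one from completing the system. -/
def transferExp (j r s : ℕ) : ℕ :=
  (2 * s - 1) * (r - 1) + r * (r - 1) / 2 + ∑ i ∈ range (j - r), (i + 1)

lemma iteration_exponent_eq (s h : ℕ) (hr : 1 ≤ r) (h2 : 2 ∣ r * h) :
    (2 * s - 1) * (r * h - r * h / r) + (r - 1) * (r * h / 2) =
      h * ((2 * s - 1) * (r - 1) + r * (r - 1) / 2) := by
  have half : (r - 1) * (r * h / 2) = h * (r * (r - 1) / 2) := by
    refine Nat.eq_of_mul_eq_mul_left two_pos ?_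
    calc 2 * ((r - 1) * (r * h / 2)) = (r - 1) * (2 * (r * h / 2)) := by ring
      _ = h * (r * (r - 1)) := by rw [Nat.mul_div_cancel' h2]; ring
      _ = h * (2 * (r * (r - 1) / 2)) := by rw [two_mul_mul_pred_div_two]
      _ = 2 * (h * (r * (r - 1) / 2)) := by ring
  have hsub : r * h - h = (r - 1) * h := by rw [Nat.sub_mul, one_mul]
  rw [half, Nat.mul_div_cancel_left h hr, hsub]
  ring

lemma exists_powEnergy_le_vinoCount (hr : 1 ≤ r) (hrj : r ≤ j) (hs : r * (r - 1) / 2 < s) :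
    ∃ K D : ℕ, ∀ p : ℕ, p.Prime → j + 1 < p → ∃ C : ℕ, ∀ h Δ : ℕ, 1 ≤ h → 2 ∣ r * h →
      (∀ i, 1 ≤ i → i < r → i * (i + 1) ∣ r * h) →
      (∀ b ∈ Icc 1 ((s - r * (r - 1) / 2) * (2 * p ^ h) ^ (j + 1)), 2 * #b.divisors ≤ Δ) →
      p ^ h * powEnergy {j + 1} (fun _ : Fin s => Icc 1 ((p : ℤ) ^ (r * h))) ≤
        C * D * K ^ (r * h) * (p ^ h) ^ transferExp j r s *
        ((p ^ h) ^ j * vinoCount (s - r * (r - 1) / 2) (j + 1) (2 * p ^ h) +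
          Δ * vinoCount (s - r * (r - 1) / 2) j (2 * p ^ h)) := by
  obtain ⟨K, -, iterate⟩ := exists_classEnergy_iterate (j + 1) s r hr (by omega) hs
  set τ := s - r * (r - 1) / 2
  set D := (2 * τ + 1) ^ (j - r) * (4 * (4 + 8 * τ * 2 ^ j))
  refine ⟨2 ^ (2 * s) * K, D, fun p hp hjp => ?_⟩
  obtain ⟨C, -, hC⟩ := iterate p hp hjp
  refine ⟨C, fun h Δ hh h2 hdvd hΔ => ?_⟩
  have differencing := hC (r * h) (Nat.mul_pos hr hh) h2 hdvd
  rw [iteration_exponent_eq s h hr h2, pow_mul p, Nat.mul_div_cancel_left h hr,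
    ← Nat.sub_one_mul] at differencing
  have completion := classEnergy_le_vinoCount hp hjp hr hrj h (by omega : 1 ≤ τ) hΔ
  have coprimality := powEnergy_Icc_le_classEnergy hp (j + 1) (r * h) (s := s) (by omega)
  have polylog : (r * h + 1) ^ (2 * s) ≤ (2 ^ (2 * s)) ^ (r * h) := by
    rw [← pow_mul, mul_comm (2 * s), pow_mul 2]
    exact Nat.pow_le_pow_left Nat.lt_two_pow_self _
  set L := p ^ h
  set W := L ^ j * vinoCount τ (j + 1) (2 * L) + Δ * vinoCount τ j (2 * L)
  set A := (2 * s - 1) * (r - 1) + r * (r - 1) / 2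
  set E := classEnergy (j + 1) p (r * h) r ((r - 1) * h) τ
  calc L * powEnergy {j + 1} (fun _ : Fin s => Icc 1 ((p : ℤ) ^ (r * h)))
      ≤ L * ((2 ^ (2 * s)) ^ (r * h) * (C * K ^ (r * h) * L ^ A * E)) := by
        gcongr
        exact coprimality.trans (Nat.mul_le_mul polylog differencing)
    _ = (2 ^ (2 * s)) ^ (r * h) * (C * K ^ (r * h) * L ^ A) * (L * E) := by ring
    _ ≤ (2 ^ (2 * s)) ^ (r * h) * (C * K ^ (r * h) * L ^ A) *
        (D * L ^ (∑ i ∈ range (j - r), (i + 1)) * W) := by gcongr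
    _ = _ := by rw [mul_pow, transferExp, pow_add]; ring

lemma transferExp_add_eq (hr : 1 ≤ r) (hrj : r ≤ j) (hs : r * (r - 1) / 2 < s) :
    (transferExp j r s : ℝ) + 2 * ((s - r * (r - 1) / 2 : ℕ) : ℝ) =
      r * (2 * s - (j + 1 : ℕ)) + 1 + j * (j + 1) / 2 := by
  have triangle := congrArg (Nat.cast (R := ℝ)) (two_mul_mul_pred_div_two r)
  have gauss := congrArg (Nat.cast (R := ℝ)) (two_mul_sum_range_succ (j - r))
  rw [transferExp, Nat.cast_add, Nat.cast_add, Nat.cast_mul, Nat.cast_sub hs.le,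
    Nat.cast_sub (by omega : 1 ≤ 2 * s), Nat.cast_sub hr]
  push_cast [Nat.cast_sub hr, Nat.cast_sub hrj] at triangle gauss ⊢
  linarith

lemma rpow_transferExp_mul_eq (hr : 1 ≤ r) (hrj : r ≤ j) (hs : r * (r - 1) / 2 < s) {x : ℝ}
    (hx : 0 < x) (ε : ℝ) :
    x ^ transferExp j r s * x ^ (r * ε) *
        (x ^ j * x ^ vinoExp (s - r * (r - 1) / 2) (j + 1) +
          x ^ vinoExp (s - r * (r - 1) / 2) j) =
      x * ((x ^ r) ^ (2 * (s : ℝ) - (j + 1 : ℕ) + ε + (etastar r s (j + 1) - 1 / r)) +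
        (x ^ r) ^ (2 * (s : ℝ) - (j + 1 : ℕ) + ε + etastar r s j)) := by
  have hr0 : (r : ℝ) ≠ 0 := by exact_mod_cast (by omega : r ≠ 0)
  have exponent := transferExp_add_eq hr hrj hs
  set τ := s - r * (r - 1) / 2 with hτ
  have first : (transferExp j r s : ℝ) + r * ε + (j + vinoExp τ (j + 1)) =
      1 + r * (2 * (s : ℝ) - (j + 1 : ℕ) + ε + (etastar r s (j + 1) - 1 / r)) := by
    rw [vinoExp, etastar, ← hτ]
    push_cast at exponent ⊢
    field_simp
    linarith
  have second : (transferExp j r s : ℝ) + r * ε + vinoExp τ j =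
      1 + r * (2 * (s : ℝ) - (j + 1 : ℕ) + ε + etastar r s j) := by
    rw [vinoExp, etastar, ← hτ]
    push_cast at exponent ⊢
    field_simp
    linarith
  rw [mul_add, mul_add]
  simp only [← Real.rpow_natCast x, ← Real.rpow_mul hx.le]
  simp only [← Real.rpow_add hx, first, second]
  rw [Real.rpow_add hx, Real.rpow_add hx, Real.rpow_one]

lemma exists_prime_pow_mul_le_rpow (k K r : ℕ) {δ : ℝ} (hδ : 0 < δ) :
    ∃ p : ℕ, p.Prime ∧ k < p ∧ ∀ h : ℕ, (K : ℝ) ^ (r * h) ≤ ((p : ℝ) ^ h) ^ δ := by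
  have unbounded : Tendsto (fun x : ℕ => (x : ℝ) ^ δ) atTop atTop :=
    (tendsto_rpow_atTop hδ).comp tendsto_natCast_atTop_atTop
  obtain ⟨p, hp, hkp, hK⟩ := (Nat.frequently_atTop_iff_infinite.2 Nat.infinite_setOfPred_prime
    |>.and_eventually ((eventually_gt_atTop k).and
      (unbounded.eventually_ge_atTop ((K : ℝ) ^ r)))).exists
  refine ⟨p, hp, hkp, fun h => ?_⟩
  rw [pow_mul, ← Real.rpow_natCast_mul p.cast_nonneg, mul_comm (h : ℝ),
    Real.rpow_mul_natCast p.cast_nonneg]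
  exact pow_le_pow_left₀ (by positivity) hK h

lemma exists_common_multiple_mul_succ (r : ℕ) :
    ∃ H : ℕ, 1 ≤ H ∧ 2 ∣ H ∧ ∀ i, 1 ≤ i → i < r → i * (i + 1) ∣ H := by
  refine ⟨2 * ∏ i ∈ Ico 1 r, i * (i + 1), ?_, dvd_mul_right _ _, fun i hi hir => ?_⟩
  · refine Nat.mul_pos two_pos (prod_pos fun i hi => ?_)
    have := (mem_Ico.1 hi).1
    positivity
  · exact (dvd_prod_of_mem (fun i => i * (i + 1)) (mem_Ico.2 ⟨hi, hir⟩)).mul_left 2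

/-- The prime is fixed, so large that the factor `K ^ (r h)` of the iteration is at most a small
power of `p ^ h`. -/
lemma exists_prime_mul_powEnergy_le (hr : 1 ≤ r) (hrj : r ≤ j) (hs : r * (r - 1) / 2 < s) {δ : ℝ}
    (hδ : 0 < δ) :
    ∃ p : ℕ, p.Prime ∧ ∃ C : ℝ, 0 ≤ C ∧ ∀ h : ℕ, 1 ≤ h → 2 ∣ h →
      (∀ i, 1 ≤ i → i < r → i * (i + 1) ∣ h) →
      (p : ℝ) ^ h * powEnergy {j + 1} (fun _ : Fin s => Icc 1 ((p : ℤ) ^ (r * h))) ≤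
        C * (((p : ℝ) ^ h) ^ transferExp j r s * (((p : ℝ) ^ h) ^ δ) ^ 3 *
          (((p : ℝ) ^ h) ^ j * ((p : ℝ) ^ h) ^ vinoExp (s - r * (r - 1) / 2) (j + 1) +
            ((p : ℝ) ^ h) ^ vinoExp (s - r * (r - 1) / 2) j)) := by
  obtain ⟨K, D, hKD⟩ := exists_powEnergy_le_vinoCount hr hrj hs
  set τ := s - r * (r - 1) / 2
  obtain ⟨p, hp, hjp, hK⟩ := exists_prime_pow_mul_le_rpow (j + 1) K r hδ
  obtain ⟨C, hC⟩ := hKD p hp hjp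
  obtain ⟨c₁, hc₁, vino₁⟩ := exists_vinoCount_two_mul_le τ (j + 1) hδ
  obtain ⟨c₂, hc₂, vino₂⟩ := exists_vinoCount_two_mul_le τ j hδ
  obtain ⟨c₃, hc₃, divisors⟩ := exists_two_mul_card_divisors_le (τ * 2 ^ (j + 1)) (j + 1) hδ
  refine ⟨p, hp, C * D * (c₁ + c₃ * c₂), by positivity, fun h hh h2 hdvd => ?_⟩
  have hL : 1 ≤ p ^ h := Nat.one_le_pow _ _ hp.pos
  have bound := hC h ⌊c₃ * ((p ^ h : ℕ) : ℝ) ^ δ⌋₊ hh (h2.mul_left r)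
    (fun i hi hir => (hdvd i hi hir).mul_left r) fun b hb => Nat.le_floor (by
      rw [mul_pow, ← mul_assoc] at hb
      exact_mod_cast divisors (p ^ h) hL b hb)
  have vino₁ := vino₁ (p ^ h) hL
  have vino₂ := vino₂ (p ^ h) hL
  have hK := hK h
  rw [← @Nat.cast_le ℝ] at bound
  push_cast at bound vino₁ vino₂
  have hx : (1 : ℝ) ≤ (p : ℝ) ^ h := by exact_mod_cast hL
  set x := (p : ℝ) ^ h
  have hy : 1 ≤ x ^ δ := Real.one_le_rpow hx hδ.le
  set y := x ^ δ
  set V₁ := x ^ vinoExp τ (j + 1)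
  set V₂ := x ^ vinoExp τ j
  calc _ ≤ _ := bound
    _ ≤ C * D * y * x ^ transferExp j r s *
        (x ^ j * (c₁ * (V₁ * y * y)) + c₃ * y * (c₂ * (V₂ * y))) := by
        gcongr
        · exact vino₁.trans
            (mul_le_mul_of_nonneg_left (le_mul_of_one_le_right (by positivity) hy) hc₁.le)
        · exact Nat.floor_le (by positivity)
    _ = C * D * (x ^ transferExp j r s * y ^ 3) * (c₁ * (x ^ j * V₁) + c₃ * c₂ * V₂) := by ring
    _ ≤ C * D * (x ^ transferExp j r s * y ^ 3) *
        (c₁ * (x ^ j * V₁ + V₂) + c₃ * c₂ * (x ^ j * V₁ + V₂)) := by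
        gcongr
        · exact le_add_of_nonneg_right (by positivity)
        · exact le_add_of_nonneg_left (by positivity)
    _ = _ := by ring

lemma exists_powEnergy_pow_le (hr : 1 ≤ r) (hrj : r ≤ j) (hs : r * (r - 1) / 2 < s) {ε : ℝ}
    (hε : 0 < ε) :
    ∃ Q : ℕ, 2 ≤ Q ∧ ∃ C : ℝ, 0 ≤ C ∧ ∀ m : ℕ, 1 ≤ m →
      (powEnergy {j + 1} (fun _ : Fin s => Icc (1 : ℤ) (Q ^ m : ℕ)) : ℝ) ≤
        C * (((Q : ℝ) ^ m) ^ (2 * (s : ℝ) - (j + 1 : ℕ) + ε + (etastar r s (j + 1) - 1 / r)) +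
          ((Q : ℝ) ^ m) ^ (2 * (s : ℝ) - (j + 1 : ℕ) + ε + etastar r s j)) := by
  obtain ⟨p, hp, C, hC, bound⟩ :=
    exists_prime_mul_powEnergy_le hr hrj hs (δ := r * ε / 3)
      (div_pos (mul_pos (by exact_mod_cast hr) hε) three_pos)
  obtain ⟨H, hH, hH2, hHd⟩ := exists_common_multiple_mul_succ r
  refine ⟨p ^ (r * H), hp.two_le.trans (Nat.le_pow (Nat.mul_pos hr hH)), C, hC, fun m hm => ?_⟩
  have bound := bound (H * m) (Nat.mul_pos hH hm) (hH2.mul_right m)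
    fun i hi hir => (hHd i hi hir).mul_right m
  have hx : 0 < (p : ℝ) ^ (H * m) := pow_pos (by exact_mod_cast hp.pos) _
  have hQ : ((p ^ (r * H) : ℕ) : ℝ) ^ m = ((p : ℝ) ^ (H * m)) ^ r := by
    push_cast
    ring
  have hI : (((p ^ (r * H)) ^ m : ℕ) : ℤ) = (p : ℤ) ^ (r * (H * m)) := by
    push_cast
    ring
  rw [hQ, hI]
  have hδ : (((p : ℝ) ^ (H * m)) ^ (r * ε / 3)) ^ 3 = ((p : ℝ) ^ (H * m)) ^ (r * ε) := by
    rw [← Real.rpow_mul_natCast hx.le, Nat.cast_ofNat, div_mul_cancel₀ _ three_ne_zero]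
  rw [hδ, rpow_transferExp_mul_eq hr hrj hs hx, mul_left_comm C] at bound
  exact le_of_mul_le_mul_left bound hx

end Moment

section Interpolation

lemma rpow_le_of_le_mul {x y q : ℝ} (hx : 0 < x) (hxy : x ≤ y) (hyq : y ≤ q * x) (a : ℝ) :
    y ^ a ≤ q ^ |a| * x ^ a := by
  have hyx : 1 ≤ y / x := (one_le_div hx).2 hxy
  calc y ^ a = (y / x) ^ a * x ^ a := by
        rw [← Real.mul_rpow (by positivity) hx.le, div_mul_cancel₀ _ hx.ne']
    _ ≤ (y / x) ^ |a| * x ^ a := by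
        gcongr
        exact le_abs_self a
    _ ≤ _ := by
        gcongr
        exact (div_le_iff₀ hx).2 hyq

lemma exists_le_rpow_add_rpow_of_pow {f : ℕ → ℝ} (hf : Monotone f) {Q : ℕ} (hQ : 2 ≤ Q)
    {C : ℝ} (hC : 0 ≤ C) {a b : ℝ}
    (h : ∀ m, 1 ≤ m → f (Q ^ m) ≤ C * (((Q : ℝ) ^ m) ^ a + ((Q : ℝ) ^ m) ^ b)) :
    ∃ C' : ℝ, 0 < C' ∧ ∀ X : ℝ, 1 ≤ X → f ⌊X⌋₊ ≤ C' * (X ^ a + X ^ b) := by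
  have hQ1 : (1 : ℝ) < Q := by exact_mod_cast hQ
  refine ⟨(C + 1) * (Q : ℝ) ^ (|a| + |b|), by positivity, fun X hX => ?_⟩
  have hX0 : 0 < X := one_pos.trans_le hX
  obtain ⟨m, hmX, hXm⟩ := exists_nat_pow_near hX hQ1
  have near : (Q : ℝ) ^ (m + 1) ≤ Q * X := by
    rw [pow_succ']
    gcongr
  have doubling {c : ℝ} (hc : |c| ≤ |a| + |b|) :
      ((Q : ℝ) ^ (m + 1)) ^ c ≤ (Q : ℝ) ^ (|a| + |b|) * X ^ c :=
    (rpow_le_of_le_mul hX0 hXm.le near c).trans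
      (mul_le_mul_of_nonneg_right (Real.rpow_le_rpow_of_exponent_le hQ1.le hc) (by positivity))
  calc f ⌊X⌋₊ ≤ f (Q ^ (m + 1)) := hf <| Nat.floor_le_of_le (by exact_mod_cast hXm.le)
    _ ≤ C * (((Q : ℝ) ^ (m + 1)) ^ a + ((Q : ℝ) ^ (m + 1)) ^ b) := h _ m.succ_pos
    _ ≤ (C + 1) * ((Q : ℝ) ^ (|a| + |b|) * X ^ a + (Q : ℝ) ^ (|a| + |b|) * X ^ b) := by
        gcongr
        · exact le_add_of_nonneg_right zero_le_one
        · exact doubling (le_add_of_nonneg_right (abs_nonneg b))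
        · exact doubling (le_add_of_nonneg_left (abs_nonneg a))
    _ = _ := by ring

end Interpolation

end WeylMoment

open WeylMoment in
theorem theorem8_5_general (k r s : ℕ) (hr1 : 1 ≤ r) (hrk : r < k) (hs : r * (r - 1) / 2 < s)
    (ε : ℝ) (hε : 0 < ε) :
    ∃ C : ℝ, 0 < C ∧ ∃ X₀ : ℝ, ∀ X : ℝ, X₀ ≤ X →
      Iint s k X ≤
        C * X ^ (2 * (s : ℝ) - (k : ℝ) + ε) *
          (X ^ (etastar r s k - 1 / (r : ℝ)) + X ^ (etastar r s (k - 1))) := by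
  obtain ⟨j, rfl⟩ := Nat.exists_eq_add_one.2 (Nat.zero_lt_of_lt hrk)
  obtain ⟨Q, hQ, C, hC, along_powers⟩ :=
    exists_powEnergy_pow_le hr1 (Nat.lt_succ_iff.1 hrk) hs hε
  have mono : Monotone fun N : ℕ =>
      (powEnergy {j + 1} (fun _ : Fin s => Finset.Icc (1 : ℤ) N) : ℝ) := fun M N hMN =>
    Nat.cast_le.2 (tupleEnergy_mono _ fun _ =>
      Finset.Icc_subset_Icc_right (by exact_mod_cast hMN))
  obtain ⟨C', hC', bound⟩ := exists_le_rpow_add_rpow_of_pow mono hQ hC along_powers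
  refine ⟨C', hC', 1, fun X hX => ?_⟩
  have hX0 : 0 < X := one_pos.trans_le hX
  rw [Iint_eq_powEnergy, mul_assoc, mul_add, ← Real.rpow_add hX0, ← Real.rpow_add hX0]
  exact bound X hX

/-- Theorem 8.5: for 1 ≤ r ≤ k-1 one has
I_s(X) ≤ C X^{2s-k+ε} (X^{η*_r(s,k)-1/r} + X^{η*_r(s,k-1)}). -/
theorem theorem8_5 (k r s : ℕ) (hk : 3 ≤ k) (hr1 : 1 ≤ r) (hrk : r ≤ k - 1)
    (hs : r*(r-1)/2 < s) (ε : ℝ) (hε : 0 < ε) :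
    ∃ C : ℝ, 0 < C ∧ ∃ X₀ : ℝ, ∀ X : ℝ, X₀ ≤ X →
      Iint s k X ≤
        C * X ^ (2*(s:ℝ) - (k:ℝ) + ε) *
          (X ^ (etastar r s k - 1/(r:ℝ)) + X ^ (etastar r s (k-1))) :=
  theorem8_5_general k r s hr1 (by omega) hs ε hε
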